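/- arXiv:1403.7609 — 5 statements merged into one kernel-verified Lean document; each statement's English description precedes it below -/
import Mathlib

section
/- With the setup below for a translation invariant linear equation L in s variables: for all real numbers m_1, …, m_s > 0 with m_1 + ⋯ + m_s > 2 and all u_1, …, u_s ∈ (ℤ/Pℤ)^*, there exist a constant C > 0 and a threshold N_1, depending only on F, L, c_0 and m_1 + ⋯ + m_s, such that for N ≥ N_1 one has ∑_{t ∈ ℤ/Pℤ} ∏_{i=1}^s |f̂_{A'}(u_i t)|^{m_i} ≤ C·δ^{−(m_1+⋯+m_s)}. -/
/-- The primorial of a real number `z`: the product of all primes `p ≤ z`. -/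
noncomputable def primor (z : ℝ) : ℕ :=
  ∏ p ∈ (Finset.range (⌊z⌋₊ + 1)).filter Nat.Prime, p

/-- `S_F(N, z)`: the set of natural numbers `n ≤ N` with `gcd(F(n), P(z)) = 1`. -/
noncomputable def SFset (F : ℤ → ℤ) (N : ℕ) (z : ℝ) : Finset ℕ :=
  (Finset.Icc 1 N).filter (fun n => Int.gcd (F n) (primor z) = 1)

/-- `A_b = {n : b + nM ∈ A}` (automatically contained in `[0, N]`). -/
def Abset (A : Finset ℕ) (N M b : ℕ) : Finset ℕ :=
  (Finset.range (N + 1)).filter (fun n => b + n * M ∈ A)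

/-- `f_C = d(C)⁻¹ · 1_C`, where `d(C) = |C|/P`. -/
noncomputable def fCfun {P : ℕ} (C : Finset (ZMod P)) : ZMod P → ℝ :=
  fun n => ((P : ℝ) / (C.card : ℝ)) * (if n ∈ C then 1 else 0)

/-- The Fourier transform `f̂(t) = P⁻¹ ∑_y f(y) e^{2πity/P}`. -/
noncomputable def FTP {P : ℕ} [Fact P.Prime] (f : ZMod P → ℝ) : ZMod P → ℂ :=
  fun t => (1 / (P : ℂ)) * ∑ y : ZMod P, (f y : ℂ) *
    Complex.exp (2 * Real.pi * Complex.I * (t.val : ℂ) * (y.val : ℂ) / (P : ℂ))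

/-!
Put `L = log N`. A prime `p > L` not dividing `Δ(F)` removes exactly `k` residue classes from
`A_{b₀}`, so `A_{b₀}` can be sieved by the primes between `z = L ^ E` and a small power of `N`, and
Selberg's sum for these primes is at least a constant times `J = (L / log L) ^ k`. Selberg's
majorant of the sifted set thus has mass `O(P / J)`, and since no prime below `z` is used, each of
its nontrivial Fourier coefficients is smaller than the mass by a factor of order `z ^ (-1 / 2)`,
that is, by any power of `L` once `E` is large.

Such a majorant implies a restriction estimate. By Parseval the frequencies at which the transform
of `A'` exceeds a small multiple `α` of `P / J` are few enough for the majorant to be nearly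
orthogonal on them, hence they carry an `L²` norm as small as that of the single frequency `0`;
below that level the trivial `L²` bound suffices, because `α ^ (μ - 2)` absorbs the density lost.
So the `μ`-th moment is `O((P / J) ^ μ)`, and dividing by `|A'| ^ μ` leaves `O(δ ^ (-μ))`.
The product of several dilates of the transform is reduced to one moment by the weighted AM-GM
inequality.
-/

open Finset Real
open scoped FourierTransform
open ArithmeticFunction (cardFactors cardFactors_mul cardFactors_apply_prime)

/-! ### Mertens' upper bound -/

lemma prod_primesLE_pow_div_le_pow_self (n : ℕ) : ∏ p ∈ n.primesLE, p ^ (n / p) ≤ n ^ n := by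
  refine (Nat.le_of_dvd n.factorial_pos ?_).trans n.factorial_le_pow
  refine Finset.prod_dvd_of_isRelPrime (fun p hp q hq hpq => ?_) fun p hp => ?_
  · exact Nat.coprime_iff_isRelPrime.1 <| Nat.Coprime.pow _ _ <| (Nat.coprime_primes
      (Nat.prime_of_mem_primesLE hp) (Nat.prime_of_mem_primesLE hq)).2 hpq
  · rw [(Nat.prime_of_mem_primesLE hp).pow_dvd_factorial_iff (b := max 2 (Nat.log p n + 1))
      (by simp)]
    simpa using single_le_sum (f := fun i => n / p ^ i) (fun _ _ => Nat.zero_le _)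
      (show 1 ∈ Finset.Ico 1 (max 2 (Nat.log p n + 1)) by simp)

lemma sum_primesLE_div_mul_log_le (n : ℕ) :
    ∑ p ∈ n.primesLE, ((n / p : ℕ) : ℝ) * log p ≤ n * log n := by
  have hpos : ∀ p ∈ n.primesLE, 0 < p := fun p hp => (Nat.prime_of_mem_primesLE hp).pos
  have h := log_le_log (by exact_mod_cast prod_pos fun p hp => pow_pos (hpos p hp) (n / p))
    (Nat.cast_le (α := ℝ).2 (prod_primesLE_pow_div_le_pow_self n))
  rw [Nat.cast_prod, log_prod fun p hp => by have := hpos p hp; positivity] at h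
  simpa using h

lemma sum_primesLE_log_div_le (n : ℕ) : ∑ p ∈ n.primesLE, log p / p ≤ log n + log 4 := by
  rcases n.eq_zero_or_pos with rfl | hn
  · simpa using log_nonneg (by norm_num)
  have hn' : (0 : ℝ) < n := by exact_mod_cast hn
  have hθ : ∑ p ∈ n.primesLE, log p ≤ log 4 * n :=
    Chebyshev.theta_eq_sum_primesLE_log n ▸ Chebyshev.theta_le_log4_mul_x n.cast_nonneg
  refine le_of_mul_le_mul_left ?_ hn'
  calc n * ∑ p ∈ n.primesLE, log p / p
      = ∑ p ∈ n.primesLE, (n / p : ℝ) * log p := by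
        rw [mul_sum]; exact sum_congr rfl fun p _ => by ring
    _ ≤ ∑ p ∈ n.primesLE, (((n / p : ℕ) : ℝ) * log p + log p) := by
        refine sum_le_sum fun p _ => ?_
        rw [← add_one_mul, ← Nat.floor_div_eq_div (K := ℝ)]
        exact mul_le_mul_of_nonneg_right (Nat.lt_floor_add_one _).le (log_natCast_nonneg p)
    _ ≤ n * (log n + log 4) := by
        rw [sum_add_distrib]; linarith [sum_primesLE_div_mul_log_le n]

lemma sum_range_rpow_neg_one_add_le {σ : ℝ} (hσ : 0 < σ) (n : ℕ) :
    ∑ i ∈ range n, ((i + 1 : ℕ) : ℝ) ^ (-(1 + σ)) ≤ 1 + 1 / σ := by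
  rcases n with _ | n
  · simpa using add_nonneg zero_le_one (inv_nonneg.2 hσ.le)
  have hanti : AntitoneOn (fun x : ℝ => x ^ (-(1 + σ))) (Set.Icc 1 (1 + n)) :=
    fun x hx y _ hxy => rpow_le_rpow_of_nonpos (by linarith [hx.1]) hxy (by linarith)
  have hint : ∫ x in (1 : ℝ)..1 + n, x ^ (-(1 + σ)) ≤ 1 / σ := by
    rw [integral_rpow (Or.inr ⟨by linarith, by simp [Set.uIcc_of_le, Set.mem_Icc]⟩),
      show -(1 + σ) + 1 = -σ by ring, one_rpow, ← neg_div_neg_eq, neg_neg, neg_sub]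
    gcongr
    linarith [rpow_nonneg (show (0 : ℝ) ≤ 1 + n by positivity) (-σ)]
  rw [sum_range_succ', add_comm]
  refine add_le_add (by simp) (le_trans ?_ (hanti.sum_le_integral.trans hint))
  exact (sum_congr rfl fun i _ => by push_cast; ring_nf).le

lemma prod_primesLE_inv_one_sub_rpow_le {σ : ℝ} (hσ : 0 < σ) (n : ℕ) :
    ∏ p ∈ n.primesLE, (1 - (p : ℝ) ^ (-(1 + σ)))⁻¹ ≤ 1 + 1 / σ := by
  let f : ℕ →*₀ ℝ :=
    { toFun m := (m : ℝ) ^ (-(1 + σ))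
      map_zero' := by rw [Nat.cast_zero, zero_rpow (by linarith)]
      map_one' := by simp
      map_mul' l m := by rw [Nat.cast_mul, mul_rpow l.cast_nonneg m.cast_nonneg] }
  have hf : Summable f := summable_nat_rpow.2 (by linarith)
  calc ∏ p ∈ n.primesLE, (1 - (p : ℝ) ^ (-(1 + σ)))⁻¹
      = ∑' m : Nat.factoredNumbers (range (n + 1)), f m :=
        EulerProduct.prod_filter_prime_geometric_eq_tsum_factoredNumbers (f := (f : ℕ →* ℝ)) hf _
    _ ≤ ∑' m, f m := hf.tsum_subtype_le _ _ fun m => rpow_nonneg m.cast_nonneg _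
    _ ≤ 1 + 1 / σ := hf.tsum_le_of_sum_range_le fun m => by
        rcases m with _ | m
        · simpa using add_nonneg zero_le_one (inv_nonneg.2 hσ.le)
        · rw [sum_range_succ', map_zero, add_zero]
          exact sum_range_rpow_neg_one_add_le hσ m

lemma inv_one_sub_inv_le_inv_one_sub_rpow_mul_exp {x σ : ℝ} (hx : 2 ≤ x) (hσ : 0 < σ) :
    (1 - x⁻¹)⁻¹ ≤ (1 - x ^ (-(1 + σ)))⁻¹ * exp (2 * σ * (log x / x)) := by
  have hx0 : 0 < x := by linarith
  have hinv : x⁻¹ ≤ 1 / 2 := by simpa using inv_anti₀ two_pos hx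
  have hw : 0 ≤ σ * log x := mul_nonneg hσ.le (log_nonneg (by linarith))
  have hsplit : x ^ (-(1 + σ)) = x⁻¹ * exp (-(σ * log x)) := by
    rw [neg_add, rpow_add hx0, rpow_neg_one, rpow_def_of_pos hx0]; ring_nf
  have hlow : x⁻¹ * (1 - σ * log x) ≤ x ^ (-(1 + σ)) := by
    rw [hsplit]; gcongr; exact one_sub_le_exp_neg _
  have hlt : x ^ (-(1 + σ)) < 1 := rpow_lt_one_of_one_lt_of_neg (by linarith) (by linarith)
  rw [inv_mul_eq_div, le_div_iff₀ (by linarith), inv_mul_le_iff₀ (by linarith)]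
  calc 1 - x ^ (-(1 + σ)) ≤ (1 - x⁻¹) * (2 * σ * (log x / x) + 1) := by
        have hx' : 0 ≤ σ * log x * x⁻¹ := mul_nonneg hw (inv_nonneg.2 hx0.le)
        rw [div_eq_mul_inv]
        nlinarith
    _ ≤ (1 - x⁻¹) * exp (2 * σ * (log x / x)) :=
        mul_le_mul_of_nonneg_left (add_one_le_exp _) (by linarith)

theorem prod_primesLE_inv_one_sub_inv_le {n : ℕ} (hn : 3 ≤ n) :
    ∏ p ∈ n.primesLE, (1 - (p : ℝ)⁻¹)⁻¹ ≤ 2 * exp 6 * log n := by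
  have hlog : 1 ≤ log n := by
    have : (3 : ℝ) ≤ n := by exact_mod_cast hn
    exact (le_log_iff_exp_le (by linarith)).2 (by linarith [exp_one_lt_d9])
  have hlog4 : log 4 ≤ 2 := by
    rw [show (4 : ℝ) = 2 ^ 2 by norm_num, log_pow]; norm_num; linarith [log_two_lt_d9]
  set σ := (log n)⁻¹ with hσ
  have hσpos : 0 < σ := inv_pos.2 (by linarith)
  have htwo : ∀ p ∈ n.primesLE, (2 : ℝ) ≤ p := fun p hp => by
    exact_mod_cast Nat.two_le_of_mem_primesLE hp
  calc ∏ p ∈ n.primesLE, (1 - (p : ℝ)⁻¹)⁻¹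
      ≤ ∏ p ∈ n.primesLE, ((1 - (p : ℝ) ^ (-(1 + σ)))⁻¹ * exp (2 * σ * (log p / p))) :=
        prod_le_prod
          (fun p hp => inv_nonneg.2 <| sub_nonneg.2 <|
            inv_le_one_of_one_le₀ (by linarith [htwo p hp]))
          fun p hp => inv_one_sub_inv_le_inv_one_sub_rpow_mul_exp (htwo p hp) hσpos
    _ = (∏ p ∈ n.primesLE, (1 - (p : ℝ) ^ (-(1 + σ)))⁻¹) *
          exp (2 * σ * ∑ p ∈ n.primesLE, log p / p) := by
        rw [prod_mul_distrib, ← exp_sum, mul_sum]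
    _ ≤ (1 + 1 / σ) * exp 6 := by
        gcongr
        · exact prod_primesLE_inv_one_sub_rpow_le hσpos n
        · calc 2 * σ * ∑ p ∈ n.primesLE, log p / p ≤ 2 * σ * (3 * log n) := by
                gcongr; linarith [sum_primesLE_log_div_le n]
            _ = 6 := by rw [hσ]; field_simp; norm_num
    _ ≤ 2 * exp 6 * log n := by
        rw [hσ, one_div, inv_inv]; nlinarith [exp_pos 6]

/-! ### Lower bound for the Selberg sum -/

/-- The squarefree number attached to a finite set of primes, written `d` in the sieve
literature. -/
def modulus (T : Finset Nat.Primes) : ℕ := ∏ p ∈ T, (p : ℕ)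

/-- The primes `y < p ≤ x`. -/
def primesIoc (y x : ℕ) : Finset Nat.Primes := (Ioc y x).subtype Nat.Prime

/-- The squarefree numbers `d ≤ R` composed of primes of `S`, each encoded by its set of prime
factors. -/
def sievingSets (S : Finset Nat.Primes) (R : ℕ) : Finset (Finset Nat.Primes) :=
  {T ∈ S.powerset | modulus T ≤ R}

/-- Selberg's sum `∑ h(d)` over the squarefree `d ≤ R` composed of primes of `S`, for the
multiplicative function with values `h p` at the primes. -/
def selbergSum (h : Nat.Primes → ℝ) (S : Finset Nat.Primes) (R : ℕ) : ℝ :=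
  ∑ T ∈ sievingSets S R, ∏ p ∈ T, h p

open Classical in
/-- The integers `1 ≤ n ≤ R` all of whose prime factors lie in `S`. -/
noncomputable def factoredUpTo (S : Finset Nat.Primes) (R : ℕ) : Finset ℕ :=
  {n ∈ Icc 1 R | ∀ p : Nat.Primes, (p : ℕ) ∣ n → p ∈ S}

/-- The sum of `k ^ Ω(n) / n` over the integers `n ≤ R` composed of primes of `S`, a completely
multiplicative minorant of Selberg's sum for `k` residue classes. -/
noncomputable def factoredSum (k : ℕ) (S : Finset Nat.Primes) (R : ℕ) : ℝ :=
  ∑ n ∈ factoredUpTo S R, (k : ℝ) ^ cardFactors n / n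

lemma modulus_pos (T : Finset Nat.Primes) : 0 < modulus T := prod_pos fun p _ => p.2.pos

lemma mem_primesIoc {y x : ℕ} {p : Nat.Primes} :
    p ∈ primesIoc y x ↔ y < (p : ℕ) ∧ (p : ℕ) ≤ x :=
  mem_subtype.trans mem_Ioc

lemma mem_sievingSets {S T : Finset Nat.Primes} {R : ℕ} :
    T ∈ sievingSets S R ↔ T ⊆ S ∧ modulus T ≤ R := by
  simp [sievingSets]

lemma sievingSets_empty {R : ℕ} (hR : 1 ≤ R) : sievingSets ∅ R = {∅} := by
  ext T
  rw [mem_sievingSets, subset_empty, mem_singleton, and_iff_left_iff_imp]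
  rintro rfl
  exact hR

lemma mem_factoredUpTo {S : Finset Nat.Primes} {R n : ℕ} :
    n ∈ factoredUpTo S R ↔ (1 ≤ n ∧ n ≤ R) ∧ ∀ p : Nat.Primes, (p : ℕ) ∣ n → p ∈ S := by
  simp [factoredUpTo]

lemma factoredSum_nonneg (k : ℕ) (S : Finset Nat.Primes) (R : ℕ) : 0 ≤ factoredSum k S R :=
  sum_nonneg fun _ _ => by positivity

lemma factoredSum_mono (k : ℕ) (S : Finset Nat.Primes) : Monotone (factoredSum k S) := by
  refine fun R R' hR => sum_le_sum_of_subset_of_nonneg (fun n hn => ?_) fun _ _ _ => by positivity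
  rw [mem_factoredUpTo] at hn ⊢
  exact ⟨⟨hn.1.1, hn.1.2.trans hR⟩, hn.2⟩

lemma factoredSum_zero_right (k : ℕ) (S : Finset Nat.Primes) : factoredSum k S 0 = 0 := by
  simp [factoredSum, factoredUpTo]

lemma factoredUpTo_one (S : Finset Nat.Primes) : factoredUpTo S 1 = {1} := by
  ext n
  rw [mem_factoredUpTo, mem_singleton, ← le_antisymm_iff, eq_comm, and_iff_left_iff_imp]
  rintro rfl p hp
  exact absurd hp p.2.not_dvd_one

lemma factoredUpTo_empty {R : ℕ} (hR : 1 ≤ R) : factoredUpTo ∅ R = {1} := by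
  ext n
  rw [mem_factoredUpTo, mem_singleton]
  refine ⟨fun hn => by_contra fun h => ?_, ?_⟩
  · obtain ⟨p, hp, hpn⟩ := Nat.exists_prime_and_dvd h
    exact notMem_empty _ (hn.2 ⟨p, hp⟩ hpn)
  · rintro rfl
    exact ⟨⟨le_rfl, hR⟩, fun p hp => absurd hp p.2.not_dvd_one⟩

lemma mul_mem_factoredUpTo {S : Finset Nat.Primes} {x y i j : ℕ} (hi : i ∈ factoredUpTo S x)
    (hj : j ∈ factoredUpTo S y) : i * j ∈ factoredUpTo S (x * y) := by
  rw [mem_factoredUpTo] at *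
  exact ⟨⟨Nat.mul_pos hi.1.1 hj.1.1, Nat.mul_le_mul hi.1.2 hj.1.2⟩,
    fun p hp => (p.2.dvd_mul.1 hp).elim (hi.2 p) (hj.2 p)⟩

lemma sum_filter_dvd_factoredUpTo_le (k : ℕ) (S : Finset Nat.Primes) (p : Nat.Primes) (R : ℕ) :
    ∑ n ∈ factoredUpTo S R with (p : ℕ) ∣ n, (k : ℝ) ^ cardFactors n / n
      ≤ k / p * factoredSum k S (R / p) := by
  have hsub : {n ∈ factoredUpTo S R | (p : ℕ) ∣ n}
      ⊆ (factoredUpTo S (R / p)).image fun n => (p : ℕ) * n := by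
    intro n hn
    obtain ⟨hn, m, rfl⟩ := mem_filter.1 hn
    rw [mem_factoredUpTo] at hn
    refine mem_image_of_mem _ (mem_factoredUpTo.2
      ⟨⟨Nat.pos_of_mul_pos_left hn.1.1, ?_⟩, fun q hq => hn.2 q (hq.mul_left _)⟩)
    rw [Nat.le_div_iff_mul_le p.2.pos, mul_comm]
    exact hn.1.2
  calc ∑ n ∈ factoredUpTo S R with (p : ℕ) ∣ n, (k : ℝ) ^ cardFactors n / n
      ≤ ∑ n ∈ (factoredUpTo S (R / p)).image fun n => (p : ℕ) * n,
          (k : ℝ) ^ cardFactors n / n :=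
        sum_le_sum_of_subset_of_nonneg hsub fun _ _ _ => by positivity
    _ = ∑ n ∈ factoredUpTo S (R / p), (k : ℝ) ^ cardFactors (p * n) / (p * n : ℕ) :=
        sum_image fun _ _ _ _ h => Nat.eq_of_mul_eq_mul_left p.2.pos h
    _ = k / p * factoredSum k S (R / p) := by
        rw [factoredSum, mul_sum]
        refine sum_congr rfl fun n hn => ?_
        rw [cardFactors_mul p.2.ne_zero (Nat.one_le_iff_ne_zero.1 (mem_factoredUpTo.1 hn).1.1),
          cardFactors_apply_prime p.2, pow_add, pow_one, Nat.cast_mul, div_mul_div_comm]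

lemma factoredSum_insert_le (k : ℕ) (S : Finset Nat.Primes) (p : Nat.Primes) (R : ℕ) :
    factoredSum k (insert p S) R
      ≤ factoredSum k S R + k / p * factoredSum k (insert p S) (R / p) := by
  rw [factoredSum, ← sum_filter_not_add_sum_filter _ fun n => (p : ℕ) ∣ n]
  refine add_le_add (sum_le_sum_of_subset_of_nonneg (fun n hn => ?_) fun _ _ _ => by positivity)
    (sum_filter_dvd_factoredUpTo_le k _ p R)
  obtain ⟨hn, hpn⟩ := mem_filter.1 hn
  rw [mem_factoredUpTo] at hn ⊢
  exact ⟨hn.1, fun q hq => (mem_insert.1 (hn.2 q hq)).resolve_left fun h => hpn (h ▸ hq)⟩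

section SelbergSum

variable {h : Nat.Primes → ℝ} {S : Finset Nat.Primes}

lemma prod_nonneg_of_mem_sievingSets (hh : ∀ p ∈ S, 0 ≤ h p) {R : ℕ} {T : Finset Nat.Primes}
    (hT : T ∈ sievingSets S R) : 0 ≤ ∏ p ∈ T, h p :=
  prod_nonneg fun p hp => hh p ((mem_sievingSets.1 hT).1 hp)

lemma selbergSum_nonneg (hh : ∀ p ∈ S, 0 ≤ h p) (R : ℕ) : 0 ≤ selbergSum h S R :=
  sum_nonneg fun _ => prod_nonneg_of_mem_sievingSets hh

lemma selbergSum_mono (hh : ∀ p ∈ S, 0 ≤ h p) : Monotone (selbergSum h S) :=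
  fun _ _ hR => sum_le_sum_of_subset_of_nonneg
    (fun _ hT => mem_sievingSets.2
      ((mem_sievingSets.1 hT).imp_right fun hle => hle.trans hR))
    fun _ hT _ => prod_nonneg_of_mem_sievingSets hh hT

lemma selbergSum_insert {p : Nat.Primes} (hp : p ∉ S) (R : ℕ) :
    selbergSum h (insert p S) R = selbergSum h S R + h p * selbergSum h S (R / p) := by
  simp only [selbergSum, sievingSets, sum_filter]
  rw [sum_powerset_insert hp, mul_sum]
  congr 1
  refine sum_congr rfl fun T hT => ?_
  have hpT : p ∉ T := fun hpT => hp (mem_powerset.1 hT hpT)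
  rw [modulus, prod_insert hpT, prod_insert hpT, mul_ite, mul_zero]
  simp only [modulus, Nat.le_div_iff_mul_le p.2.pos, mul_comm (p : ℕ)]

end SelbergSum

/- Both sums satisfy a recursion in `S`; inserting `p` multiplies by `k / p` on the left at every
power of `p` and by the geometric series `k / (p - k) = ∑ (k / p) ^ i` at once on the right. -/
theorem factoredSum_le_selbergSum (k : ℕ) {S : Finset Nat.Primes} (hS : ∀ p ∈ S, k < (p : ℕ))
    (R : ℕ) : factoredSum k S R ≤ selbergSum (fun p => k / (p - k)) S R := by
  induction S using Finset.induction_on generalizing R with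
  | empty =>
    rcases R.eq_zero_or_pos with rfl | hR
    · simpa [factoredSum_zero_right] using selbergSum_nonneg (by simp) 0
    · simp [factoredSum, factoredUpTo_empty hR, selbergSum, sievingSets_empty hR]
  | insert p S hpS ih =>
    have hh : ∀ q ∈ insert p S, (0 : ℝ) ≤ k / (q - k) := fun q hq =>
      div_nonneg k.cast_nonneg (sub_nonneg.2 (by exact_mod_cast (hS q hq).le))
    have hhS : ∀ q ∈ S, (0 : ℝ) ≤ k / (q - k) := fun q hq => hh q (mem_insert_of_mem hq)
    have hp : (0 : ℝ) < p := by exact_mod_cast p.2.pos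
    have hkp : (0 : ℝ) < p - k := sub_pos.2 (by exact_mod_cast hS p (mem_insert_self p S))
    induction R using Nat.strong_induction_on with
    | _ R IH =>
      rcases R.eq_zero_or_pos with rfl | hR
      · rw [factoredSum_zero_right]; exact selbergSum_nonneg hh 0
      set J := selbergSum (fun p : Nat.Primes => (k : ℝ) / (p - k)) S
      have hrec : factoredSum k (insert p S) (R / p)
          ≤ J (R / p) + k / (p - k) * J (R / p) := by
        refine (IH _ (Nat.div_lt_self hR p.2.one_lt)).trans ?_
        rw [selbergSum_insert hpS]
        gcongr
        exact selbergSum_mono hhS (Nat.div_le_self _ _)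
      calc factoredSum k (insert p S) R
          ≤ J R + k / p * (J (R / p) + k / (p - k) * J (R / p)) :=
            (factoredSum_insert_le k S p R).trans <| by
              gcongr; exact ih (fun q hq => hS q (mem_insert_of_mem hq)) R
        _ = J R + k / (p - k) * J (R / p) := by field_simp; ring
        _ = _ := (selbergSum_insert hpS R).symm

lemma sum_divisors_pow_cardFactors_le (j : ℕ) {n : ℕ} (hn : n ≠ 0) :
    ∑ d ∈ n.divisors, j ^ cardFactors d ≤ (j + 1) ^ cardFactors n := by
  induction n using Nat.recOnMul with
  | zero => exact absurd rfl hn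
  | one => simp
  | prime p hp => simp [hp.sum_divisors, cardFactors_apply_prime hp]
  | mul a b iha ihb =>
    obtain ⟨ha, hb⟩ := mul_ne_zero_iff.1 hn
    calc ∑ d ∈ (a * b).divisors, j ^ cardFactors d
        ≤ ∑ x ∈ a.divisors ×ˢ b.divisors, j ^ cardFactors (x.1 * x.2) := by
          rw [Nat.divisors_mul, Finset.mul_def]
          exact sum_image_le_of_nonneg fun _ _ => Nat.zero_le _
      _ = (∑ x ∈ a.divisors, j ^ cardFactors x) * ∑ x ∈ b.divisors, j ^ cardFactors x := by
          rw [sum_mul_sum, ← sum_product']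
          refine sum_congr rfl fun x hx => ?_
          obtain ⟨hx, hy⟩ := mem_product.1 hx
          rw [cardFactors_mul (Nat.pos_of_mem_divisors hx).ne' (Nat.pos_of_mem_divisors hy).ne',
            pow_add]
      _ ≤ (j + 1) ^ cardFactors (a * b) := by
          rw [cardFactors_mul ha hb, pow_add]
          exact Nat.mul_le_mul (iha ha) (ihb hb)

lemma factoredSum_mul_factoredSum_one_le (j : ℕ) (S : Finset Nat.Primes) (x y : ℕ) :
    factoredSum j S x * factoredSum 1 S y ≤ factoredSum (j + 1) S (x * y) := by
  have hmaps : ∀ z ∈ factoredUpTo S x ×ˢ factoredUpTo S y, z.1 * z.2 ∈ factoredUpTo S (x * y) :=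
    fun z hz => mul_mem_factoredUpTo (mem_product.1 hz).1 (mem_product.1 hz).2
  rw [factoredSum, factoredSum, sum_mul_sum, ← sum_product', ← sum_fiberwise_of_maps_to hmaps]
  refine sum_le_sum fun n hn => ?_
  have hn0 : n ≠ 0 := Nat.one_le_iff_ne_zero.1 (mem_factoredUpTo.1 hn).1.1
  calc ∑ z ∈ factoredUpTo S x ×ˢ factoredUpTo S y with z.1 * z.2 = n,
        (j : ℝ) ^ cardFactors z.1 / z.1 * ((1 : ℕ) ^ cardFactors z.2 / z.2)
      = ∑ z ∈ factoredUpTo S x ×ˢ factoredUpTo S y with z.1 * z.2 = n,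
          (j : ℝ) ^ cardFactors z.1 / n := by
        refine sum_congr rfl fun z hz => ?_
        rw [← (mem_filter.1 hz).2, Nat.cast_one, one_pow, div_mul_div_comm, mul_one, Nat.cast_mul]
    _ ≤ ∑ z ∈ n.divisorsAntidiagonal, (j : ℝ) ^ cardFactors z.1 / n :=
        sum_le_sum_of_subset_of_nonneg
          (fun z hz => Nat.mem_divisorsAntidiagonal.2 ⟨(mem_filter.1 hz).2, hn0⟩)
          fun _ _ _ => by positivity
    _ = ∑ d ∈ n.divisors, (j : ℝ) ^ cardFactors d / n :=
        Nat.sum_divisorsAntidiagonal fun d _ => (j : ℝ) ^ cardFactors d / (n : ℝ)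
    _ ≤ ((j + 1 : ℕ) : ℝ) ^ cardFactors n / n := by
        rw [← sum_div]
        gcongr
        exact_mod_cast sum_divisors_pow_cardFactors_le j hn0

lemma factoredSum_one_pow_le (k : ℕ) (S : Finset Nat.Primes) (y : ℕ) :
    factoredSum 1 S y ^ k ≤ factoredSum k S (y ^ k) := by
  induction k with
  | zero => simp [factoredSum, factoredUpTo_one]
  | succ k ih =>
    rw [pow_succ, pow_succ]
    exact (mul_le_mul_of_nonneg_right ih (factoredSum_nonneg _ _ _)).trans
      (factoredSum_mul_factoredSum_one_le k S _ y)

lemma factoredSum_one_union_le (T S : Finset Nat.Primes) (R : ℕ) :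
    factoredSum 1 (T ∪ S) R ≤ (∏ p ∈ T, (1 - (p : ℝ)⁻¹)⁻¹) * factoredSum 1 S R := by
  induction T using Finset.induction_on with
  | empty => simp
  | insert p T hpT ih =>
    have hinv : (p : ℝ)⁻¹ < 1 := inv_lt_one_of_one_lt₀ (by exact_mod_cast p.2.one_lt)
    have hrec : factoredSum 1 (insert p (T ∪ S)) R
        ≤ factoredSum 1 (T ∪ S) R + (p : ℝ)⁻¹ * factoredSum 1 (insert p (T ∪ S)) R := by
      refine (factoredSum_insert_le 1 (T ∪ S) p R).trans ?_
      rw [Nat.cast_one, one_div]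
      gcongr
      exact factoredSum_mono 1 _ (Nat.div_le_self _ _)
    rw [prod_insert hpT, insert_union, mul_assoc, ← div_eq_inv_mul, le_div_iff₀ (by linarith)]
    linarith

lemma log_le_factoredSum_one {S : Finset Nat.Primes} {y : ℕ}
    (hS : ∀ p : Nat.Primes, (p : ℕ) ≤ y → p ∈ S) : log y ≤ factoredSum 1 S y := by
  rcases y.eq_zero_or_pos with rfl | hy
  · simp [factoredSum_zero_right]
  have hall : factoredUpTo S y = Icc 1 y := by
    ext n
    rw [mem_factoredUpTo, mem_Icc, and_iff_left_iff_imp]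
    exact fun hn p hp => hS p ((Nat.le_of_dvd hn.1 hp).trans hn.2)
  calc log y ≤ log (y + 1 : ℕ) := by gcongr; exact y.le_succ
    _ ≤ harmonic y := log_add_one_le_harmonic y
    _ = factoredSum 1 S y := by simp [factoredSum, hall, harmonic_eq_sum_Icc]

lemma prod_primesIoc_inv_one_sub_inv_le {z : ℕ} (hz : 3 ≤ z) :
    ∏ p ∈ primesIoc 0 z, (1 - (p : ℝ)⁻¹)⁻¹ ≤ 2 * exp 6 * log z :=
  calc ∏ p ∈ primesIoc 0 z, (1 - (p : ℝ)⁻¹)⁻¹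
      = ∏ p ∈ z.primesLE, (1 - (p : ℝ)⁻¹)⁻¹ := by
        rw [Nat.primesLE_eq_filter_Ioc_zero]
        exact prod_subtype_eq_prod_filter fun p : ℕ => (1 - (p : ℝ)⁻¹)⁻¹
    _ ≤ 2 * exp 6 * log z := prod_primesLE_inv_one_sub_inv_le hz

theorem pow_log_div_log_le_selbergSum {k y z : ℕ} (hk : 1 ≤ k) (hkz : k ≤ z) (hz : 3 ≤ z) :
    (log y / (2 * exp 6 * log z)) ^ k
      ≤ selbergSum (fun p => k / (p - k)) (primesIoc z (y ^ k)) (y ^ k) := by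
  set S := primesIoc z (y ^ k)
  have hcover : ∀ p : Nat.Primes, (p : ℕ) ≤ y → p ∈ primesIoc 0 z ∪ S := fun p hp => by
    rw [mem_union, mem_primesIoc, mem_primesIoc]
    exact (le_or_gt (p : ℕ) z).imp (fun h => ⟨p.2.pos, h⟩)
      fun h => ⟨h, hp.trans (Nat.le_self_pow (Nat.one_le_iff_ne_zero.1 hk) y)⟩
  have hlogz : 0 < log z := log_pos (by exact_mod_cast (by lia : 1 < z))
  calc (log y / (2 * exp 6 * log z)) ^ k ≤ factoredSum 1 S y ^ k := by
        gcongr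
        rw [div_le_iff₀' (by positivity)]
        exact (log_le_factoredSum_one hcover).trans <| (factoredSum_one_union_le _ S y).trans <|
          mul_le_mul_of_nonneg_right (prod_primesIoc_inv_one_sub_inv_le hz)
            (factoredSum_nonneg _ _ _)
    _ ≤ factoredSum k S (y ^ k) := factoredSum_one_pow_le k S y
    _ ≤ _ := factoredSum_le_selbergSum k (fun p hp => hkz.trans_lt (mem_primesIoc.1 hp).1) (y ^ k)

/-! ### Exponential sums with periodic weights -/

/-- The exponential sum `∑ w(n) e(nθ)` over `0 ≤ n < Y`, as a linear function of the weight `w`. -/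
noncomputable def expSum (Y : ℕ) (θ : ℝ) : (ℕ → ℝ) →ₗ[ℝ] ℂ where
  toFun w := ∑ n ∈ range Y, (w n : ℂ) * 𝐞 (n * θ)
  map_add' v w := by simp only [Pi.add_apply, Complex.ofReal_add, add_mul, sum_add_distrib]
  map_smul' c w := by
    simp only [Pi.smul_apply, smul_eq_mul, Complex.ofReal_mul, mul_assoc, RingHom.id_apply,
      Complex.real_smul, mul_sum]

/-- No fraction with denominator `d`, other than an integer, is within `κ` of `θ`. Since `a` ranges
over all integers this is symmetric under `a ↦ -a`, and `+` saves a sign below. -/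
def FarFromFractions (θ κ : ℝ) (d : ℕ) : Prop :=
  ∀ a : ℤ, ¬ (d : ℤ) ∣ a → κ ≤ |θ + a / d|

section ExpSum

variable {Y : ℕ} {θ κ : ℝ}

lemma expSum_apply (w : ℕ → ℝ) : expSum Y θ w = ∑ n ∈ range Y, (w n : ℂ) * 𝐞 (n * θ) := rfl

lemma norm_expSum_le (w : ℕ → ℝ) : ‖expSum Y θ w‖ ≤ ∑ n ∈ range Y, |w n| := by
  rw [expSum_apply]
  exact norm_sum_le_of_le _ fun n _ => by
    rw [norm_mul, Circle.norm_coe, mul_one, Complex.norm_real, norm_eq_abs]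

lemma expSum_zero_right (w : ℕ → ℝ) : expSum Y 0 w = (∑ n ∈ range Y, w n : ℝ) := by
  simp [expSum_apply]

lemma four_mul_le_norm_fourierChar_sub_one (hκ : ∀ j : ℤ, κ ≤ |θ + j|) :
    4 * κ ≤ ‖(𝐞 θ : ℂ) - 1‖ := by
  set y := θ - round θ
  have hy : |y| ≤ 1 / 2 := abs_sub_round θ
  have hκy : κ ≤ |y| := by simpa [y, sub_eq_add_neg] using hκ (-round θ)
  have hchar : (𝐞 θ : ℂ) = 𝐞 y := by
    rw [Real.fourierChar_apply, Real.fourierChar_apply, Complex.exp_eq_exp_iff_exists_int]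
    exact ⟨round θ, by simp only [y]; push_cast; ring⟩
  have hsin : 2 / π * |π * y| ≤ |sin (π * y)| := mul_abs_le_abs_sin <| by
    rw [abs_mul, abs_of_pos pi_pos]; nlinarith [pi_pos]
  calc 4 * κ ≤ 4 * |y| := by gcongr
    _ = 2 * (2 / π * |π * y|) := by rw [abs_mul, abs_of_pos pi_pos]; field_simp; ring
    _ ≤ 2 * |sin (π * y)| := by gcongr
    _ = ‖(𝐞 θ : ℂ) - 1‖ := by
      rw [hchar, Real.fourierChar_apply, mul_comm _ Complex.I,
        Complex.norm_exp_I_mul_ofReal_sub_one, norm_mul, norm_eq_abs, norm_eq_abs, abs_two]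
      ring_nf

lemma norm_expSum_one_le (hκ : 0 < κ) (hfar : ∀ j : ℤ, κ ≤ |θ + j|) :
    ‖expSum Y θ 1‖ ≤ 1 / κ := by
  have hlow := four_mul_le_norm_fourierChar_sub_one hfar
  have hne : (𝐞 θ : ℂ) ≠ 1 := fun h => by rw [h, sub_self, norm_zero] at hlow; linarith
  have hgeom : expSum Y θ 1 = ((𝐞 θ : ℂ) ^ Y - 1) / (𝐞 θ - 1) := by
    rw [← geom_sum_eq hne, expSum_apply]
    refine sum_congr rfl fun n _ => ?_
    rw [Pi.one_apply, Complex.ofReal_one, one_mul, ← nsmul_eq_mul, AddChar.map_nsmul_eq_pow,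
      Circle.coe_pow]
  have hnum : ‖(𝐞 θ : ℂ) ^ Y - 1‖ ≤ 2 :=
    (norm_sub_le _ _).trans_eq <| by
      rw [norm_pow, Circle.norm_coe, one_pow, norm_one, one_add_one_eq_two]
  rw [hgeom, norm_div, div_le_div_iff₀ (by linarith) hκ]
  nlinarith

section Periodic

variable {d : ℕ} [NeZero d]

lemma stdAddChar_mul_natCast (j : ZMod d) (n : ℕ) :
    ZMod.stdAddChar (j * (n : ZMod d)) = (𝐞 (n * (j.val / d)) : ℂ) := by
  rw [show j * (n : ZMod d) = ((j.val * n : ℤ) : ZMod d) by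
    push_cast; rw [ZMod.natCast_zmod_val], ZMod.stdAddChar_coe, Real.fourierChar_apply]
  congr 1
  push_cast
  ring

lemma expSum_natCast (g : ZMod d → ℝ) :
    expSum Y θ (fun n => g n)
      = ∑ j : ZMod d, (d : ℂ)⁻¹ * ZMod.dft (fun x => (g x : ℂ)) j
          * expSum Y (θ + j.val / d) 1 := by
  have hinv (x : ZMod d) : (g x : ℂ)
      = (d : ℂ)⁻¹ * ∑ j, ZMod.stdAddChar (j * x) * ZMod.dft (fun x => (g x : ℂ)) j := by
    have h := ZMod.invDFT_apply (ZMod.dft fun x => (g x : ℂ)) x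
    rwa [LinearEquiv.symm_apply_apply] at h
  simp only [expSum_apply, Pi.one_apply, Complex.ofReal_one, one_mul, mul_sum]
  rw [sum_comm]
  refine sum_congr rfl fun n _ => ?_
  rw [hinv, mul_sum, sum_mul]
  refine sum_congr rfl fun j _ => ?_
  rw [stdAddChar_mul_natCast, mul_add, AddChar.map_add_eq_mul, Circle.coe_mul]
  ring

lemma norm_dft_le {g : ZMod d → ℂ} (hg : ∀ x, ‖g x‖ ≤ 1) (j : ZMod d) : ‖ZMod.dft g j‖ ≤ d := by
  rw [ZMod.dft_apply]
  calc ‖∑ x, ZMod.stdAddChar (-(x * j)) • g x‖ ≤ ∑ _x : ZMod d, (1 : ℝ) :=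
        norm_sum_le_of_le _ fun x _ => by
          rw [norm_smul, ZMod.stdAddChar_apply, Circle.norm_coe, one_mul]; exact hg x
    _ = d := by simp [ZMod.card]

lemma FarFromFractions.le_abs_add_val_div (hfar : FarFromFractions θ κ d) {j : ZMod d} (hj : j ≠ 0)
    (i : ℤ) : κ ≤ |θ + j.val / d + i| := by
  have hndvd : ¬ (d : ℤ) ∣ j.val + d * i := fun h =>
    hj <| (ZMod.val_eq_zero j).1 <| Nat.eq_zero_of_dvd_of_lt
      (Int.natCast_dvd_natCast.1 ((Int.dvd_add_left (Dvd.intro _ rfl)).1 h)) (ZMod.val_lt j)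
  have hd : (d : ℝ) ≠ 0 := NeZero.ne _
  convert hfar _ hndvd using 2
  push_cast
  field_simp
  ring

/- Expanding `g` in characters of `ZMod d`, all the nontrivial ones contribute `O(1/κ)`. -/
lemma norm_expSum_natCast_sub_le {g : ZMod d → ℝ} (hg : ∀ x, |g x| ≤ 1) (hκ : 0 < κ)
    (hfar : FarFromFractions θ κ d) :
    ‖expSum Y θ (fun n => g n) - ((∑ x, g x) / d : ℝ) * expSum Y θ 1‖ ≤ d / κ := by
  have hd : (0 : ℝ) < d := Nat.cast_pos.2 (NeZero.pos d)
  have hmain : (d : ℂ)⁻¹ * ZMod.dft (fun x => (g x : ℂ)) 0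
      * expSum Y (θ + (0 : ZMod d).val / d) 1 = ((∑ x, g x) / d : ℝ) * expSum Y θ 1 := by
    rw [ZMod.dft_apply_zero, ZMod.val_zero, Nat.cast_zero, zero_div, add_zero]
    push_cast
    ring
  rw [expSum_natCast, ← add_sum_erase _ _ (mem_univ 0), hmain, add_sub_cancel_left]
  calc ‖∑ j ∈ univ.erase (0 : ZMod d), (d : ℂ)⁻¹ * ZMod.dft (fun x => (g x : ℂ)) j
          * expSum Y (θ + j.val / d) 1‖
      ≤ ∑ _j ∈ univ.erase (0 : ZMod d), 1 / κ := norm_sum_le_of_le _ fun j hj => by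
        rw [norm_mul, norm_mul, norm_inv, Complex.norm_natCast]
        calc (d : ℝ)⁻¹ * ‖ZMod.dft (fun x => (g x : ℂ)) j‖ * ‖expSum Y (θ + j.val / d) 1‖
            ≤ (d : ℝ)⁻¹ * d * (1 / κ) := by
              gcongr
              · exact norm_dft_le (fun x => by simpa using hg x) j
              · exact norm_expSum_one_le hκ (hfar.le_abs_add_val_div (ne_of_mem_erase hj))
          _ = 1 / κ := by field_simp
    _ ≤ ∑ _j : ZMod d, 1 / κ :=
        sum_le_sum_of_subset_of_nonneg (erase_subset _ _) fun _ _ _ => by positivity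
    _ = d / κ := by simp [ZMod.card, div_eq_mul_inv]

end Periodic

lemma FarFromFractions.mono {κ' : ℝ} {d : ℕ} (hκ : κ ≤ κ') (h : FarFromFractions θ κ' d) :
    FarFromFractions θ κ d :=
  fun a ha => hκ.trans (h a ha)

lemma farFromFractions_zero_left (d : ℕ) : FarFromFractions 0 (1 / d) d := by
  intro a ha
  rw [zero_add, abs_div, Nat.abs_cast]
  have : a ≠ 0 := fun h => ha (h ▸ dvd_zero _)
  gcongr
  exact_mod_cast Int.one_le_abs this

/- Two distinct fractions of denominators at most `Q` differ by at least `Q⁻²`, so only one rational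
number can be close to `θ`. -/
lemma div_eq_div_of_abs_add_lt {Q d d' : ℕ} (hd : 0 < d) (hd' : 0 < d') (hdQ : d ≤ Q)
    (hdQ' : d' ≤ Q) {a a' : ℤ} (h : |θ + a / d| < 1 / (2 * Q ^ 2))
    (h' : |θ + a' / d'| < 1 / (2 * Q ^ 2)) : (a / d : ℚ) = a' / d' := by
  have hQ : (0 : ℝ) < Q := by exact_mod_cast hd.trans_le hdQ
  have hdist : |(a / d - a' / d' : ℝ)| < 1 / (Q : ℝ) ^ 2 := by
    calc |(a / d - a' / d' : ℝ)| = |(θ + a / d) - (θ + a' / d')| := by ring_nf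
      _ ≤ |θ + a / d| + |θ + a' / d'| := abs_sub _ _
      _ < 1 / (2 * (Q : ℝ) ^ 2) + 1 / (2 * Q ^ 2) := add_lt_add h h'
      _ = 1 / (Q : ℝ) ^ 2 := by field_simp; norm_num
  have hnum : |((a * d' - a' * d : ℤ) : ℝ)| < 1 := by
    calc |((a * d' - a' * d : ℤ) : ℝ)| = |(a / d - a' / d' : ℝ)| * (d * d') := by
          rw [← abs_of_nonneg (by positivity : (0 : ℝ) ≤ d * d'), ← abs_mul]
          push_cast
          field_simp
      _ < 1 / (Q : ℝ) ^ 2 * (d * d') := by gcongr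
      _ ≤ 1 / (Q : ℝ) ^ 2 * (Q * Q) := by gcongr
      _ = 1 := by field_simp
  rw [div_eq_div_iff (by positivity) (by positivity)]
  have : a * d' - a' * d = 0 := Int.abs_lt_one_iff.1 (by exact_mod_cast hnum)
  exact_mod_cast sub_eq_zero.1 this

theorem exists_prime_farFromFractions (θ : ℝ) (Q : ℕ) :
    ∃ p₀ : Nat.Primes, ∀ d : ℕ, 0 < d → d ≤ Q → ¬ (p₀ : ℕ) ∣ d →
      FarFromFractions θ (1 / (2 * Q ^ 2)) d := by
  by_cases! hall : ∀ d : ℕ, 0 < d → d ≤ Q → FarFromFractions θ (1 / (2 * Q ^ 2)) d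
  · exact ⟨⟨2, Nat.prime_two⟩, fun d hd hdQ _ => hall d hd hdQ⟩
  simp only [FarFromFractions, not_forall, not_le] at hall
  obtain ⟨d, hd, hdQ, a, ha, hclose⟩ := hall
  have hden : (a / d : ℚ).den ≠ 1 := fun h => ha <| by
    have hnum := Rat.coe_int_num_of_den_eq_one h
    rw [eq_div_iff (by positivity)] at hnum
    exact ⟨(a / d : ℚ).num, by rw [mul_comm]; exact_mod_cast hnum.symm⟩
  refine ⟨⟨_, Nat.minFac_prime hden⟩, fun d' hd' hdQ' hp a' _ => not_lt.1 fun hclose' => hp ?_⟩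
  have hdvd := Rat.den_dvd a' d'
  rw [Rat.divInt_eq_div, Int.cast_natCast,
    ← div_eq_div_of_abs_add_lt hd hd' hdQ hdQ' hclose hclose'] at hdvd
  exact (Nat.minFac_dvd _).trans (by exact_mod_cast hdvd)

/- By the Chinese remainder theorem the mean value of the product is the product of the means. -/
lemma norm_expSum_prod_natCast_sub_le {ι : Type*} [Fintype ι] {m : ι → ℕ} [∀ i, NeZero (m i)]
    (hm : Pairwise (Function.onFun Nat.Coprime m)) {g : ∀ i, ZMod (m i) → ℝ}
    (hg : ∀ i x, |g i x| ≤ 1) (hκ : 0 < κ) (hfar : FarFromFractions θ κ (∏ i, m i)) :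
    ‖expSum Y θ (fun n => ∏ i, g i n) - (∏ i, (∑ x, g i x) / m i : ℝ) * expSum Y θ 1‖
      ≤ (∏ i, m i : ℕ) / κ := by
  have : NeZero (∏ i, m i) := ⟨prod_ne_zero_iff.2 fun i _ => NeZero.ne (m i)⟩
  let e := ZMod.prodEquivPi m hm
  have hsum : ∑ x, ∏ i, g i (e x i) = ∏ i, ∑ x, g i x := by
    classical
    rw [prod_univ_sum, Fintype.piFinset_univ]
    exact Equiv.sum_comp e.toEquiv fun y => ∏ i, g i (y i)
  have hcast (n : ℕ) : ∏ i, g i n = ∏ i, g i (e n i) := by rw [map_natCast]; rfl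
  have hb (x : ZMod (∏ i, m i)) : |∏ i, g i (e x i)| ≤ 1 := by
    rw [abs_prod]
    exact prod_le_one (fun _ _ => abs_nonneg _) fun i _ => hg i _
  have key := norm_expSum_natCast_sub_le (Y := Y) hb hκ hfar
  simp only [hcast]
  rw [hsum, Nat.cast_prod, ← prod_div_distrib] at key
  rwa [Nat.cast_prod]

end ExpSum

/-! ### Selberg's majorant -/

instance fact_prime_coe (p : Nat.Primes) : Fact (p : ℕ).Prime := ⟨p.2⟩

lemma prime_dvd_modulus_iff {p : Nat.Primes} {T : Finset Nat.Primes} :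
    (p : ℕ) ∣ modulus T ↔ p ∈ T := by
  refine ⟨fun h => ?_, fun h => dvd_prod_of_mem _ h⟩
  obtain ⟨q, hq, hpq⟩ := (p.2.prime.dvd_finsetProd_iff _).1 h
  rwa [Nat.Primes.coe_nat_injective ((Nat.prime_dvd_prime_iff_eq p.2 q.2).1 hpq)]

lemma modulus_injective : Function.Injective modulus := fun T T' h => by
  ext p
  rw [← prime_dvd_modulus_iff, h, prime_dvd_modulus_iff]

lemma modulus_union_le (T T' : Finset Nat.Primes) :
    modulus (T ∪ T') ≤ modulus T * modulus T' := by
  rw [modulus, modulus, modulus, ← prod_union_inter]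
  exact Nat.le_mul_of_pos_right _ (modulus_pos _)

section SievingSets

variable {S : Finset Nat.Primes} {R : ℕ}

lemma modulus_union_le_sq {T T' : Finset Nat.Primes} (hT : T ∈ sievingSets S R)
    (hT' : T' ∈ sievingSets S R) : modulus (T ∪ T') ≤ R ^ 2 :=
  sq R ▸ (modulus_union_le T T').trans
    (Nat.mul_le_mul (mem_sievingSets.1 hT).2 (mem_sievingSets.1 hT').2)

lemma card_le_of_subset_sievingSets {U : Finset (Finset Nat.Primes)} (hU : U ⊆ sievingSets S R) :
    #U ≤ R :=
  calc #U ≤ #(Icc 1 R) := card_le_card_of_injOn modulus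
        (fun T hT => mem_Icc.2 ⟨modulus_pos T, (mem_sievingSets.1 (hU hT)).2⟩)
        modulus_injective.injOn
    _ = R := by rw [Nat.card_Icc, Nat.add_sub_cancel]

lemma one_le_selbergSum {h : Nat.Primes → ℝ} (hh : ∀ p ∈ S, 0 ≤ h p) (hR : 1 ≤ R) :
    1 ≤ selbergSum h S R := by
  have hmem : ∅ ∈ sievingSets S R := mem_sievingSets.2 ⟨empty_subset S, hR⟩
  exact (prod_empty (f := h)).ge.trans (single_le_sum (f := fun T => ∏ p ∈ T, h p)
    (fun T hT => prod_nonneg_of_mem_sievingSets hh hT) hmem)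

lemma sievingSets_erase (p : Nat.Primes) :
    sievingSets (S.erase p) R = {T ∈ sievingSets S R | p ∉ T} := by
  ext T
  rw [mem_filter, mem_sievingSets, mem_sievingSets, subset_erase, and_right_comm]

lemma sum_sievingSets_mem_le {h : Nat.Primes → ℝ} (hh : ∀ p ∈ S, 0 ≤ h p) {c : ℝ} (hc : 0 ≤ c)
    (hhc : ∀ p ∈ S, h p ≤ c) (p : Nat.Primes) :
    ∑ T ∈ sievingSets S R with p ∈ T, ∏ q ∈ T, h q ≤ c * selbergSum h S R := by
  by_cases hp : p ∈ S
  · have hsplit := sum_filter_not_add_sum_filter (sievingSets S R) (fun T => p ∈ T)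
      fun T => ∏ q ∈ T, h q
    have hinsert := selbergSum_insert (h := h) (notMem_erase p S) R
    have hhe : ∀ q ∈ S.erase p, 0 ≤ h q := fun q hq => hh q (mem_of_mem_erase hq)
    rw [← sievingSets_erase] at hsplit
    rw [insert_erase hp] at hinsert
    simp only [selbergSum] at hinsert ⊢
    rw [hinsert, add_right_inj] at hsplit
    rw [hsplit, hinsert]
    have h0 := selbergSum_nonneg hhe (R / p)
    have hmono := selbergSum_mono hhe (Nat.div_le_self R p)
    have := hhc p hp
    have := hh p hp
    simp only [selbergSum] at h0 hmono
    gcongr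
    nlinarith
  · rw [filter_false_of_mem fun T hT hpT => hp ((mem_sievingSets.1 hT).1 hpT), sum_empty]
    exact mul_nonneg hc (selbergSum_nonneg hh R)

end SievingSets

section LocalWeight

variable (Ω : ∀ p : Nat.Primes, Finset (ZMod p))

/-- The value `h(p) = ω(p) / (p - ω(p))` of Selberg's multiplicative function, where `ω(p)` is the
number of residue classes `Ω p` removed modulo `p`. -/
noncomputable def localDensity (p : Nat.Primes) : ℝ := #(Ω p) / (p - #(Ω p))

/-- The mean zero function on `ZMod p` that is constant off the removed classes `Ω p` and equal to
`-1` on them. -/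
noncomputable def localWeight (p : Nat.Primes) (x : ZMod p) : ℝ :=
  if x ∈ Ω p then -1 else localDensity Ω p

/-- The weight attached to the squarefree number with prime factors `T`, a product of local weights.
These weights are nearly orthogonal over an interval. -/
noncomputable def sieveWeight (T : Finset Nat.Primes) (n : ℕ) : ℝ := ∏ p ∈ T, localWeight Ω p n

variable {Ω} {p : Nat.Primes}

lemma two_mul_card_le_cast (hp : 2 * #(Ω p) ≤ p) : 2 * (#(Ω p) : ℝ) ≤ p := by exact_mod_cast hp

lemma cast_sub_card_pos (hp : 2 * #(Ω p) ≤ p) : (0 : ℝ) < p - #(Ω p) := by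
  have : (0 : ℝ) < p := by exact_mod_cast p.2.pos
  linarith [two_mul_card_le_cast hp]

lemma localDensity_nonneg (hp : 2 * #(Ω p) ≤ p) : 0 ≤ localDensity Ω p :=
  div_nonneg (Nat.cast_nonneg _) (cast_sub_card_pos hp).le

lemma localDensity_le_one (hp : 2 * #(Ω p) ≤ p) : localDensity Ω p ≤ 1 := by
  rw [localDensity, div_le_one (cast_sub_card_pos hp)]
  linarith [two_mul_card_le_cast hp]

lemma abs_localWeight_le_one (hp : 2 * #(Ω p) ≤ p) (x : ZMod p) : |localWeight Ω p x| ≤ 1 := by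
  rw [localWeight]
  split_ifs
  · simp
  · exact abs_le.2 ⟨by linarith [localDensity_nonneg hp], localDensity_le_one hp⟩

lemma sum_comp_localWeight (φ : ℝ → ℝ) :
    ∑ x, φ (localWeight Ω p x)
      = #(Ω p) * φ (-1) + (p - #(Ω p)) * φ (localDensity Ω p) := by
  have hcard : #(Ω p) ≤ p := (card_le_univ _).trans_eq (ZMod.card p)
  simp only [localWeight, apply_ite φ]
  rw [sum_ite, sum_const, sum_const, filter_univ_mem, filter_not, filter_univ_mem,
    ← compl_eq_univ_sdiff, card_compl, ZMod.card, nsmul_eq_mul, nsmul_eq_mul, Nat.cast_sub hcard]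

lemma sum_localWeight (hp : 2 * #(Ω p) ≤ p) : ∑ x, localWeight Ω p x = 0 := by
  have := (cast_sub_card_pos hp).ne'
  rw [sum_comp_localWeight fun x => x, localDensity]
  field_simp
  ring

lemma sum_localWeight_mul_self (hp : 2 * #(Ω p) ≤ p) :
    ∑ x, localWeight Ω p x * localWeight Ω p x = p * localDensity Ω p := by
  have := (cast_sub_card_pos hp).ne'
  rw [sum_comp_localWeight fun x => x * x, localDensity]
  field_simp
  ring

end LocalWeight

section SelbergMajorant

variable {Ω : ∀ p : Nat.Primes, Finset (ZMod p)} {Y : ℕ} {θ κ : ℝ}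

lemma norm_expSum_prod_primes_sub_le {T : Finset Nat.Primes} {g : ∀ p : Nat.Primes, ZMod p → ℝ}
    (hg : ∀ p ∈ T, ∀ x, |g p x| ≤ 1) (hκ : 0 < κ) (hfar : FarFromFractions θ κ (modulus T)) :
    ‖expSum Y θ (fun n => ∏ p ∈ T, g p n) - (∏ p ∈ T, (∑ x, g p x) / p : ℝ) * expSum Y θ 1‖
      ≤ modulus T / κ := by
  have hcop : Pairwise (Function.onFun Nat.Coprime fun p : T => ((p : Nat.Primes) : ℕ)) :=
    fun p q hpq => (Nat.coprime_primes p.1.2 q.1.2).2 fun h =>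
      hpq (Subtype.ext (Nat.Primes.coe_nat_injective h))
  simp only [modulus, ← prod_coe_sort T] at hfar ⊢
  exact norm_expSum_prod_natCast_sub_le hcop (g := fun p => g p) (fun p => hg p p.2) hκ hfar

lemma norm_expSum_sieveWeight_mul_sub_le {T T' : Finset Nat.Primes}
    (hΩ : ∀ p ∈ T ∪ T', 2 * #(Ω p) ≤ p) (hκ : 0 < κ)
    (hfar : FarFromFractions θ κ (modulus (T ∪ T'))) :
    ‖expSum Y θ (sieveWeight Ω T * sieveWeight Ω T')
        - (if T = T' then ∏ p ∈ T, localDensity Ω p else 0 : ℝ) * expSum Y θ 1‖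
      ≤ modulus (T ∪ T') / κ := by
  let g (p : Nat.Primes) (x : ZMod p) : ℝ :=
    (if p ∈ T then localWeight Ω p x else 1) * if p ∈ T' then localWeight Ω p x else 1
  have hg : ∀ p ∈ T ∪ T', ∀ x, |g p x| ≤ 1 := fun p hp x => by
    have := abs_localWeight_le_one (hΩ p hp) x
    rw [abs_mul]
    refine mul_le_one₀ ?_ (abs_nonneg _) ?_ <;> split_ifs <;> simp [this]
  have hprod : (fun n : ℕ => ∏ p ∈ T ∪ T', g p n) = sieveWeight Ω T * sieveWeight Ω T' := by
    ext n
    rw [prod_mul_distrib, prod_ite_mem, prod_ite_mem, union_inter_cancel_left,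
      union_inter_cancel_right]
    rfl
  have hmean : ∀ p ∈ T ∪ T', (∑ x, g p x) / p
      = if p ∈ T ∧ p ∈ T' then localDensity Ω p else 0 := fun p hp => by
    have hp0 : (p : ℝ) ≠ 0 := by exact_mod_cast p.2.ne_zero
    have h1 := sum_localWeight (hΩ p hp)
    have h2 := sum_localWeight_mul_self (hΩ p hp)
    rcases mem_union.1 hp with h | h <;> split_ifs <;> simp_all [g]
  have hall : (∀ p ∈ T ∪ T', p ∈ T ∧ p ∈ T') ↔ T = T' := by
    simp only [mem_union, Finset.ext_iff]
    exact forall_congr' fun p => by tauto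
  have key := norm_expSum_prod_primes_sub_le (Y := Y) hg hκ hfar
  rw [hprod, prod_congr rfl hmean, prod_ite_zero, if_congr hall rfl rfl] at key
  split_ifs at key ⊢ with hTT
  · rwa [← hTT, union_self] at key ⊢
  · exact key

variable {S : Finset Nat.Primes} {R : ℕ} {U : Finset (Finset Nat.Primes)}

lemma norm_expSum_sq_sum_sieveWeight_sub_le (hΩ : ∀ p ∈ S, 2 * #(Ω p) ≤ p)
    (hU : U ⊆ sievingSets S R)
    (hfar : ∀ T ∈ U, ∀ T' ∈ U, FarFromFractions θ (1 / (2 * R ^ 4)) (modulus (T ∪ T'))) :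
    ‖expSum Y θ ((∑ T ∈ U, sieveWeight Ω T) ^ 2)
        - (∑ T ∈ U, ∏ p ∈ T, localDensity Ω p : ℝ) * expSum Y θ 1‖ ≤ 2 * R ^ 8 := by
  have hpair : ∀ T ∈ U, ∀ T' ∈ U, ‖expSum Y θ (sieveWeight Ω T * sieveWeight Ω T')
      - (if T = T' then ∏ p ∈ T, localDensity Ω p else 0 : ℝ) * expSum Y θ 1‖ ≤ 2 * R ^ 6 := by
    intro T hT T' hT'
    have hmod : (modulus (T ∪ T') : ℝ) ≤ R ^ 2 := by
      exact_mod_cast modulus_union_le_sq (hU hT) (hU hT')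
    have hsub : T ∪ T' ⊆ S := union_subset (mem_sievingSets.1 (hU hT)).1
      (mem_sievingSets.1 (hU hT')).1
    have hR : (0 : ℝ) < R :=
      Nat.cast_pos.2 ((modulus_pos T).trans_le (mem_sievingSets.1 (hU hT)).2)
    calc _ ≤ (modulus (T ∪ T') : ℝ) / (1 / (2 * R ^ 4)) :=
          norm_expSum_sieveWeight_mul_sub_le (fun p hp => hΩ p (hsub hp)) (by positivity)
            (hfar T hT T' hT')
      _ ≤ R ^ 2 / (1 / (2 * R ^ 4)) := by gcongr
      _ = 2 * R ^ 6 := by field_simp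
  have hdiag : ((∑ T ∈ U, ∏ p ∈ T, localDensity Ω p : ℝ) : ℂ) * expSum Y θ 1
      = ∑ T ∈ U, ∑ T' ∈ U,
          ((if T = T' then ∏ p ∈ T, localDensity Ω p else 0 : ℝ) : ℂ) * expSum Y θ 1 := by
    simp only [← sum_mul, ← Complex.ofReal_sum]
    rw [sum_congr rfl fun T hT => (sum_ite_eq U T _).trans (if_pos hT)]
  have hcard : (#U : ℝ) ≤ R := by exact_mod_cast card_le_of_subset_sievingSets hU
  rw [sq, sum_mul_sum, map_sum, hdiag, ← sum_sub_distrib]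
  calc _ ≤ ∑ T ∈ U, ∑ T' ∈ U, (2 : ℝ) * R ^ 6 := norm_sum_le_of_le _ fun T hT => by
        rw [map_sum, ← sum_sub_distrib]
        exact norm_sum_le_of_le _ fun T' hT' => hpair T hT T' hT'
    _ = #U * (#U * (2 * (R : ℝ) ^ 6)) := by simp
    _ ≤ R * (R * (2 * (R : ℝ) ^ 6)) := by gcongr
    _ = 2 * R ^ 8 := by ring

lemma sum_sq_sum_sieveWeight_le (hΩ : ∀ p ∈ S, 2 * #(Ω p) ≤ p) (hU : U ⊆ sievingSets S R) :
    ∑ n ∈ range Y, (∑ T ∈ U, sieveWeight Ω T) n ^ 2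
      ≤ Y * ∑ T ∈ U, ∏ p ∈ T, localDensity Ω p + 2 * R ^ 8 := by
  have hfar : ∀ T ∈ U, ∀ T' ∈ U,
      FarFromFractions 0 (1 / (2 * (R : ℝ) ^ 4)) (modulus (T ∪ T')) := fun T hT T' hT' => by
    have hmod : (modulus (T ∪ T') : ℝ) ≤ R ^ 2 := by
      exact_mod_cast modulus_union_le_sq (hU hT) (hU hT')
    have hpos : (1 : ℝ) ≤ modulus (T ∪ T') := by exact_mod_cast modulus_pos (T ∪ T')
    refine (farFromFractions_zero_left _).mono (one_div_le_one_div_of_le (by linarith) ?_)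
    nlinarith
  have key := norm_expSum_sq_sum_sieveWeight_sub_le (Y := Y) hΩ hU hfar
  rw [expSum_zero_right, expSum_zero_right, ← Complex.ofReal_mul, ← Complex.ofReal_sub,
    Complex.norm_real, norm_eq_abs] at key
  have := (abs_le.1 key).2
  simp only [Pi.pow_apply, Pi.one_apply, sum_const, card_range, nsmul_eq_mul,
    mul_one] at this
  linarith

lemma norm_expSum_add_sq_le {ε : ℝ} (hε : 0 < ε) (x y : ℕ → ℝ) :
    ‖expSum Y θ ((x + y) ^ 2)‖ ≤ ‖expSum Y θ (x ^ 2)‖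
      + ε * ∑ n ∈ range Y, x n ^ 2 + (1 / ε + 1) * ∑ n ∈ range Y, y n ^ 2 := by
  have hamgm (u v : ℝ) : |2 * u * v + v ^ 2| ≤ ε * u ^ 2 + (1 / ε + 1) * v ^ 2 := by
    have hsq (w : ℝ) : 0 ≤ (ε * u + w) ^ 2 / ε := by positivity
    have hplus : (ε * u + v) ^ 2 / ε = ε * u ^ 2 + 2 * u * v + 1 / ε * v ^ 2 := by field_simp; ring
    have hminus : (ε * u + -v) ^ 2 / ε = ε * u ^ 2 - 2 * u * v + 1 / ε * v ^ 2 := by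
      field_simp; ring
    have := hsq v
    have := hsq (-v)
    exact abs_le.2 ⟨by nlinarith, by nlinarith⟩
  rw [show (x + y) ^ 2 = x ^ 2 + (2 * x * y + y ^ 2) by ring, map_add, add_assoc]
  refine (norm_add_le _ _).trans ?_
  gcongr
  refine (norm_expSum_le _).trans ?_
  rw [mul_sum, mul_sum, ← sum_add_distrib]
  exact sum_le_sum fun n _ => hamgm (x n) (y n)

/-- Selberg's majorant of the set of integers avoiding the classes `Ω p` for all `p ∈ S`, of level
`R`. -/
noncomputable def sieveMajorant (Ω : ∀ p : Nat.Primes, Finset (ZMod p)) (S : Finset Nat.Primes)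
    (R n : ℕ) : ℝ :=
  ((∑ T ∈ sievingSets S R, sieveWeight Ω T n) / selbergSum (localDensity Ω) S R) ^ 2

lemma sieveMajorant_nonneg (n : ℕ) : 0 ≤ sieveMajorant Ω S R n := sq_nonneg _

lemma sieveMajorant_eq_one (hΩ : ∀ p ∈ S, 2 * #(Ω p) ≤ p) (hR : 1 ≤ R) {n : ℕ}
    (hn : ∀ p ∈ S, (n : ZMod p) ∉ Ω p) : sieveMajorant Ω S R n = 1 := by
  have hsum : ∑ T ∈ sievingSets S R, sieveWeight Ω T n = selbergSum (localDensity Ω) S R :=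
    sum_congr rfl fun T hT => prod_congr rfl fun p hp =>
      if_neg (hn p ((mem_sievingSets.1 hT).1 hp))
  have hJ := one_le_selbergSum (fun p hp => localDensity_nonneg (hΩ p hp)) hR
  rw [sieveMajorant, hsum, div_self (by linarith), one_pow]

lemma sum_sieveMajorant_le (hΩ : ∀ p ∈ S, 2 * #(Ω p) ≤ p) (hR : 1 ≤ R)
    (hY : 2 * (R : ℝ) ^ 8 ≤ Y) :
    ∑ n ∈ range Y, sieveMajorant Ω S R n ≤ 2 * Y / selbergSum (localDensity Ω) S R := by
  have hJ := one_le_selbergSum (fun p hp => localDensity_nonneg (hΩ p hp)) hR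
  have key := sum_sq_sum_sieveWeight_le (Y := Y) hΩ Subset.rfl (R := R)
  simp only [Finset.sum_apply] at key
  simp only [sieveMajorant, div_pow]
  rw [← selbergSum] at key
  set J := selbergSum (localDensity Ω) S R
  rw [← sum_div, div_le_div_iff₀ (by positivity) (by positivity)]
  have hYJ : 2 * (R : ℝ) ^ 8 ≤ Y * J := hY.trans (le_mul_of_one_le_right Y.cast_nonneg hJ)
  calc _ ≤ (Y * J + 2 * R ^ 8) * J := by gcongr
    _ ≤ (Y * J + Y * J) * J := by gcongr
    _ = 2 * Y * J ^ 2 := by ring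

lemma norm_expSum_sq_sum_sieveWeight_le (hΩ : ∀ p ∈ S, 2 * #(Ω p) ≤ p) (hU : U ⊆ sievingSets S R)
    (hfar : ∀ T ∈ U, ∀ T' ∈ U, FarFromFractions θ (1 / (2 * R ^ 4)) (modulus (T ∪ T'))) :
    ‖expSum Y θ ((∑ T ∈ U, sieveWeight Ω T) ^ 2)‖
      ≤ selbergSum (localDensity Ω) S R * ‖expSum Y θ 1‖ + 2 * R ^ 8 := by
  have hnonneg : ∀ T ∈ sievingSets S R, 0 ≤ ∏ p ∈ T, localDensity Ω p := fun T hT =>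
    prod_nonneg_of_mem_sievingSets (fun p hp => localDensity_nonneg (hΩ p hp)) hT
  have hmass : ∑ T ∈ U, ∏ p ∈ T, localDensity Ω p ≤ selbergSum (localDensity Ω) S R :=
    sum_le_sum_of_subset_of_nonneg hU fun T hT _ => hnonneg T hT
  refine (norm_le_norm_add_norm_sub' _ _).trans
    (add_le_add ?_ (norm_expSum_sq_sum_sieveWeight_sub_le hΩ hU hfar))
  rw [norm_mul, Complex.norm_real, norm_eq_abs,
    abs_of_nonneg (sum_nonneg fun T hT => hnonneg T (hU hT))]
  gcongr

lemma norm_expSum_sq_sum_sieveWeight_notMem_le (hΩ : ∀ p ∈ S, 2 * #(Ω p) ≤ p) {p₀ : Nat.Primes}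
    (hp₀ : ∀ d : ℕ, 0 < d → d ≤ R ^ 2 → ¬ (p₀ : ℕ) ∣ d →
      FarFromFractions θ (1 / (2 * (R ^ 2 : ℕ) ^ 2)) d) :
    ‖expSum Y θ ((∑ T ∈ sievingSets S R with p₀ ∉ T, sieveWeight Ω T) ^ 2)‖
      ≤ selbergSum (localDensity Ω) S R * ‖expSum Y θ 1‖ + 2 * R ^ 8 := by
  refine norm_expSum_sq_sum_sieveWeight_le hΩ (filter_subset _ _) fun T hT T' hT' => ?_
  obtain ⟨hT, hpT⟩ := mem_filter.1 hT
  obtain ⟨hT', hpT'⟩ := mem_filter.1 hT'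
  have hdvd : ¬ (p₀ : ℕ) ∣ modulus (T ∪ T') := by
    rw [prime_dvd_modulus_iff, mem_union]
    exact not_or.2 ⟨hpT, hpT'⟩
  simpa only [Nat.cast_pow, ← pow_mul] using
    hp₀ _ (modulus_pos _) (modulus_union_le_sq hT hT') hdvd

lemma sum_sq_sum_sieveWeight_notMem_le (hΩ : ∀ p ∈ S, 2 * #(Ω p) ≤ p) (p₀ : Nat.Primes) :
    ∑ n ∈ range Y, (∑ T ∈ sievingSets S R with p₀ ∉ T, sieveWeight Ω T) n ^ 2
      ≤ Y * selbergSum (localDensity Ω) S R + 2 * R ^ 8 := by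
  refine (sum_sq_sum_sieveWeight_le hΩ (filter_subset _ _)).trans ?_
  gcongr
  exact sum_le_sum_of_subset_of_nonneg (filter_subset _ _) fun T hT _ =>
    prod_nonneg_of_mem_sievingSets (fun p hp => localDensity_nonneg (hΩ p hp)) hT

lemma sum_sq_sum_sieveWeight_mem_le (hΩ : ∀ p ∈ S, 2 * #(Ω p) ≤ p) {η : ℝ} (hη : 0 ≤ η)
    (hh : ∀ p ∈ S, localDensity Ω p ≤ η) (p₀ : Nat.Primes) :
    ∑ n ∈ range Y, (∑ T ∈ sievingSets S R with p₀ ∈ T, sieveWeight Ω T) n ^ 2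
      ≤ Y * (η * selbergSum (localDensity Ω) S R) + 2 * R ^ 8 := by
  refine (sum_sq_sum_sieveWeight_le hΩ (filter_subset _ _)).trans ?_
  gcongr
  exact sum_sievingSets_mem_le (fun p hp => localDensity_nonneg (hΩ p hp)) hη hh p₀

lemma sieveMajorant_eq_smul_sq (p₀ : Nat.Primes) :
    sieveMajorant Ω S R = (selbergSum (localDensity Ω) S R ^ 2)⁻¹ •
      (∑ T ∈ sievingSets S R with p₀ ∉ T, sieveWeight Ω T +
        ∑ T ∈ sievingSets S R with p₀ ∈ T, sieveWeight Ω T) ^ 2 := by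
  ext n
  rw [add_comm (∑ T ∈ sievingSets S R with p₀ ∉ T, _), sum_filter_add_sum_filter_not]
  simp only [sieveMajorant, Pi.smul_apply, Pi.pow_apply, Finset.sum_apply, smul_eq_mul,
    div_eq_inv_mul, mul_pow, inv_pow]

/- Only one rational can be close to `θ`; if `p₀` divides its denominator, the moduli not divisible
by `p₀` see `θ` as generic, and the others carry at most a proportion `ε²` of the mass. -/
theorem norm_expSum_sieveMajorant_le (hΩ : ∀ p ∈ S, 2 * #(Ω p) ≤ p) (hR : 1 ≤ R) {ε : ℝ}
    (hε : 0 < ε) (hε1 : ε ≤ 1) (hh : ∀ p ∈ S, localDensity Ω p ≤ ε ^ 2)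
    (hY : 2 * (R : ℝ) ^ 8 ≤ Y * ε ^ 2) :
    ‖expSum Y θ (sieveMajorant Ω S R)‖
      ≤ (‖expSum Y θ 1‖ + 7 * Y * ε) / selbergSum (localDensity Ω) S R := by
  have hJ := one_le_selbergSum (fun p hp => localDensity_nonneg (hΩ p hp)) hR
  obtain ⟨p₀, hp₀⟩ := exists_prime_farFromFractions θ (R ^ 2)
  have hgeneric := norm_expSum_sq_sum_sieveWeight_notMem_le (Y := Y) hΩ hp₀
  have hx := sum_sq_sum_sieveWeight_notMem_le (Y := Y) (R := R) hΩ p₀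
  have hy := sum_sq_sum_sieveWeight_mem_le (Y := Y) (R := R) hΩ (sq_nonneg ε) hh p₀
  rw [sieveMajorant_eq_smul_sq p₀]
  set x : ℕ → ℝ := ∑ T ∈ sievingSets S R with p₀ ∉ T, sieveWeight Ω T
  set y : ℕ → ℝ := ∑ T ∈ sievingSets S R with p₀ ∈ T, sieveWeight Ω T
  set J := selbergSum (localDensity Ω) S R
  have hR8 : 2 * (R : ℝ) ^ 8 ≤ Y * ε ^ 2 * J := hY.trans (le_mul_of_one_le_right (by positivity) hJ)
  rw [map_smul, norm_smul, norm_inv, norm_pow, norm_eq_abs, abs_of_pos (by linarith)]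
  calc (J ^ 2)⁻¹ * ‖expSum Y θ ((x + y) ^ 2)‖
      ≤ (J ^ 2)⁻¹ * (‖expSum Y θ (x ^ 2)‖ + ε * ∑ n ∈ range Y, x n ^ 2
          + (1 / ε + 1) * ∑ n ∈ range Y, y n ^ 2) := by
        gcongr
        exact norm_expSum_add_sq_le hε x y
    _ ≤ (J ^ 2)⁻¹ * ((J * ‖expSum Y θ 1‖ + Y * ε ^ 2) + ε * (Y * J + Y * ε ^ 2)
          + (1 / ε + 1) * (Y * (ε ^ 2 * J) + Y * ε ^ 2 * J)) := by
        gcongr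
        · exact hgeneric.trans (by gcongr)
        · exact hx.trans (by gcongr)
        · exact hy.trans (by gcongr)
    _ = (J ^ 2)⁻¹ * (J * ‖expSum Y θ 1‖ + Y * ε * (ε + ε ^ 2 + 3 * J + 2 * ε * J)) := by
        field_simp; ring
    _ ≤ (J ^ 2)⁻¹ * (J * ‖expSum Y θ 1‖ + Y * ε * (7 * J)) := by gcongr; nlinarith
    _ = (‖expSum Y θ 1‖ + 7 * Y * ε) / J := by field_simp

end SelbergMajorant

/-! ### Restriction on finite abelian groups -/

section Restriction

variable {G : Type*} [AddCommGroup G] [Fintype G]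

lemma sum_norm_sum_addChar_sq (A : Finset G) :
    ∑ ψ : AddChar G ℂ, ‖∑ x ∈ A, ψ x‖ ^ 2 = Fintype.card G * #A := by
  classical
  have hexpand (ψ : AddChar G ℂ) :
      ((‖∑ x ∈ A, ψ x‖ ^ 2 : ℝ) : ℂ) = ∑ x ∈ A, ∑ y ∈ A, ψ (x - y) := by
    rw [Complex.ofReal_pow, ← Complex.mul_conj', map_sum, sum_mul_sum]
    simp only [← AddChar.map_neg_eq_conj, ← AddChar.map_add_eq_mul, sub_eq_add_neg]
  have hinner : ∀ x ∈ A, ∑ y ∈ A, ∑ ψ : AddChar G ℂ, ψ (x - y) = Fintype.card G := fun x hx => by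
    simp only [AddChar.sum_apply_eq_ite, sub_eq_zero, sum_ite_eq, if_pos hx]
  have key : ((∑ ψ : AddChar G ℂ, ‖∑ x ∈ A, ψ x‖ ^ 2 : ℝ) : ℂ) = #A * Fintype.card G := by
    simp only [Complex.ofReal_sum, hexpand]
    rw [sum_comm, ← nsmul_eq_mul, ← sum_const]
    refine sum_congr rfl fun x hx => ?_
    rw [sum_comm, hinner x hx]
  rw [mul_comm]
  exact_mod_cast key

variable {A : Finset G} {w : G → ℝ} {E V : ℝ}

lemma sum_mul_norm_sum_addChar_sq (R : Finset (AddChar G ℂ)) (c : AddChar G ℂ → ℂ) :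
    ((∑ x, w x * ‖∑ ψ ∈ R, c ψ * ψ x‖ ^ 2 : ℝ) : ℂ)
      = ∑ ψ ∈ R, ∑ χ ∈ R, c ψ * starRingEnd ℂ (c χ) * ∑ x, w x * (ψ - χ) x := by
  have hexpand (x : G) : ((w x * ‖∑ ψ ∈ R, c ψ * ψ x‖ ^ 2 : ℝ) : ℂ)
      = ∑ ψ ∈ R, ∑ χ ∈ R, c ψ * starRingEnd ℂ (c χ) * (w x * (ψ - χ) x) := by
    rw [Complex.ofReal_mul, Complex.ofReal_pow, ← Complex.mul_conj', map_sum, sum_mul_sum, mul_sum]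
    refine sum_congr rfl fun ψ _ => ?_
    rw [mul_sum]
    refine sum_congr rfl fun χ _ => ?_
    rw [map_mul, ← AddChar.map_neg_eq_conj, AddChar.sub_apply]
    ring
  simp only [Complex.ofReal_sum, hexpand]
  rw [sum_comm]
  refine sum_congr rfl fun ψ _ => ?_
  rw [sum_comm]
  simp only [mul_sum]

lemma sum_mul_norm_sum_addChar_sq_le (hw : ∀ x, 0 ≤ w x) (hE : 0 ≤ E)
    (hwE : ∀ ψ : AddChar G ℂ, ψ ≠ 0 → ‖∑ x, w x * ψ x‖ ≤ E)
    (R : Finset (AddChar G ℂ)) (c : AddChar G ℂ → ℂ) :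
    ∑ x, w x * ‖∑ ψ ∈ R, c ψ * ψ x‖ ^ 2 ≤ (∑ x, w x + E * #R) * ∑ ψ ∈ R, ‖c ψ‖ ^ 2 := by
  classical
  have hkernel (ψ χ : AddChar G ℂ) :
      ‖∑ x, w x * (ψ - χ) x‖ ≤ (if ψ = χ then ∑ x, w x else 0) + E := by
    split_ifs with h
    · simp only [h, sub_self, AddChar.zero_apply, mul_one, ← Complex.ofReal_sum, Complex.norm_real,
        norm_eq_abs, abs_of_nonneg (sum_nonneg fun x _ => hw x)]
      linarith
    · rw [zero_add]
      exact hwE _ (sub_ne_zero.2 h)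
  have hcs : (∑ ψ ∈ R, ‖c ψ‖) ^ 2 ≤ #R * ∑ ψ ∈ R, ‖c ψ‖ ^ 2 := sq_sum_le_card_mul_sum_sq
  calc _ ≤ ‖((∑ x, w x * ‖∑ ψ ∈ R, c ψ * ψ x‖ ^ 2 : ℝ) : ℂ)‖ := by
        rw [Complex.norm_real]
        exact le_abs_self _
    _ ≤ ∑ ψ ∈ R, ∑ χ ∈ R, ‖c ψ‖ * ‖c χ‖ * ((if ψ = χ then ∑ x, w x else 0) + E) := by
        rw [sum_mul_norm_sum_addChar_sq]
        refine norm_sum_le_of_le _ fun ψ _ => norm_sum_le_of_le _ fun χ _ => ?_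
        rw [norm_mul, norm_mul, RCLike.norm_conj]
        gcongr
        exact hkernel ψ χ
    _ = (∑ x, w x) * ∑ ψ ∈ R, ‖c ψ‖ ^ 2 + E * (∑ ψ ∈ R, ‖c ψ‖) ^ 2 := by
        simp only [mul_add, sum_add_distrib, mul_ite, mul_zero, sum_ite_eq, sum_ite_mem, inter_self,
          ← sum_mul, ← mul_sum, ← sq]
        ring
    _ ≤ (∑ x, w x) * ∑ ψ ∈ R, ‖c ψ‖ ^ 2 + E * (#R * ∑ ψ ∈ R, ‖c ψ‖ ^ 2) := by gcongr
    _ = _ := by ring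

lemma sum_norm_sum_addChar_sq_le (hw : ∀ x, 0 ≤ w x) (hwA : ∀ x ∈ A, 1 ≤ w x) (hE : 0 ≤ E)
    (hwE : ∀ ψ : AddChar G ℂ, ψ ≠ 0 → ‖∑ x, w x * ψ x‖ ≤ E) (R : Finset (AddChar G ℂ)) :
    ∑ ψ ∈ R, ‖∑ x ∈ A, ψ x‖ ^ 2 ≤ #A * (∑ x, w x + E * #R) := by
  set Q := ∑ ψ ∈ R, ‖∑ x ∈ A, ψ x‖ ^ 2
  set c : AddChar G ℂ → ℂ := fun ψ => starRingEnd ℂ (∑ x ∈ A, ψ x)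
  have hQ : (Q : ℂ) = ∑ x ∈ A, ∑ ψ ∈ R, c ψ * ψ x := by
    rw [sum_comm]
    simp only [Q, c, ← mul_sum, Complex.ofReal_sum, Complex.ofReal_pow, Complex.conj_mul']
  have hcs : Q ^ 2 ≤ #A * ∑ x ∈ A, ‖∑ ψ ∈ R, c ψ * ψ x‖ ^ 2 := by
    refine le_trans ?_ sq_sum_le_card_mul_sum_sq
    rw [← sq_abs, ← norm_eq_abs, ← Complex.norm_real, hQ]
    gcongr
    exact norm_sum_le _ _
  have hmaj : ∑ x ∈ A, ‖∑ ψ ∈ R, c ψ * ψ x‖ ^ 2 ≤ ∑ x, w x * ‖∑ ψ ∈ R, c ψ * ψ x‖ ^ 2 := by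
    refine (sum_le_sum fun x hx => ?_).trans
      (sum_le_univ_sum_of_nonneg fun x => mul_nonneg (hw x) (sq_nonneg _))
    exact le_mul_of_one_le_left (sq_nonneg _) (hwA x hx)
  have hdual := sum_mul_norm_sum_addChar_sq_le hw hE hwE R c
  simp only [c, RCLike.norm_conj] at hdual
  have hQ0 : 0 ≤ Q := sum_nonneg fun ψ _ => sq_nonneg _
  have hwsum : 0 ≤ ∑ x, w x := sum_nonneg fun x _ => hw x
  have hsq : Q * Q ≤ #A * (∑ x, w x + E * #R) * Q := by
    rw [← sq, mul_assoc]
    exact hcs.trans (by gcongr; exact hmaj.trans hdual)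
  rcases hQ0.eq_or_lt with h0 | hpos
  · rw [← h0]
    positivity
  · exact le_of_mul_le_mul_right hsq hpos

lemma rpow_eq_rpow_sub_two_mul_sq {x m : ℝ} (hx : 0 ≤ x) (hm : 2 < m) :
    x ^ m = x ^ (m - 2) * x ^ 2 := by
  rw [← rpow_natCast x 2, ← rpow_add' hx (by push_cast; linarith)]
  norm_num

lemma sum_norm_rpow_le {ι : Type*} {I : Finset ι} {z : ι → ℂ} {B m : ℝ} (hm : 2 < m)
    (hz : ∀ i ∈ I, ‖z i‖ ≤ B) : ∑ i ∈ I, ‖z i‖ ^ m ≤ B ^ (m - 2) * ∑ i ∈ I, ‖z i‖ ^ 2 := by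
  rw [mul_sum]
  refine sum_le_sum fun i hi => ?_
  rw [rpow_eq_rpow_sub_two_mul_sq (norm_nonneg _) hm]
  gcongr
  exact hz i hi

lemma sum_norm_sum_addChar_sq_le_card_mul (I : Finset (AddChar G ℂ)) :
    ∑ ψ ∈ I, ‖∑ x ∈ A, ψ x‖ ^ 2 ≤ Fintype.card G * #A :=
  (sum_le_univ_sum_of_nonneg fun _ => sq_nonneg _).trans_eq (sum_norm_sum_addChar_sq A)

variable {m α : ℝ}

lemma mul_card_filter_le_norm_sum_addChar_le (hA : (#A : ℝ) ≤ 2 * V) (hV : 0 < V) (hE : 0 ≤ E)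
    (hα : 0 < α) (hEα : E * (2 * Fintype.card G) ≤ α ^ 2 * V ^ 2) :
    E * #{ψ : AddChar G ℂ | α * V ≤ ‖∑ x ∈ A, ψ x‖} ≤ V := by
  set R : Finset (AddChar G ℂ) := {ψ | α * V ≤ ‖∑ x ∈ A, ψ x‖}
  have hmarkov : (#R : ℝ) * (α * V) ^ 2 ≤ Fintype.card G * (2 * V) := by
    rw [← nsmul_eq_mul, ← sum_const]
    refine (sum_le_sum fun ψ hψ => ?_).trans
      ((sum_norm_sum_addChar_sq_le_card_mul (A := A) R).trans (by gcongr))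
    gcongr
    exact (mem_filter.1 hψ).2
  refine le_of_mul_le_mul_right (a := (α * V) ^ 2) ?_ (by positivity)
  calc E * #R * (α * V) ^ 2 = E * (#R * (α * V) ^ 2) := mul_assoc _ _ _
    _ ≤ E * (Fintype.card G * (2 * V)) := by gcongr
    _ = E * (2 * Fintype.card G) * V := by ring
    _ ≤ α ^ 2 * V ^ 2 * V := by gcongr
    _ = V * (α * V) ^ 2 := by ring

lemma sum_norm_sum_addChar_rpow_filter_le (hA : (#A : ℝ) ≤ 2 * V) (hV : 0 < V) (hm : 2 < m)
    (hα : 0 < α) (hαV : α ^ (m - 2) * Fintype.card G ≤ V) :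
    ∑ ψ : AddChar G ℂ with ¬ α * V ≤ ‖∑ x ∈ A, ψ x‖, ‖∑ x ∈ A, ψ x‖ ^ m ≤ 2 * V ^ m :=
  calc _ ≤ (α * V) ^ (m - 2) * (Fintype.card G * (2 * V)) :=
        (sum_norm_rpow_le hm fun ψ hψ => (not_le.1 (mem_filter.1 hψ).2).le).trans
          (by gcongr; exact (sum_norm_sum_addChar_sq_le_card_mul _).trans (by gcongr))
    _ = α ^ (m - 2) * Fintype.card G * (V ^ (m - 2) * (2 * V)) := by
        rw [mul_rpow hα.le hV.le]
        ring
    _ ≤ V * (V ^ (m - 2) * (2 * V)) := by gcongr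
    _ = 2 * V ^ m := by
        rw [rpow_eq_rpow_sub_two_mul_sq hV.le hm]
        ring

/- The frequencies at level `α * V` are few by Parseval, so the majorant is nearly orthogonal on
them; Parseval alone handles the remaining frequencies. -/
theorem sum_norm_sum_addChar_rpow_le (hw : ∀ x, 0 ≤ w x) (hwA : ∀ x ∈ A, 1 ≤ w x) (hV : 0 < V)
    (hwV : ∑ x, w x ≤ 2 * V) (hE : 0 ≤ E)
    (hwE : ∀ ψ : AddChar G ℂ, ψ ≠ 0 → ‖∑ x, w x * ψ x‖ ≤ E) (hm : 2 < m) (hα : 0 < α)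
    (hEα : E * (2 * Fintype.card G) ≤ α ^ 2 * V ^ 2) (hαV : α ^ (m - 2) * Fintype.card G ≤ V) :
    ∑ ψ : AddChar G ℂ, ‖∑ x ∈ A, ψ x‖ ^ m ≤ (6 * 2 ^ (m - 2) + 2) * V ^ m := by
  have hA : (#A : ℝ) ≤ 2 * V :=
    calc (#A : ℝ) ≤ ∑ x ∈ A, w x := by simpa using card_nsmul_le_sum A w 1 hwA
      _ ≤ ∑ x, w x := sum_le_univ_sum_of_nonneg hw
      _ ≤ 2 * V := hwV
  have hcard := mul_card_filter_le_norm_sum_addChar_le hA hV hE hα hEα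
  have hsmall := sum_norm_sum_addChar_rpow_filter_le hA hV hm hα hαV
  rw [← sum_filter_add_sum_filter_not univ fun ψ => α * V ≤ ‖∑ x ∈ A, ψ x‖, add_mul]
  set R : Finset (AddChar G ℂ) := {ψ | α * V ≤ ‖∑ x ∈ A, ψ x‖}
  refine add_le_add ?_ hsmall
  calc _ ≤ (2 * V) ^ (m - 2) * ∑ ψ ∈ R, ‖∑ x ∈ A, ψ x‖ ^ 2 := sum_norm_rpow_le hm fun ψ _ =>
        (norm_sum_le_of_le A fun x _ => (AddChar.norm_apply ψ x).le).trans (by simpa using hA)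
    _ ≤ (2 * V) ^ (m - 2) * (2 * V * (2 * V + V)) := by
        gcongr
        refine (sum_norm_sum_addChar_sq_le hw hwA hE hwE R).trans ?_
        exact mul_le_mul hA (add_le_add hwV hcard)
          (add_nonneg (sum_nonneg fun x _ => hw x) (by positivity)) (by positivity)
    _ = 6 * 2 ^ (m - 2) * V ^ m := by
        rw [mul_rpow zero_le_two hV.le, rpow_eq_rpow_sub_two_mul_sq hV.le hm]
        ring

end Restriction

/-! ### Restriction for sifted sets -/

section SiftedSets

variable {P : ℕ}
  {Ω : ∀ p : Nat.Primes, Finset (ZMod p)} {S : Finset Nat.Primes} {R : ℕ} {A : Finset ℕ}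
  {ε J m : ℝ}

/-- Selberg's majorant on `{0, …, P}`, pushed forward to `ZMod P`. The residue `0` collects the
contributions of both `0` and `P`. -/
noncomputable def residueMajorant (Ω : ∀ p : Nat.Primes, Finset (ZMod p)) (S : Finset Nat.Primes)
    (R : ℕ) (x : ZMod P) : ℝ :=
  ∑ n ∈ range (P + 1) with ((n : ℕ) : ZMod P) = x, sieveMajorant Ω S R n

lemma residueMajorant_nonneg (x : ZMod P) : 0 ≤ residueMajorant Ω S R x :=
  sum_nonneg fun n _ => sieveMajorant_nonneg n

lemma one_le_residueMajorant (hΩ : ∀ p ∈ S, 2 * #(Ω p) ≤ p) (hR : 1 ≤ R) {n : ℕ} (hnP : n ≤ P)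
    (hn : ∀ p ∈ S, (n : ZMod p) ∉ Ω p) : 1 ≤ residueMajorant Ω S R (n : ZMod P) := by
  rw [← sieveMajorant_eq_one hΩ hR hn]
  exact single_le_sum (f := sieveMajorant Ω S R) (fun n _ => sieveMajorant_nonneg n)
    (mem_filter.2 ⟨mem_range.2 (Nat.lt_succ_of_le hnP), rfl⟩)

variable [NeZero P]

lemma bijective_mulShift_stdAddChar :
    Function.Bijective fun t : ZMod P => AddChar.mulShift (ZMod.stdAddChar (N := P)) t :=
  (Fintype.bijective_iff_injective_and_card _).2
    ⟨AddChar.to_mulShift_inj_of_isPrimitive (ZMod.isPrimitive_stdAddChar P), AddChar.card_eq.symm⟩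

lemma sum_range_natCast_zmod {M : Type*} [AddCommMonoid M] (f : ZMod P → M) :
    ∑ n ∈ range P, f n = ∑ x, f x :=
  sum_nbij' (fun n => (n : ZMod P)) ZMod.val (fun _ _ => mem_univ _)
    (fun x _ => mem_range.2 (ZMod.val_lt x)) (fun _ hn => ZMod.val_cast_of_lt (mem_range.1 hn))
    (fun x _ => ZMod.natCast_zmod_val x) fun _ _ => rfl

lemma expSum_val_div_one {t : ZMod P} (ht : t ≠ 0) : expSum (P + 1) (t.val / P) 1 = 1 := by
  have h0 : ∑ x : ZMod P, ZMod.stdAddChar (t * x) = 0 := by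
    simpa [mul_comm t, ht] using AddChar.sum_mulShift t (ZMod.isPrimitive_stdAddChar P)
  simp only [expSum_apply, Pi.one_apply, Complex.ofReal_one, one_mul, ← stdAddChar_mul_natCast]
  rw [sum_range_succ, sum_range_natCast_zmod fun x => ZMod.stdAddChar (t * x), h0]
  simp

lemma sum_residueMajorant_mul_stdAddChar (t : ZMod P) :
    ∑ x : ZMod P, residueMajorant Ω S R x * ZMod.stdAddChar (t * x)
      = expSum (P + 1) (t.val / P) (sieveMajorant Ω S R) := by
  rw [expSum_apply, ← sum_fiberwise (range (P + 1)) fun n => (n : ZMod P)]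
  refine sum_congr rfl fun x _ => ?_
  rw [residueMajorant, Complex.ofReal_sum, sum_mul]
  refine sum_congr rfl fun n hn => ?_
  rw [← stdAddChar_mul_natCast, (mem_filter.1 hn).2]

lemma sum_residueMajorant_le (hΩ : ∀ p ∈ S, 2 * #(Ω p) ≤ p) (hR : 1 ≤ R)
    (hY : 2 * (R : ℝ) ^ 8 ≤ P + 1) (hJ : 0 < J) (hJS : J ≤ selbergSum (localDensity Ω) S R) :
    ∑ x : ZMod P, residueMajorant Ω S R x ≤ 2 * ((P + 1) / J) := by
  simp only [residueMajorant]
  rw [sum_fiberwise, ← mul_div_assoc]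
  refine (sum_sieveMajorant_le hΩ hR (by push_cast; exact hY)).trans ?_
  push_cast
  gcongr

lemma norm_sum_residueMajorant_mul_addChar_le (hΩ : ∀ p ∈ S, 2 * #(Ω p) ≤ p) (hR : 1 ≤ R)
    (hε : 0 < ε) (hε1 : ε ≤ 1) (hh : ∀ p ∈ S, localDensity Ω p ≤ ε ^ 2)
    (hY : 2 * (R : ℝ) ^ 8 ≤ (P + 1) * ε ^ 2) (hJ : 0 < J)
    (hJS : J ≤ selbergSum (localDensity Ω) S R) {ψ : AddChar (ZMod P) ℂ} (hψ : ψ ≠ 0) :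
    ‖∑ x, residueMajorant Ω S R x * ψ x‖ ≤ 8 * (P + 1) * ε / J := by
  obtain ⟨t, rfl⟩ := bijective_mulShift_stdAddChar.2 ψ
  have ht : t ≠ 0 := fun h => hψ (by simp only [h, AddChar.mulShift_zero, AddChar.one_eq_zero])
  have hR1 : (1 : ℝ) ≤ (R : ℝ) ^ 8 := one_le_pow₀ (Nat.one_le_cast.2 hR)
  have hPε : 1 ≤ (P + 1) * ε :=
    calc (1 : ℝ) ≤ (P + 1) * ε ^ 2 := by linarith
      _ ≤ (P + 1) * ε := by gcongr; exact pow_le_of_le_one hε.le hε1 two_ne_zero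
  simp only [AddChar.mulShift_apply]
  rw [sum_residueMajorant_mul_stdAddChar]
  refine (norm_expSum_sieveMajorant_le hΩ hR hε hε1 hh (by push_cast; exact hY)).trans ?_
  rw [expSum_val_div_one ht, norm_one]
  push_cast
  gcongr
  linarith

theorem sum_norm_sum_stdAddChar_rpow_le_of_sieve
    (hA : ∀ n ∈ A, n ≤ P ∧ ∀ p ∈ S, (n : ZMod p) ∉ Ω p) (hΩ : ∀ p ∈ S, 2 * #(Ω p) ≤ p)
    (hR : 1 ≤ R) (hε : 0 < ε) (hε1 : ε ≤ 1) (hh : ∀ p ∈ S, localDensity Ω p ≤ ε ^ 2)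
    (hY : 2 * (R : ℝ) ^ 8 ≤ (P + 1) * ε ^ 2) (hJ : 0 < J)
    (hJS : J ≤ selbergSum (localDensity Ω) S R) (hm : 2 < m)
    (hεJ : 16 * ε * J ^ (m / (m - 2)) ≤ 1) :
    ∑ t : ZMod P, ‖∑ x ∈ A.image fun n : ℕ => (n : ZMod P), ZMod.stdAddChar (t * x)‖ ^ m
      ≤ (6 * 2 ^ (m - 2) + 2) * ((P + 1) / J) ^ m := by
  have hm2 : m - 2 ≠ 0 := by linarith
  set α := J ^ (-(m - 2)⁻¹)
  have hα : α ^ (m - 2) = J⁻¹ := by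
    rw [← rpow_mul hJ.le, neg_mul, inv_mul_cancel₀ hm2, rpow_neg_one]
  have hα2 : 16 * ε * J ≤ α ^ 2 :=
    calc 16 * ε * J = 16 * ε * J ^ (m / (m - 2)) * α ^ 2 := by
          rw [mul_assoc _ (J ^ _), ← rpow_mul_natCast hJ.le, ← rpow_add hJ,
            show m / (m - 2) + -(m - 2)⁻¹ * (2 : ℕ) = 1 by push_cast; field_simp; ring, rpow_one]
      _ ≤ α ^ 2 := mul_le_of_le_one_left (sq_nonneg _) hεJ
  have hwA : ∀ x ∈ A.image fun n : ℕ => (n : ZMod P), 1 ≤ residueMajorant Ω S R x :=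
    forall_mem_image.2 fun n hn => one_le_residueMajorant hΩ hR (hA n hn).1 (hA n hn).2
  have hY' : 2 * (R : ℝ) ^ 8 ≤ P + 1 :=
    hY.trans (mul_le_of_le_one_right (by positivity) (pow_le_one₀ hε.le hε1))
  have key := sum_norm_sum_addChar_rpow_le residueMajorant_nonneg hwA (by positivity)
    (sum_residueMajorant_le hΩ hR hY' hJ hJS) (by positivity)
    (fun ψ => norm_sum_residueMajorant_mul_addChar_le hΩ hR hε hε1 hh hY hJ hJS) hm
    (rpow_pos_of_pos hJ _) (α := α) ?_ ?_
  · rwa [← bijective_mulShift_stdAddChar.sum_comp] at key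
  · rw [ZMod.card]
    calc 8 * (P + 1) * ε / J * (2 * P) = 16 * ε * J * ((P + 1) * P / J ^ 2) := by field_simp; ring
      _ ≤ α ^ 2 * ((P + 1) * (P + 1) / J ^ 2) := by gcongr; linarith
      _ = α ^ 2 * ((P + 1) / J) ^ 2 := by ring
  · rw [hα, ZMod.card, inv_mul_eq_div]
    gcongr
    linarith

lemma selbergSum_congr {h h' : Nat.Primes → ℝ} (hh : ∀ p ∈ S, h p = h' p) :
    selbergSum h S R = selbergSum h' S R :=
  sum_congr rfl fun _ hT => prod_congr rfl fun p hp => hh p ((mem_sievingSets.1 hT).1 hp)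

variable {k z y : ℕ}

theorem sum_norm_sum_stdAddChar_rpow_le_of_card_eq (hk : 1 ≤ k) (hkz : 2 * k ≤ z) (hz : 3 ≤ z)
    (hy : 1 ≤ y) (hΩ : ∀ p ∈ primesIoc z (y ^ k), #(Ω p) = k)
    (hA : ∀ n ∈ A, n ≤ P ∧ ∀ p ∈ primesIoc z (y ^ k), (n : ZMod p) ∉ Ω p) (hJ : 0 < J)
    (hJy : J ≤ (log y / (2 * exp 6 * log z)) ^ k) (hzy : (z : ℝ) * y ^ (8 * k) ≤ k * (P + 1))
    (hm : 2 < m) (hJz : 512 * k * J ^ (2 * m / (m - 2)) ≤ z) :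
    ∑ t : ZMod P, ‖∑ x ∈ A.image fun n : ℕ => (n : ZMod P), ZMod.stdAddChar (t * x)‖ ^ m
      ≤ (6 * 2 ^ (m - 2) + 2) * ((P + 1) / J) ^ m := by
  have hz0 : (0 : ℝ) < z := by positivity
  have hkz' : 2 * (k : ℝ) ≤ z := by exact_mod_cast hkz
  have hsq : √(2 * k / z) ^ 2 = 2 * k / z := sq_sqrt (by positivity)
  have hdensity : ∀ p ∈ primesIoc z (y ^ k), localDensity Ω p = k / (p - k) := fun p hp => by
    rw [localDensity, hΩ p hp]
  refine sum_norm_sum_stdAddChar_rpow_le_of_sieve (R := y ^ k) (ε := √(2 * k / z)) hA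
    (fun p hp => ?_) (Nat.one_le_pow _ _ hy) (by positivity) ?_ (fun p hp => ?_) ?_ hJ ?_ hm ?_
  · rw [hΩ p hp]
    exact hkz.trans (mem_primesIoc.1 hp).1.le
  · exact sqrt_le_one.2 ((div_le_one hz0).2 hkz')
  · have hzp : (z : ℝ) ≤ p := by exact_mod_cast (mem_primesIoc.1 hp).1.le
    rw [hdensity p hp, hsq, div_le_div_iff₀ (by linarith) hz0]
    nlinarith
  · rw [hsq, Nat.cast_pow, ← pow_mul, mul_comm k 8, mul_div_assoc', le_div_iff₀ hz0]
    linarith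
  · rw [selbergSum_congr hdensity]
    exact hJy.trans (pow_log_div_log_le_selbergSum hk (by omega) hz)
  · have hJsq : (J ^ (m / (m - 2))) ^ 2 = J ^ (2 * m / (m - 2)) := by
      rw [← rpow_mul_natCast hJ.le, div_mul_eq_mul_div, mul_comm m]
      norm_cast
    refine (sq_le_one_iff₀ (by positivity)).1 ?_
    calc _ = 512 * k * J ^ (2 * m / (m - 2)) / z := by
          rw [mul_pow, mul_pow, hsq, hJsq]
          ring
      _ ≤ 1 := (div_le_one hz0).2 hJz

end SiftedSets

/-! ### Choice of the sieving range -/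

section Parameters

open Filter

variable {L E m x : ℝ} {k : ℕ}

lemma half_le_log_floor_exp (hx : 2 ≤ x) : x / 2 ≤ log ⌊exp x⌋₊ := by
  have hlt : exp x < ⌊exp x⌋₊ + 1 := Nat.lt_floor_add_one _
  have hsq : exp x = exp (x / 2) * exp (x / 2) := by rw [← exp_add, add_halves]
  have htwo : 2 ≤ exp (x / 2) := by linarith [add_one_le_exp (x / 2)]
  have hle : exp (x / 2) ≤ ⌊exp x⌋₊ := by nlinarith
  exact (le_log_iff_exp_le ((exp_pos _).trans_le hle)).2 hle

lemma log_ceil_rpow_le (hL : 2 ≤ L) (hE : 0 ≤ E) : log ⌈L ^ E⌉₊ ≤ (E + 1) * log L := by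
  have hL0 : 0 < L := by linarith
  have hone : 1 ≤ L ^ E := one_le_rpow (by linarith) hE
  have hlt : (⌈L ^ E⌉₊ : ℝ) < L ^ E + 1 := Nat.ceil_lt_add_one (by positivity)
  rw [← log_rpow hL0, rpow_add_one hL0.ne']
  refine log_le_log (by positivity) ?_
  nlinarith

lemma eventually_ceil_rpow_le_exp (hE : 0 ≤ E) :
    ∀ᶠ L : ℝ in atTop, (⌈L ^ E⌉₊ : ℝ) ≤ exp (L / 4) := by
  have hbound := (isLittleO_rpow_exp_pos_mul_atTop E (b := 1 / 4) (by norm_num)).bound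
    (c := 1 / 2) (by norm_num)
  filter_upwards [hbound, eventually_ge_atTop 1] with L hL hL1
  have hone : 1 ≤ L ^ E := one_le_rpow hL1 hE
  have hlt : (⌈L ^ E⌉₊ : ℝ) < L ^ E + 1 := Nat.ceil_lt_add_one (by positivity)
  rw [norm_of_nonneg (by positivity), norm_of_nonneg (by positivity)] at hL
  rw [div_eq_inv_mul, ← one_div]
  linarith

lemma mul_rpow_pow_le_rpow {c v : ℝ} (hL : 1 ≤ L) (hlogL : 1 ≤ log L) (hc : 0 ≤ c) (hc1 : c ≤ 1)
    (hv : 0 ≤ v) : (c * (L / log L) ^ k) ^ v ≤ L ^ (k * v) := by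
  rw [rpow_natCast_mul (by linarith)]
  gcongr
  calc c * (L / log L) ^ k ≤ 1 * L ^ k := by
        gcongr
        exact div_le_self (by linarith) hlogL
    _ = L ^ k := one_mul _

lemma exists_pow_le_exp_and_le_log (hk : 1 ≤ k) (hL : 64 * (k : ℝ) ^ 2 ≤ L) :
    ∃ y : ℕ, 1 ≤ y ∧ (y : ℝ) ^ k ≤ exp (L / (4 * k + 1)) ∧ (y : ℝ) ^ (8 * k) ≤ exp (L / 4) ∧
      L / (64 * k ^ 2) ≤ log y := by
  have hk1 : (1 : ℝ) ≤ k := by exact_mod_cast hk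
  have hL0 : 0 ≤ L := hL.trans' (by positivity)
  have hx : 2 ≤ L / (32 * k ^ 2) := (le_div_iff₀ (by positivity)).2 (by linarith)
  have hfloor : (⌊exp (L / (32 * k ^ 2))⌋₊ : ℝ) ≤ exp (L / (32 * k ^ 2)) :=
    Nat.floor_le (exp_pos _).le
  have hpow (j : ℕ) : (⌊exp (L / (32 * k ^ 2))⌋₊ : ℝ) ^ j ≤ exp (j * (L / (32 * k ^ 2))) := by
    rw [exp_nat_mul]
    gcongr
  refine ⟨⌊exp (L / (32 * k ^ 2))⌋₊, ?_, (hpow k).trans ?_, (hpow (8 * k)).trans ?_, ?_⟩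
  · exact Nat.le_floor (by rw [Nat.cast_one]; exact one_le_exp (by linarith))
  · rw [exp_le_exp]
    calc k * (L / (32 * k ^ 2)) = L / (32 * k) := by field_simp
      _ ≤ L / (4 * k + 1) := by gcongr _ / ?_; linarith
  · rw [exp_le_exp]
    calc ((8 * k : ℕ) : ℝ) * (L / (32 * k ^ 2)) = L / (4 * k) := by push_cast; field_simp; ring
      _ ≤ L / 4 := by gcongr; linarith
  · calc L / (64 * k ^ 2) = L / (32 * k ^ 2) / 2 := by field_simp; ring
      _ ≤ _ := half_le_log_floor_exp hx

theorem exists_sieving_parameters (hk : 1 ≤ k) (hm : 2 < m) :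
    ∃ c₁ : ℝ, 0 < c₁ ∧ ∀ᶠ L : ℝ in atTop, ∃ z y : ℕ, 2 * k ≤ z ∧ 3 ≤ z ∧ L ≤ z ∧ 1 ≤ y ∧
      (y : ℝ) ^ k ≤ exp (L / (4 * k + 1)) ∧ (z : ℝ) * y ^ (8 * k) ≤ exp (L / 2) ∧
      c₁ * (L / log L) ^ k ≤ (log y / (2 * exp 6 * log z)) ^ k ∧
      512 * k * (c₁ * (L / log L) ^ k) ^ (2 * m / (m - 2)) ≤ z := by
  have hk1 : (1 : ℝ) ≤ k := by exact_mod_cast hk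
  have hv : 0 ≤ 2 * m / (m - 2) := div_nonneg (by linarith) (by linarith)
  set E : ℝ := k * (2 * m / (m - 2)) + 1
  have hE1 : 1 ≤ E := le_add_of_nonneg_left (by positivity)
  set b : ℝ := 1 / (128 * k ^ 2 * exp 6 * (E + 1)) with hb
  have hb1 : b ≤ 1 := by
    have hk2 : (1 : ℝ) ≤ 128 * k ^ 2 := by nlinarith
    exact div_le_one_of_le₀ (one_le_mul_of_one_le_of_one_le (one_le_mul_of_one_le_of_one_le hk2
      (one_le_exp (by norm_num))) (by linarith)) (by positivity)
  refine ⟨b ^ k, by positivity, ?_⟩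
  filter_upwards [eventually_ceil_rpow_le_exp (zero_le_one.trans hE1),
    eventually_ge_atTop (512 * (k : ℝ)), eventually_ge_atTop (64 * (k : ℝ) ^ 2)] with L hz hLk hLk2
  obtain ⟨y, hy, hyk, hy8, hlogy⟩ := exists_pow_le_exp_and_le_log hk hLk2
  have hL0 : 0 < L := by linarith
  have hlogL : 1 ≤ log L := (le_log_iff_exp_le hL0).2 (by linarith [exp_one_lt_d9])
  have hEz : L ^ E ≤ ⌈L ^ E⌉₊ := Nat.le_ceil _
  have hzL : L ≤ ⌈L ^ E⌉₊ := (self_le_rpow_of_one_le (by linarith) hE1).trans hEz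
  refine ⟨⌈L ^ E⌉₊, y, ?_, ?_, hzL, hy, hyk, ?_, ?_, ?_⟩
  · exact_mod_cast (by linarith : 2 * (k : ℝ) ≤ ⌈L ^ E⌉₊)
  · exact_mod_cast (by linarith : (3 : ℝ) ≤ ⌈L ^ E⌉₊)
  · calc _ ≤ exp (L / 4) * exp (L / 4) := by gcongr
      _ = exp (L / 2) := by rw [← exp_add]; congr 1; ring
  · have hlogz := log_ceil_rpow_le (by linarith : 2 ≤ L) (zero_le_one.trans hE1)
    have hlogz0 : 0 < log (⌈L ^ E⌉₊ : ℝ) := log_pos (by linarith)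
    have : 0 < log L := by linarith
    rw [← mul_pow]
    refine pow_le_pow_left₀ (by positivity) ?_ k
    calc b * (L / log L) = L / (64 * k ^ 2) / (2 * exp 6 * ((E + 1) * log L)) := by
          rw [hb]; field_simp; ring
      _ ≤ _ := by gcongr
  · have hJ := mul_rpow_pow_le_rpow (c := b ^ k) (k := k) (by linarith : 1 ≤ L) hlogL
      (by positivity) (pow_le_one₀ (by positivity) hb1) hv
    calc _ ≤ L * L ^ (k * (2 * m / (m - 2))) := mul_le_mul hLk hJ (by positivity) hL0.le
      _ = L ^ E := by rw [mul_comm, ← rpow_add_one hL0.ne']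
      _ ≤ _ := hEz

end Parameters

/-! ### Products of linear forms along a progression -/

section LinearForms

variable {ι : Type*} [Fintype ι]

lemma card_filter_prod_mul_add_eq_zero {K : Type*} [Field K] [Fintype K] [DecidableEq K]
    {α β : ι → K} (hα : ∀ i, α i ≠ 0) (hαβ : ∀ i j, j ≠ i → α i * β j - β i * α j ≠ 0) :
    #{x | ∏ i, (α i * x + β i) = 0} = Fintype.card ι := by
  have hroots : ({x | ∏ i, (α i * x + β i) = 0} : Finset K) = univ.image fun i => -β i / α i := by
    ext x
    simp only [mem_filter_univ, prod_eq_zero_iff, mem_univ, true_and, mem_image,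
      div_eq_iff (hα _), mul_comm x, neg_eq_iff_add_eq_zero, add_comm]
  have hinj : Function.Injective fun i => -β i / α i := fun i j hij => by
    by_contra hne
    rw [div_eq_div_iff (hα i) (hα j)] at hij
    exact hαβ i j (Ne.symm hne) (by linear_combination hij)
  rw [hroots, card_image_of_injective _ hinj, card_univ]

variable {a b : ι → ℤ} {M b₀ : ℕ} {p : Nat.Primes}

/-- The residue classes `x` mod `p` with `F(b₀ + x M) ≡ 0`, where `F` is the product of the linear
forms `a i * X + b i`. -/
def progressionRoots (a b : ι → ℤ) (M b₀ : ℕ) (p : Nat.Primes) : Finset (ZMod p) :=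
  {x | ∏ i, ((a i * M : ZMod p) * x + (a i * b₀ + b i)) = 0}

lemma natCast_mem_progressionRoots {n : ℕ} :
    (n : ZMod p) ∈ progressionRoots a b M b₀ p ↔ (p : ℤ) ∣ ∏ i, (a i * (b₀ + n * M) + b i) := by
  rw [progressionRoots, mem_filter_univ, ← ZMod.intCast_zmod_eq_zero_iff_dvd]
  push_cast
  simp only [mul_add, mul_assoc, mul_comm (n : ZMod p), add_left_comm, add_assoc]

variable [DecidableEq ι]

/-- The discriminant `Δ(F)` of the product `F` of the linear forms `a i * X + b i`. -/
def linearFormsDiscr (a b : ι → ℤ) : ℤ :=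
  (∏ i, a i) * ∏ i, ∏ j ∈ univ.filter (fun j => j ≠ i), (a i * b j - b i * a j)

lemma card_progressionRoots (hM : ¬ (p : ℕ) ∣ M) (hΔ : ¬ (p : ℤ) ∣ linearFormsDiscr a b) :
    #(progressionRoots a b M b₀ p) = Fintype.card ι := by
  rw [← ZMod.intCast_zmod_eq_zero_iff_dvd, linearFormsDiscr, Int.cast_mul, mul_eq_zero, not_or]
    at hΔ
  push_cast at hΔ
  obtain ⟨ha, hab⟩ := hΔ.imp prod_ne_zero_iff.1 prod_ne_zero_iff.1
  have hM' : (M : ZMod p) ≠ 0 := (ZMod.natCast_eq_zero_iff _ _).not.2 hM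
  refine card_filter_prod_mul_add_eq_zero (fun i => mul_ne_zero (ha i (mem_univ i)) hM')
    fun i j hji h => ?_
  refine prod_ne_zero_iff.1 (hab i (mem_univ i)) j ((mem_filter_univ j).2 hji) ?_
  refine (mul_eq_zero.1 ?_).resolve_left hM'
  linear_combination h

end LinearForms

/-! ### Primorials, sifted sets and progressions -/

section Progressions

variable {N M P k b₀ : ℕ} {A : Finset ℕ}

lemma primor_eq_primorial (x : ℝ) : primor x = primorial ⌊x⌋₊ := rfl

lemma primor_pos (x : ℝ) : 0 < primor x := primorial_pos _

lemma primor_div_three_le_exp {L : ℝ} (hL : 0 ≤ L) : (primor (L / 3) : ℝ) ≤ exp (L / 2) := by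
  have hlog4 : log 4 ≤ 3 / 2 := by
    rw [show (4 : ℝ) = 2 ^ 2 by norm_num, log_pow]
    push_cast
    linarith [log_two_lt_d9]
  calc (primor (L / 3) : ℝ) ≤ 4 ^ ⌊L / 3⌋₊ := by
        rw [primor_eq_primorial]
        exact_mod_cast primorial_le_four_pow _
    _ = exp (⌊L / 3⌋₊ * log 4) := by rw [exp_nat_mul, exp_log (by norm_num)]
    _ ≤ exp (L / 3 * (3 / 2)) := by
        gcongr
        exact Nat.floor_le (by positivity)
    _ = exp (L / 2) := by ring_nf

lemma natCast_notMem_progressionRoots {a b : Fin k → ℤ} {F : ℤ → ℤ} {w : ℝ} {n : ℕ}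
    {p : Nat.Primes} (hF : ∀ n : ℤ, F n = ∏ i, (a i * n + b i)) (hA : A ⊆ SFset F N w)
    (hn : n ∈ Abset A N M b₀) (hp : (p : ℝ) ≤ w) :
    (n : ZMod p) ∉ progressionRoots a b M b₀ p := fun hmem => by
  have hgcd : Int.gcd (F (b₀ + n * M)) (primor w) = 1 := by
    exact_mod_cast (mem_filter.1 (hA (mem_filter.1 hn).2)).2
  have hp_dvd : (p : ℕ) ∣ primor w := (Nat.Prime.dvd_primorial_iff p.2).2 (Nat.le_floor hp)
  rw [natCast_mem_progressionRoots, ← hF] at hmem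
  have hp_dvd_gcd := Int.dvd_gcd hmem (Int.natCast_dvd_natCast.2 hp_dvd)
  rw [hgcd] at hp_dvd_gcd
  exact p.2.one_lt.ne' (Nat.dvd_one.1 hp_dvd_gcd)

lemma le_of_mem_Abset (hA : A ⊆ Icc 1 N) (hM : 0 < M) (hN : N ≤ P * M) {n : ℕ}
    (hn : n ∈ Abset A N M b₀) : n ≤ P := by
  have hle := (mem_Icc.1 (hA (mem_filter.1 hn).2)).2
  exact Nat.le_of_mul_le_mul_right (by omega : n * M ≤ P * M) hM

lemma injOn_natCast_Abset (hA : A ⊆ Icc 1 N) (hM : 0 < M) (hN : N ≤ P * M) :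
    Set.InjOn (fun n : ℕ => (n : ZMod P)) (Abset A N M b₀) := fun n hn n' hn' h => by
  have hIcc := mem_Icc.1 (hA (mem_filter.1 hn).2)
  have hIcc' := mem_Icc.1 (hA (mem_filter.1 hn').2)
  have hmod : b₀ + n * M ≡ b₀ + n' * M [MOD P * M] :=
    (((ZMod.natCast_eq_natCast_iff _ _ _).1 h).mul_right' M).add_left b₀
  have heq := hmod.eq_of_abs_lt (abs_sub_lt_iff.2 (by omega))
  exact Nat.eq_of_mul_eq_mul_right hM (Nat.add_left_cancel heq)

end Progressions

/-! ### Moments of the normalized Fourier transform -/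

section Moments

open Filter

lemma FTP_fCfun {P : ℕ} [Fact P.Prime] (C : Finset (ZMod P)) (t : ZMod P) :
    FTP (fCfun C) t = (∑ x ∈ C, ZMod.stdAddChar (t * x)) / #C := by
  have hP : (P : ℂ) ≠ 0 := by exact_mod_cast (Fact.out : P.Prime).ne_zero
  have hexp (x : ZMod P) : Complex.exp (2 * π * Complex.I * t.val * x.val / P) =
      ZMod.stdAddChar (t * x) := by
    rw [← ZMod.natCast_zmod_val x, stdAddChar_mul_natCast, Real.fourierChar_apply,
      ZMod.natCast_zmod_val]
    push_cast
    ring_nf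
  have hterm (x : ZMod P) : (fCfun C x : ℂ) *
      Complex.exp (2 * π * Complex.I * t.val * x.val / P) =
        P / #C * if x ∈ C then ZMod.stdAddChar (t * x) else 0 := by
    rw [hexp, fCfun]
    split_ifs <;> simp
  rw [FTP, sum_congr rfl fun x _ => hterm x, ← mul_sum, sum_ite_mem, univ_inter]
  field_simp

lemma sum_prod_comp_equiv_rpow_le {T ι : Type*} [Fintype T] [Fintype ι] {g : T → ℝ}
    (hg : ∀ t, 0 ≤ g t) (e : ι → T ≃ T) {m : ι → ℝ} (hm : ∀ i, 0 ≤ m i) (hm0 : 0 < ∑ i, m i) :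
    ∑ t, ∏ i, g (e i t) ^ m i ≤ ∑ t, g t ^ ∑ i, m i := by
  set μ := ∑ i, m i
  have hweights : ∑ i, m i / μ = 1 := by rw [← sum_div, div_self hm0.ne']
  have hamgm (t : T) : ∏ i, g (e i t) ^ m i ≤ ∑ i, m i / μ * g (e i t) ^ μ := by
    refine le_trans (le_of_eq (prod_congr rfl fun i _ => ?_)) <|
      geom_mean_le_arith_mean_weighted univ (fun i => m i / μ) (fun i => g (e i t) ^ μ)
        (fun i _ => div_nonneg (hm i) hm0.le) hweights fun i _ => rpow_nonneg (hg _) _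
    rw [← rpow_mul (hg _), mul_div_cancel₀ _ hm0.ne']
  calc ∑ t, ∏ i, g (e i t) ^ m i ≤ ∑ t, ∑ i, m i / μ * g (e i t) ^ μ :=
        sum_le_sum fun t _ => hamgm t
    _ = ∑ i, m i / μ * ∑ t, g (e i t) ^ μ := by simp_rw [mul_sum]; exact sum_comm
    _ = ∑ t, g t ^ μ := by
      simp_rw [fun i => (e i).sum_comp (g · ^ μ)]
      rw [← sum_mul, hweights, one_mul]

lemma exp_half_le_of_le_mul_primor {N P : ℕ} (hN0 : 0 < N)
    (hN : N ≤ P * primor (log N / 3)) : exp (log N / 2) ≤ P := by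
  have hNexp : (N : ℝ) = exp (log N / 2) * exp (log N / 2) := by
    rw [← exp_add, add_halves, exp_log (by exact_mod_cast hN0)]
  have hle : (N : ℝ) ≤ P * primor (log N / 3) := by exact_mod_cast hN
  refine le_of_mul_le_mul_right ?_ (exp_pos (log N / 2))
  calc exp (log N / 2) * exp (log N / 2) = N := hNexp.symm
    _ ≤ P * primor (log N / 3) := hle
    _ ≤ P * exp (log N / 2) := by
      gcongr
      exact primor_div_three_le_exp (log_natCast_nonneg N)

lemma not_dvd_primor_of_lt {x : ℝ} {p : ℕ} (hp : p.Prime) (hx : 0 ≤ x) (hxp : x < p) :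
    ¬ p ∣ primor x := by
  rw [primor_eq_primorial, hp.dvd_primorial_iff, not_le]
  exact (Nat.floor_lt hx).2 hxp

theorem exists_sum_norm_sum_stdAddChar_Abset_rpow_le {k : ℕ} (hk : 1 ≤ k) {a b : Fin k → ℤ}
    {F : ℤ → ℤ} (hF : ∀ n : ℤ, F n = ∏ i, (a i * n + b i)) (hΔ : linearFormsDiscr a b ≠ 0)
    {μ : ℝ} (hμ : 2 < μ) :
    ∃ c₁ : ℝ, 0 < c₁ ∧ ∀ᶠ N : ℕ in atTop, 1 < log N ∧
      ∀ A ⊆ SFset F N ((N : ℝ) ^ (1 / (4 * k + 1) : ℝ)), ∀ b₀ P : ℕ, ∀ [NeZero P],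
        N ≤ P * primor (log N / 3) →
        ∑ t : ZMod P, ‖∑ x ∈ (Abset A N (primor (log N / 3)) b₀).image fun n : ℕ => (n : ZMod P),
            ZMod.stdAddChar (t * x)‖ ^ μ
          ≤ (6 * 2 ^ (μ - 2) + 2) * ((P + 1) / (c₁ * (log N / log (log N)) ^ k)) ^ μ := by
  obtain ⟨c₁, hc₁, hparam⟩ := exists_sieving_parameters hk hμ
  refine ⟨c₁, hc₁, ?_⟩
  have hlog : Tendsto (fun N : ℕ => log N) atTop atTop :=
    tendsto_log_atTop.comp tendsto_natCast_atTop_atTop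
  filter_upwards [hlog.eventually hparam, hlog.eventually_gt_atTop 1,
    hlog.eventually_ge_atTop ((linearFormsDiscr a b).natAbs : ℝ), eventually_gt_atTop 0]
    with N ⟨z, y, hkz, hz, hLz, hy, hyk, hzy, hJ, hJz⟩ hL1 hLΔ hN0
  refine ⟨hL1, fun A hA b₀ P _ hNP => ?_⟩
  set L := log N
  have hAIcc : A ⊆ Icc 1 N := hA.trans (filter_subset _ _)
  have hloglog : 0 < log L := log_pos hL1
  refine sum_norm_sum_stdAddChar_rpow_le_of_card_eq (Ω := progressionRoots a b (primor (L / 3)) b₀)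
    hk hkz hz hy (fun p hp => ?_) (fun n hn => ⟨le_of_mem_Abset hAIcc (primor_pos _) hNP hn,
      fun p hp => natCast_notMem_progressionRoots hF hA hn ?_⟩) (by positivity) hJ ?_ hμ hJz
  · have hLp : L < p := hLz.trans_lt (by exact_mod_cast (mem_primesIoc.1 hp).1)
    have hM := not_dvd_primor_of_lt p.2 (by positivity : 0 ≤ L / 3) (by linarith)
    rw [card_progressionRoots hM, Fintype.card_fin]
    intro hdvd
    have hple := Nat.le_of_dvd (Int.natAbs_pos.2 hΔ) (Int.natCast_dvd.1 hdvd)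
    exact absurd (hLΔ.trans_lt hLp) (not_lt.2 (by exact_mod_cast hple))
  · calc (p : ℝ) ≤ (y : ℝ) ^ k := by exact_mod_cast (mem_primesIoc.1 hp).2
      _ ≤ exp (L / (4 * k + 1)) := hyk
      _ = (N : ℝ) ^ (1 / (4 * k + 1) : ℝ) := by
        rw [rpow_def_of_pos (by exact_mod_cast hN0), mul_one_div]
  · have hkR : (1 : ℝ) ≤ k := by exact_mod_cast hk
    have hP := exp_half_le_of_le_mul_primor hN0 hNP
    nlinarith

lemma sum_norm_FTP_fCfun_rpow {P : ℕ} [Fact P.Prime] (C : Finset (ZMod P)) (μ : ℝ) :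
    ∑ t, ‖FTP (fCfun C) t‖ ^ μ =
      (∑ t : ZMod P, ‖∑ x ∈ C, ZMod.stdAddChar (t * x)‖ ^ μ) / #C ^ μ := by
  simp_rw [FTP_fCfun, norm_div, Complex.norm_natCast,
    div_rpow (norm_nonneg _) (Nat.cast_nonneg _), ← sum_div]

lemma div_div_le_of_le_mul {c c₁ l L n p X η : ℝ} {k : ℕ} (hc₁ : 0 < c₁) (hl : 0 < l) (hL : 0 < L)
    (hη : 0 < η) (hX : 0 < X) (hp0 : 0 ≤ p) (hp : p ≤ c * X) (hn : η * l ^ k / L ^ k * X ≤ n) :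
    p / (c₁ * (L / l) ^ k) / n ≤ c / (c₁ * η) := by
  have hcX : 0 ≤ c * X := hp0.trans hp
  calc p / (c₁ * (L / l) ^ k) / n ≤ c * X / (c₁ * (L / l) ^ k) / (η * l ^ k / L ^ k * X) := by
        gcongr
    _ = c / (c₁ * η) := by
        rw [div_pow]
        field_simp

lemma mul_div_rpow_div_rpow_le {K c c₀ c₁ l L n p X δ μ : ℝ} {k : ℕ} (hK : 0 ≤ K) (hμ : 0 ≤ μ)
    (hc₀ : 0 < c₀) (hc₁ : 0 < c₁) (hl : 0 < l) (hL : 0 < L) (hδ : 0 < δ) (hX : 0 < X) (hp0 : 0 ≤ p)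
    (hp : p ≤ c * X) (hn : c₀ * δ * l ^ k / L ^ k * X ≤ n) :
    K * (p / (c₁ * (L / l) ^ k)) ^ μ / n ^ μ ≤ K * (c / (c₁ * c₀)) ^ μ * δ ^ (-μ) := by
  have hn0 : 0 ≤ n := le_trans (by positivity) hn
  have hc : 0 ≤ c := nonneg_of_mul_nonneg_left (hp0.trans hp) hX
  calc K * (p / (c₁ * (L / l) ^ k)) ^ μ / n ^ μ = K * (p / (c₁ * (L / l) ^ k) / n) ^ μ := by
        rw [mul_div_assoc, div_rpow (by positivity) hn0]
    _ ≤ K * (c / (c₁ * (c₀ * δ))) ^ μ := by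
        refine mul_le_mul_of_nonneg_left (rpow_le_rpow (by positivity) ?_ hμ) hK
        exact div_div_le_of_le_mul hc₁ hl hL (by positivity) hX hp0 hp hn
    _ = K * (c / (c₁ * c₀)) ^ μ * δ ^ (-μ) := by
        rw [← mul_assoc c₁, ← div_div, div_rpow (by positivity) hδ.le, rpow_neg hδ.le,
          div_eq_mul_inv, mul_assoc]

end Moments

lemma one_le_sum_pos_of_sum_eq_zero {ι : Type*} [Fintype ι] [Nonempty ι] {c : ι → ℤ}
    (hc : ∀ i, c i ≠ 0) (hsum : ∑ i, c i = 0) : 1 ≤ ∑ i with 0 < c i, c i := by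
  obtain ⟨i, -, hi⟩ := exists_pos_of_sum_zero_of_exists_nonzero c hsum
    ⟨Classical.arbitrary ι, mem_univ _, hc _⟩
  exact Int.add_one_le_of_lt <| sum_pos (fun j hj => (mem_filter.1 hj).2)
    ⟨i, mem_filter.2 ⟨mem_univ i, hi⟩⟩

theorem stmt6_general
    (k : ℕ) (hk : 1 ≤ k) (a b : Fin k → ℤ)
    (F : ℤ → ℤ) (hF : ∀ n : ℤ, F n = ∏ i, (a i * n + b i))
    (hdisc : (∏ i, a i) *
      ∏ i, ∏ j ∈ Finset.univ.filter (fun j => j ≠ i), (a i * b j - b i * a j) ≠ 0)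
    (c : ℝ) (hc : 1 ≤ c) (c₀ : ℝ) (hc₀ : 0 < c₀) (μ : ℝ) (hμ : 2 < μ) :
    ∃ (C : ℝ) (N₁ : ℕ), 0 < C ∧
      ∀ N : ℕ, N₁ ≤ N →
      ∀ A : Finset ℕ, A ⊆ SFset F N ((N : ℝ) ^ ((1 : ℝ) / (4 * k + 1))) →
      ∀ δ : ℝ, 0 < δ →
      ∀ b₀ : ℕ,
        c₀ * δ * (Real.log (Real.log N)) ^ k / (Real.log N) ^ k *
            (N : ℝ) / (primor (Real.log N / 3) : ℝ)
          ≤ ((Abset A N (primor (Real.log N / 3)) b₀).card : ℝ) →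
      ∀ (P : ℕ) [Fact P.Prime],
        c * (N : ℝ) / (primor (Real.log N / 3) : ℝ) ≤ (P : ℝ) →
        (P : ℝ) ≤ 2 * c * (N : ℝ) / (primor (Real.log N / 3) : ℝ) →
        ∀ (s : ℕ) (m : Fin s → ℝ), (∀ i, 0 ≤ m i) → ∑ i, m i = μ →
        ∀ u : Fin s → ZMod P, (∀ i, IsUnit (u i)) →
          ∑ t : ZMod P, ∏ i,
              (norm (FTP (fCfun ((Abset A N (primor (Real.log N / 3)) b₀).image
                (fun n : ℕ => (n : ZMod P)))) (u i * t))) ^ (m i)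
            ≤ C * δ ^ (-μ) := by
  obtain ⟨c₁, hc₁, hmoment⟩ := exists_sum_norm_sum_stdAddChar_Abset_rpow_le hk hF hdisc hμ
  obtain ⟨N₁, hN₁⟩ := Filter.eventually_atTop.1 hmoment
  refine ⟨(6 * 2 ^ (μ - 2) + 2) * (4 * c / (c₁ * c₀)) ^ μ, N₁, by positivity, ?_⟩
  rintro N hN A hA δ hδ b₀ hcard P _ hP hPc s m hm rfl u hu
  obtain ⟨hlogN, hbound⟩ := hN₁ N hN
  set M := primor (log N / 3)
  set A' := Abset A N M b₀
  have hM : (0 : ℝ) < M := by exact_mod_cast primor_pos _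
  have hN0 : (0 : ℝ) < N := by
    rcases N.eq_zero_or_pos with rfl | h
    · norm_num at hlogN
    · exact_mod_cast h
  rw [mul_div_assoc] at hP hPc hcard
  have hNP : N ≤ P * M := by
    have := (le_mul_of_one_le_left (by positivity) hc).trans hP
    exact_mod_cast (div_le_iff₀ hM).1 this
  have hP1 : (1 : ℝ) ≤ P := by exact_mod_cast (Fact.out : P.Prime).one_le
  have hcardA' : #(A'.image fun n : ℕ => (n : ZMod P)) = #A' :=
    card_image_of_injOn (injOn_natCast_Abset (hA.trans (filter_subset _ _)) (primor_pos _) hNP)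
  calc ∑ t : ZMod P, ∏ i, ‖FTP (fCfun (A'.image fun n : ℕ => (n : ZMod P))) (u i * t)‖ ^ m i
      ≤ ∑ t, ‖FTP (fCfun (A'.image fun n : ℕ => (n : ZMod P))) t‖ ^ ∑ i, m i :=
        sum_prod_comp_equiv_rpow_le (fun _ => norm_nonneg _)
          (fun i => Units.mulLeft (hu i).unit) hm (two_pos.trans hμ)
    _ ≤ (6 * 2 ^ (∑ i, m i - 2) + 2) *
          ((P + 1) / (c₁ * (log N / log (log N)) ^ k)) ^ (∑ i, m i) / #A' ^ ∑ i, m i := by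
        rw [sum_norm_FTP_fCfun_rpow, hcardA']
        gcongr
        exact hbound A hA b₀ P hNP
    _ ≤ (6 * 2 ^ (∑ i, m i - 2) + 2) * (4 * c / (c₁ * c₀)) ^ (∑ i, m i) * δ ^ (-∑ i, m i) :=
        mul_div_rpow_div_rpow_le (by positivity) (two_pos.trans hμ).le hc₀ hc₁ (log_pos hlogN)
          (zero_lt_one.trans hlogN) hδ (by positivity) (by positivity) (by linarith) hcard

theorem stmt6
    (k : ℕ) (hk : 1 ≤ k) (a b : Fin k → ℤ) (ha : ∀ i, a i ≠ 0)
    (F : ℤ → ℤ) (hF : ∀ n : ℤ, F n = ∏ i, (a i * n + b i))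
    (hdisc : (∏ i, a i) *
      ∏ i, ∏ j ∈ Finset.univ.filter (fun j => j ≠ i), (a i * b j - b i * a j) ≠ 0)
    (hadm : ∀ p : ℕ, p.Prime → ∃ n : ℤ, ¬ ((p : ℤ) ∣ F n))
    (s : ℕ) (cc : Fin s → ℤ) (hcc : ∀ i, cc i ≠ 0) (hti : ∑ i, cc i = 0)
    (c₀ : ℝ) (hc₀ : 0 < c₀)
    (m : Fin s → ℝ) (hm : ∀ i, 0 < m i) (hmsum : 2 < ∑ i, m i) :
    ∃ (C : ℝ) (N₁ : ℕ), 0 < C ∧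
      ∀ N : ℕ, N₁ ≤ N →
      ∀ A : Finset ℕ, A ⊆ SFset F N ((N : ℝ) ^ ((1 : ℝ) / (4 * k + 1))) →
      ∀ δ : ℝ, 0 < δ →
        (A.card : ℝ) = δ * ((SFset F N ((N : ℝ) ^ ((1 : ℝ) / (4 * k + 1)))).card : ℝ) →
      ∀ b₀ : ℕ, b₀ < primor (Real.log N / 3) →
        Int.gcd (F b₀) (primor (Real.log N / 3)) = 1 →
        c₀ * δ * (Real.log (Real.log N)) ^ k / (Real.log N) ^ k *
            (N : ℝ) / (primor (Real.log N / 3) : ℝ)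
          ≤ ((Abset A N (primor (Real.log N / 3)) b₀).card : ℝ) →
      ∀ (P : ℕ) [Fact P.Prime],
        ((∑ i ∈ Finset.univ.filter (fun i => 0 < cc i), cc i : ℤ) : ℝ) *
            (N : ℝ) / (primor (Real.log N / 3) : ℝ) ≤ (P : ℝ) →
        (P : ℝ) ≤ 2 * ((∑ i ∈ Finset.univ.filter (fun i => 0 < cc i), cc i : ℤ) : ℝ) *
            (N : ℝ) / (primor (Real.log N / 3) : ℝ) →
        ∀ u : Fin s → ZMod P, (∀ i, IsUnit (u i)) →
          ∑ t : ZMod P, ∏ i,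
              (norm (FTP (fCfun ((Abset A N (primor (Real.log N / 3)) b₀).image
                (fun n : ℕ => (n : ZMod P)))) (u i * t))) ^ (m i)
            ≤ C * δ ^ (-(∑ i, m i)) := by
  have : Nonempty (Fin s) := by
    by_contra h
    rw [not_nonempty_iff] at h
    norm_num [Fintype.sum_empty] at hmsum
  have hc : (1 : ℝ) ≤ (∑ i with 0 < cc i, cc i : ℤ) := by
    exact_mod_cast one_le_sum_pos_of_sum_eq_zero hcc hti
  obtain ⟨C, N₁, hC, h⟩ := stmt6_general k hk a b F hF hdisc _ hc c₀ hc₀ _ hmsum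
  exact ⟨C, N₁, hC, fun N hN A hA δ hδ _ b₀ _ _ hcard P _ hP hPc =>
    h N hN A hA δ hδ b₀ hcard P hP hPc s m (fun i => (hm i).le) rfl⟩
end

section
/- Let P be a prime, let f : ℤ/Pℤ → ℝ_{≥0} be a nonnegative function with 𝔼(f) = 1, let l ≥ 2 be an integer and let c, β > 0 be real numbers with ‖f‖_l ≤ c/β. Then |D(f)| ≥ (β/(2c))^{l/(l−1)}·P, where D(f) = {n ∈ ℤ/Pℤ : f(n) > 1/2}. -/
/-!
This is an `L^p` form of the Paley–Zygmund inequality. The set where `f ≤ θ` contributes at most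
`θ` times the total mass to the integral of `f`, so the remainder of the integral lives on the set
`{θ < f}`, where Hölder's inequality against the constant function `1` bounds it by the `L^p` norm
of `f` times a power of the measure of that set. For the uniform measure on `ℤ/Pℤ` and `θ = 1/2`,
the measure of the set is its density.
-/

open MeasureTheory

section PaleyZygmund

variable {Ω : Type*} [MeasurableSpace Ω] {μ : Measure Ω} [IsFiniteMeasure μ] {f : Ω → ℝ} {p θ : ℝ}

theorem setIntegral_le_Lp_mul_measureReal_rpow {q : ℝ} (hpq : p.HolderConjugate q)
    (hf : MemLp f (ENNReal.ofReal p) μ) (s : Set Ω) :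
    ∫ x in s, f x ∂μ ≤ (∫ x, |f x| ^ p ∂μ) ^ (1 / p) * μ.real s ^ (1 / q) := by
  have hint : Integrable (fun x ↦ |f x| ^ p) μ := by
    simpa [ENNReal.toReal_ofReal hpq.nonneg] using hf.integrable_norm_rpow'
  have hholder : ∫ x in s, |f x| ∂μ ≤ (∫ x in s, |f x| ^ p ∂μ) ^ (1 / p) * μ.real s ^ (1 / q) := by
    simpa using integral_mul_norm_le_Lp_mul_Lq (μ := μ.restrict s) hpq (hf.restrict s)
      (memLp_const (1 : ℝ))
  have hmono : ∫ x in s, |f x| ^ p ∂μ ≤ ∫ x, |f x| ^ p ∂μ :=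
    setIntegral_le_integral hint (.of_forall fun _ ↦ by positivity)
  calc ∫ x in s, f x ∂μ ≤ ∫ x in s, |f x| ∂μ := (le_abs_self _).trans abs_integral_le_integral_abs
    _ ≤ (∫ x in s, |f x| ^ p ∂μ) ^ (1 / p) * μ.real s ^ (1 / q) := hholder
    _ ≤ (∫ x, |f x| ^ p ∂μ) ^ (1 / p) * μ.real s ^ (1 / q) := by
      have := hpq.pos
      gcongr

theorem integral_sub_mul_le_setIntegral_lt (hθ : 0 ≤ θ) (hf : Integrable f μ) :
    ∫ x, f x ∂μ - θ * μ.real Set.univ ≤ ∫ x in {x | θ < f x}, f x ∂μ := by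
  set D := {x | θ < f x}
  have hD : NullMeasurableSet D μ := nullMeasurableSet_lt aemeasurable_const hf.aemeasurable
  have hcompl : ∫ x in Dᶜ, f x ∂μ ≤ θ * μ.real Set.univ :=
    calc ∫ x in Dᶜ, f x ∂μ ≤ ∫ _ in Dᶜ, θ ∂μ :=
          setIntegral_mono_on₀ hf.integrableOn (integrable_const θ).integrableOn hD.compl
            fun _ hx ↦ not_lt.1 hx
      _ = θ * μ.real Dᶜ := by rw [setIntegral_const, smul_eq_mul, mul_comm]
      _ ≤ θ * μ.real Set.univ := by gcongr; exacts [measure_ne_top μ _, Dᶜ.subset_univ]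
  linarith [integral_add_compl₀ hD hf]

theorem integral_sub_mul_le_Lp_mul_measureReal_lt_rpow {q : ℝ} (hpq : p.HolderConjugate q)
    (hθ : 0 ≤ θ) (hf : MemLp f (ENNReal.ofReal p) μ) :
    ∫ x, f x ∂μ - θ * μ.real Set.univ ≤
      (∫ x, |f x| ^ p ∂μ) ^ (1 / p) * μ.real {x | θ < f x} ^ (1 / q) :=
  (integral_sub_mul_le_setIntegral_lt hθ <|
    hf.integrable <| ENNReal.one_le_ofReal.2 hpq.lt.le).trans
      (setIntegral_le_Lp_mul_measureReal_rpow hpq hf _)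

theorem rpow_integral_sub_mul_div_le_measureReal_lt {K : ℝ} (hp : 1 < p) (hθ : 0 ≤ θ)
    (hf : MemLp f (ENNReal.ofReal p) μ) (hmean : θ * μ.real Set.univ ≤ ∫ x, f x ∂μ) (hK : 0 < K)
    (hnorm : (∫ x, |f x| ^ p ∂μ) ^ (1 / p) ≤ K) :
    ((∫ x, f x ∂μ - θ * μ.real Set.univ) / K) ^ (p / (p - 1)) ≤ μ.real {x | θ < f x} := by
  have hpq : p.HolderConjugate (p / (p - 1)) := .conjExponent hp
  have hbase : 0 ≤ (∫ x, f x ∂μ - θ * μ.real Set.univ) / K :=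
    div_nonneg (sub_nonneg.2 hmean) hK.le
  rw [← Real.le_rpow_inv_iff_of_pos hbase measureReal_nonneg hpq.symm.pos, ← one_div,
    div_le_iff₀' hK]
  calc ∫ x, f x ∂μ - θ * μ.real Set.univ
      ≤ (∫ x, |f x| ^ p ∂μ) ^ (1 / p) * μ.real {x | θ < f x} ^ (1 / (p / (p - 1))) :=
        integral_sub_mul_le_Lp_mul_measureReal_lt_rpow hpq hθ hf
    _ ≤ K * μ.real {x | θ < f x} ^ (1 / (p / (p - 1))) := by gcongr

end PaleyZygmund

section Uniform

variable {α : Type*} [Fintype α] [Nonempty α] [MeasurableSpace α]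

theorem integral_uniformOfFintype [MeasurableSingletonClass α] {E : Type*} [NormedAddCommGroup E]
    [NormedSpace ℝ E] [CompleteSpace E] (f : α → E) :
    ∫ a, f a ∂(PMF.uniformOfFintype α).toMeasure = (1 / (Fintype.card α : ℝ)) • ∑ a, f a := by
  simp [PMF.integral_eq_sum, Finset.smul_sum]

theorem measureReal_uniformOfFintype (p : α → Prop) [DecidablePred p]
    (hp : MeasurableSet {a | p a}) :
    (PMF.uniformOfFintype α).toMeasure.real {a | p a} =
      (Finset.univ.filter p).card / Fintype.card α := by
  simp [measureReal_def, PMF.toMeasure_uniformOfFintype_apply _ hp, Fintype.card_subtype]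

end Uniform

theorem stmt10_general {α : Type*} [Fintype α] [Nonempty α] {f : α → ℝ} {p θ K : ℝ} (hp : 1 < p)
    (hθ : 0 ≤ θ) (hmean : θ ≤ (1 / (Fintype.card α : ℝ)) * ∑ a, f a) (hK : 0 < K)
    (hnorm : ((1 / (Fintype.card α : ℝ)) * ∑ a, |f a| ^ p) ^ (1 / p) ≤ K) :
    (((1 / (Fintype.card α : ℝ)) * ∑ a, f a - θ) / K) ^ (p / (p - 1)) * Fintype.card α ≤
      (Finset.univ.filter (fun a ↦ θ < f a)).card := by
  let _ : MeasurableSpace α := ⊤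
  have hdensity := rpow_integral_sub_mul_div_le_measureReal_lt
    (μ := (PMF.uniformOfFintype α).toMeasure) (f := f) (K := K) hp hθ .of_discrete
  simp only [integral_uniformOfFintype, smul_eq_mul, probReal_univ, mul_one,
    measureReal_uniformOfFintype _ .of_discrete] at hdensity
  exact (le_div_iff₀ (mod_cast Fintype.card_pos)).1 (hdensity hmean hK hnorm)

theorem stmt10 (P : ℕ) [Fact P.Prime] (f : ZMod P → ℝ) (hf : ∀ n, 0 ≤ f n)
    (hE : (1 / (P : ℝ)) * ∑ n : ZMod P, f n = 1)
    (l : ℕ) (hl : 2 ≤ l) (c β : ℝ) (hc : 0 < c) (hβ : 0 < β)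
    (hnorm : ((1 / (P : ℝ)) * ∑ n : ZMod P, |f n| ^ l) ^ ((1 : ℝ) / l) ≤ c / β) :
    (β / (2 * c)) ^ ((l : ℝ) / ((l : ℝ) - 1)) * (P : ℝ) ≤
      ((Finset.univ.filter (fun n : ZMod P => (1 : ℝ) / 2 < f n)).card : ℝ) := by
  have hbase : β / (2 * c) = (1 - 1 / 2) / (c / β) := by field_simp; norm_num
  simpa only [ZMod.card, hE, hbase] using stmt10_general (f := f) (p := l) (θ := 1 / 2) (K := c / β)
    (mod_cast hl) (by norm_num) (by rw [ZMod.card, hE]; norm_num) (by positivity)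
    (by simpa only [ZMod.card, Real.rpow_natCast] using hnorm)
end

section
/- Assume the intersection hypothesis below holds for a prime P, sets C, S' ⊆ ℤ/Pℤ, a bound t on |S'|, constants c(j) and a real 0 < β ≤ 1, with C nonempty. Let l ≥ 2 be an integer and let B ⊆ ℤ/Pℤ with |B|·d(C) ≥ 1. Then ‖f_C * f_B‖_l ≤ c/β, where c > 0 is a constant depending only on t, l and the constants c(2), …, c(l). -/
/-- Convolution `(f*g)(n) = P⁻¹ ∑_y f(n−y) g(y)` on `ℤ/Pℤ`. -/
noncomputable def convP {P : ℕ} [Fact P.Prime] (f g : ZMod P → ℝ) : ZMod P → ℝ :=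
  fun n => (1 / (P : ℝ)) * ∑ y : ZMod P, f (n - y) * g y

/-! The `l`-th moment of `r n = #{y ∈ B | n - y ∈ C}` counts `l`-tuples of representations of `n`.
Choosing the entries of a tuple one at a time, each earlier entry rules out at most `2 * t` values,
so at least `(r n - 2 * l * t) ^ l` of these tuples have all pairwise differences outside `S`. Hence
`r n ^ l` is at most `2 ^ l` times the number of such tuples if `4 * l * t ≤ r n`, and at most
`(4 * l * t) ^ (l - 1) * r n` otherwise. Summing over `n` and exchanging the order of summation, the
intersection hypothesis bounds the contribution of the tuples, while the second terms contribute a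
multiple of `∑ n, r n = #B * #C`, which is dominated because `1 ≤ #B * d(C)`. -/

open Finset
open scoped BigOperators

section IndependentTuples

variable {α : Type*} (r : α → α → Prop) [DecidableRel r] (R : Finset α)

/-- The `k`-tuples of elements of `R` that are independent for the conflict relation `r`: no entry
is related by `r` to an entry at another position. Entries may repeat unless `r` forbids it. -/
def independentTuples (k : ℕ) : Finset (Fin k → α) :=
  {h ∈ Fintype.piFinset fun _ ↦ R | ∀ i j, i ≠ j → ¬ r (h i) (h j)}

variable {r R}

lemma mem_independentTuples {k : ℕ} {h : Fin k → α} :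
    h ∈ independentTuples r R k ↔ (∀ i, h i ∈ R) ∧ ∀ i j, i ≠ j → ¬ r (h i) (h j) := by
  simp only [independentTuples, mem_filter, Fintype.mem_piFinset]

lemma cons_mem_independentTuples {k : ℕ} {x : α} {g : Fin k → α} :
    (Fin.cons x g : Fin (k + 1) → α) ∈ independentTuples r R (k + 1) ↔
      g ∈ independentTuples r R k ∧ x ∈ R ∧ ∀ i, ¬ (r (g i) x ∨ r x (g i)) := by
  simp only [mem_independentTuples, Fin.forall_fin_succ, Fin.cons_zero, Fin.cons_succ, ne_eq,
    not_true_eq_false, Fin.succ_ne_zero, (Fin.succ_ne_zero _).symm, Fin.succ_inj]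
  grind

lemma card_independentTuples_succ (k : ℕ) :
    #(independentTuples r R (k + 1)) =
      ∑ g ∈ independentTuples r R k, #{x ∈ R | ∀ i, ¬ (r (g i) x ∨ r x (g i))} := by
  rw [← card_sigma]
  refine card_nbij' (fun h ↦ ⟨Fin.tail h, h 0⟩) (fun p ↦ Fin.cons p.2 p.1) ?_ ?_ ?_ ?_
  · intro h hh
    rw [mem_coe, ← Fin.cons_self_tail h, cons_mem_independentTuples] at hh
    simpa using hh
  · rintro ⟨g, x⟩ hp
    simpa [cons_mem_independentTuples] using hp
  · intro h _
    exact Fin.cons_self_tail h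
  · rintro ⟨g, x⟩ _
    simp

lemma card_sub_mul_le_card_filter_forall_not {t k : ℕ}
    (hr : ∀ x ∈ R, #{y ∈ R | r x y ∨ r y x} ≤ t) {g : Fin k → α} (hg : ∀ i, g i ∈ R) :
    #R - k * t ≤ #{x ∈ R | ∀ i, ¬ (r (g i) x ∨ r x (g i))} := by
  classical
  have hconflicts : #(univ.biUnion fun i ↦ {x ∈ R | r (g i) x ∨ r x (g i)}) ≤ k * t := by
    simpa using card_biUnion_le_card_mul univ _ t fun i _ ↦ hr (g i) (hg i)
  calc #R - k * t ≤ #R - #(univ.biUnion fun i ↦ {x ∈ R | r (g i) x ∨ r x (g i)}) := by gcongr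
    _ ≤ #(R \ univ.biUnion fun i ↦ {x ∈ R | r (g i) x ∨ r x (g i)}) := le_card_sdiff _ _
    _ ≤ _ := card_le_card fun x ↦ by simp +contextual

lemma prod_card_sub_mul_le_card_independentTuples {t : ℕ}
    (hr : ∀ x ∈ R, #{y ∈ R | r x y ∨ r y x} ≤ t) (k : ℕ) :
    ∏ i ∈ range k, (#R - i * t) ≤ #(independentTuples r R k) := by
  induction k with
  | zero => simp [independentTuples]
  | succ k ih =>
    rw [prod_range_succ, card_independentTuples_succ]
    calc (∏ i ∈ range k, (#R - i * t)) * (#R - k * t)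
        ≤ #(independentTuples r R k) * (#R - k * t) := by gcongr
      _ ≤ _ := card_nsmul_le_sum _ _ _ fun g hg ↦
          card_sub_mul_le_card_filter_forall_not hr (mem_independentTuples.1 hg).1

lemma pow_card_sub_mul_le_card_independentTuples {t : ℕ}
    (hr : ∀ x ∈ R, #{y ∈ R | r x y ∨ r y x} ≤ t) (k : ℕ) :
    (#R - k * t) ^ k ≤ #(independentTuples r R k) := by
  calc (#R - k * t) ^ k = ∏ _i ∈ range k, (#R - k * t) := by simp
    _ ≤ ∏ i ∈ range k, (#R - i * t) := by
        gcongr with i hi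
        exact (mem_range.1 hi).le
    _ ≤ _ := prod_card_sub_mul_le_card_independentTuples hr k

end IndependentTuples

lemma pow_le_two_pow_mul_sub_pow_add (a m : ℕ) {l : ℕ} (hl : l ≠ 0) :
    a ^ l ≤ 2 ^ l * (a - m) ^ l + (2 * m) ^ (l - 1) * a := by
  obtain hm | hm := le_total (2 * m) a
  · calc a ^ l ≤ (2 * (a - m)) ^ l := by gcongr; omega
      _ = 2 ^ l * (a - m) ^ l := mul_pow _ _ _
      _ ≤ _ := Nat.le_add_right _ _
  · calc a ^ l = a ^ (l - 1) * a := (pow_sub_one_mul hl a).symm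
      _ ≤ (2 * m) ^ (l - 1) * a := by gcongr
      _ ≤ _ := Nat.le_add_left _ _

section AddGroup

variable {G : Type*} [AddGroup G] [DecidableEq G] {S B C : Finset G}

lemma card_filter_sub_mem_or_sub_mem_le (R : Finset G) (x : G) :
    #{y ∈ R | x - y ∈ S ∨ y - x ∈ S} ≤ 2 * #S := by
  have hleft : #{y ∈ R | x - y ∈ S} ≤ #S :=
    card_le_card_of_injOn (x - ·) (fun y hy ↦ (mem_filter.1 hy).2) sub_right_injective.injOn
  have hright : #{y ∈ R | y - x ∈ S} ≤ #S :=
    card_le_card_of_injOn (· - x) (fun y hy ↦ (mem_filter.1 hy).2) sub_left_injective.injOn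
  calc #{y ∈ R | x - y ∈ S ∨ y - x ∈ S} ≤ #{y ∈ R | x - y ∈ S} + #{y ∈ R | y - x ∈ S} := by
        rw [filter_or]; exact card_union_le _ _
    _ ≤ 2 * #S := by omega

lemma pow_card_le_card_independentTuples_add (R : Finset G) {t l : ℕ} (hl : l ≠ 0)
    (hS : #S ≤ t) :
    #R ^ l ≤ 2 ^ l * #(independentTuples (fun x y ↦ x - y ∈ S) R l) +
      (4 * l * t) ^ (l - 1) * #R := by
  have htuples := pow_card_sub_mul_le_card_independentTuples (r := fun x y ↦ x - y ∈ S) (R := R)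
    (t := 2 * t) (fun x _ ↦ (card_filter_sub_mem_or_sub_mem_le R x).trans (by omega)) l
  calc #R ^ l ≤ 2 ^ l * (#R - l * (2 * t)) ^ l + (2 * (l * (2 * t))) ^ (l - 1) * #R :=
        pow_le_two_pow_mul_sub_pow_add _ _ hl
    _ = 2 ^ l * (#R - l * (2 * t)) ^ l + (4 * l * t) ^ (l - 1) * #R := by ring_nf
    _ ≤ _ := by gcongr

variable [Fintype G]

lemma sum_card_filter_sub_mem (B C : Finset G) : ∑ n, #{y ∈ B | n - y ∈ C} = #B * #C := by
  have htranslate (y : G) : #{n | n - y ∈ C} = #C :=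
    card_equiv (Equiv.subRight y) (by simp)
  calc ∑ n, #{y ∈ B | n - y ∈ C} = ∑ y ∈ B, #{n | n - y ∈ C} :=
        sum_card_bipartiteAbove_eq_sum_card_bipartiteBelow fun n y ↦ n - y ∈ C
    _ = #B * #C := by simp [htranslate]

lemma sum_card_independentTuples_filter_sub_mem (r : G → G → Prop) [DecidableRel r]
    (B C : Finset G) (k : ℕ) :
    ∑ n, #(independentTuples r {y ∈ B | n - y ∈ C} k) =
      ∑ h ∈ independentTuples r B k, #{n | ∀ i, n - h i ∈ C} := by
  have hfilter (n : G) : independentTuples r {y ∈ B | n - y ∈ C} k =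
      {h ∈ independentTuples r B k | ∀ i, n - h i ∈ C} := by
    ext h
    simp only [mem_independentTuples, mem_filter, forall_and]
    tauto
  calc ∑ n, #(independentTuples r {y ∈ B | n - y ∈ C} k)
      = ∑ n, #{h ∈ independentTuples r B k | ∀ i, n - h i ∈ C} := by simp only [hfilter]
    _ = ∑ h ∈ independentTuples r B k, #{n | ∀ i, n - h i ∈ C} :=
        sum_card_bipartiteAbove_eq_sum_card_bipartiteBelow fun n (h : Fin k → G) ↦
          ∀ i, n - h i ∈ C

lemma sum_card_independentTuples_filter_sub_mem_le {l : ℕ} {M : ℝ} (hM : 0 ≤ M)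
    (hC : ∀ h : Fin l → G, (∀ i j, i ≠ j → h i - h j ∉ S) →
      (#{n | ∀ i, n - h i ∈ C} : ℝ) ≤ M) :
    ∑ n, (#(independentTuples (fun x y ↦ x - y ∈ S) {y ∈ B | n - y ∈ C} l) : ℝ) ≤
      #B ^ l * M := by
  have hcard : #(independentTuples (fun x y ↦ x - y ∈ S) B l) ≤ #B ^ l :=
    (card_filter_le _ _).trans_eq (by simp)
  calc ∑ n, (#(independentTuples (fun x y ↦ x - y ∈ S) {y ∈ B | n - y ∈ C} l) : ℝ)
      = ∑ h ∈ independentTuples (fun x y ↦ x - y ∈ S) B l, (#{n | ∀ i, n - h i ∈ C} : ℝ) := by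
        exact_mod_cast sum_card_independentTuples_filter_sub_mem _ B C l
    _ ≤ #(independentTuples (fun x y ↦ x - y ∈ S) B l) • M :=
        sum_le_card_nsmul _ _ _ fun h hh ↦ hC h (mem_independentTuples.1 hh).2
    _ ≤ #B ^ l * M := by
        rw [nsmul_eq_mul]
        gcongr
        exact_mod_cast hcard

lemma sum_card_filter_sub_mem_pow_le {t l : ℕ} (hl : l ≠ 0) (hS : #S ≤ t) {M : ℝ} (hM : 0 ≤ M)
    (hC : ∀ h : Fin l → G, (∀ i j, i ≠ j → h i - h j ∉ S) →
      (#{n | ∀ i, n - h i ∈ C} : ℝ) ≤ M) :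
    ∑ n, (#{y ∈ B | n - y ∈ C} : ℝ) ^ l ≤
      2 ^ l * (#B ^ l * M) + (4 * l * t) ^ (l - 1) * (#B * #C) := by
  calc ∑ n, (#{y ∈ B | n - y ∈ C} : ℝ) ^ l
      ≤ ∑ n, (2 ^ l * (#(independentTuples (fun x y ↦ x - y ∈ S) {y ∈ B | n - y ∈ C} l) : ℝ) +
          (4 * l * t) ^ (l - 1) * #{y ∈ B | n - y ∈ C}) :=
        sum_le_sum fun n _ ↦ by exact_mod_cast pow_card_le_card_independentTuples_add _ hl hS
    _ = 2 ^ l * ∑ n, (#(independentTuples (fun x y ↦ x - y ∈ S) {y ∈ B | n - y ∈ C} l) : ℝ) +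
          (4 * l * t) ^ (l - 1) * (#B * #C) := by
        rw [sum_add_distrib, ← mul_sum, ← mul_sum]
        congr 2
        exact_mod_cast sum_card_filter_sub_mem B C
    _ ≤ _ := by
        gcongr
        exact sum_card_independentTuples_filter_sub_mem_le hM hC

/-- The density-normalised indicator `f_C = d(C)⁻¹ · 1_C` of a set `C` in a finite type
(identically zero if `C` is empty). -/
noncomputable def normalizedIndicator (C : Finset G) (x : G) : ℝ :=
  if x ∈ C then (C.dens : ℝ)⁻¹ else 0

/-- Convolution on a finite group with respect to the uniform probability measure. -/
noncomputable def expectConv (f g : G → ℝ) (n : G) : ℝ := 𝔼 y, f (n - y) * g y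

/-- The `L^l` norm on a finite type with respect to the uniform probability measure, for a natural
number exponent `l ≠ 0`. -/
noncomputable def expectLpNorm (l : ℕ) (f : G → ℝ) : ℝ := (𝔼 n, |f n| ^ l) ^ (1 / l : ℝ)

lemma expectConv_normalizedIndicator (B C : Finset G) (n : G) :
    expectConv (normalizedIndicator C) (normalizedIndicator B) n =
      #{y ∈ B | n - y ∈ C} / (#B * C.dens) := by
  have hterm (y : G) : normalizedIndicator C (n - y) * normalizedIndicator B y =
      if y ∈ B ∧ n - y ∈ C then (C.dens : ℝ)⁻¹ * (B.dens : ℝ)⁻¹ else 0 := by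
    unfold normalizedIndicator
    split_ifs <;> grind
  have hfilter : ({y | y ∈ B ∧ n - y ∈ C} : Finset G) = {y ∈ B | n - y ∈ C} := by ext; simp
  have hG : (Fintype.card G : ℝ) ≠ 0 := by exact_mod_cast Fintype.card_ne_zero
  simp only [expectConv, hterm, Fintype.expect_eq_sum_div_card, ← sum_filter, hfilter,
    sum_const, nsmul_eq_mul, nnratCast_dens]
  field_simp

lemma expect_card_filter_sub_mem_div_pow_le {t l : ℕ} (hl : l ≠ 0) (hS : #S ≤ t) {K β : ℝ}
    (hK : 0 ≤ K) (hβ : 0 < β) (hβ' : β ≤ 1)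
    (hC : ∀ h : Fin l → G, (∀ i j, i ≠ j → h i - h j ∉ S) →
      (dens {n | ∀ i, n - h i ∈ C} : ℝ) ≤ K * C.dens ^ l / β ^ l)
    (hB : 1 ≤ (#B : ℝ) * C.dens) :
    𝔼 n, (#{y ∈ B | n - y ∈ C} / (#B * C.dens) : ℝ) ^ l ≤
      (2 ^ l * K + (4 * l * t) ^ (l - 1)) / β ^ l := by
  set D : ℝ := #B * C.dens with hD
  have hG : (0 : ℝ) < Fintype.card G := by exact_mod_cast Fintype.card_pos
  have hmoment := sum_card_filter_sub_mem_pow_le (B := B) hl hS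
    (M := Fintype.card G * (K * C.dens ^ l / β ^ l)) (by positivity) fun h hh ↦ by
      have := hC h hh
      rwa [nnratCast_dens, div_le_iff₀' hG] at this
  have hcard : (#B * #C : ℝ) = Fintype.card G * D := by
    rw [hD, nnratCast_dens]
    field_simp
  have hD_le : D ≤ D ^ l / β ^ l :=
    (le_self_pow₀ hB hl).trans <| le_div_self (by positivity) (by positivity)
      (pow_le_one₀ hβ.le hβ')
  simp_rw [div_pow]
  rw [← expect_div, Fintype.expect_eq_sum_div_card, div_div, div_le_iff₀ (by positivity)]
  calc ∑ n, (#{y ∈ B | n - y ∈ C} : ℝ) ^ l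
      ≤ 2 ^ l * (#B ^ l * (Fintype.card G * (K * C.dens ^ l / β ^ l))) +
          (4 * l * t) ^ (l - 1) * (#B * #C) := hmoment
    _ ≤ 2 ^ l * (#B ^ l * (Fintype.card G * (K * C.dens ^ l / β ^ l))) +
          (4 * l * t) ^ (l - 1) * (Fintype.card G * (D ^ l / β ^ l)) := by
        rw [hcard]; gcongr
    _ = (2 ^ l * K + (4 * l * t) ^ (l - 1)) / β ^ l * (Fintype.card G * D ^ l) := by
        rw [hD]; ring

theorem stmt11_general {t l : ℕ} (hl : l ≠ 0) (hS : #S ≤ t) {K β : ℝ}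
    (hK : 0 ≤ K) (hβ : 0 < β) (hβ' : β ≤ 1)
    (hC : ∀ h : Fin l → G, (∀ i j, i ≠ j → h i - h j ∉ S) →
      (dens {n | ∀ i, n - h i ∈ C} : ℝ) ≤ K * C.dens ^ l / β ^ l)
    (hB : 1 ≤ (#B : ℝ) * C.dens) :
    expectLpNorm l (expectConv (normalizedIndicator C) (normalizedIndicator B)) ≤
      (2 ^ l * K + (4 * l * t) ^ (l - 1)) ^ (1 / l : ℝ) / β := by
  have hnonneg (n : G) : (0 : ℝ) ≤ #{y ∈ B | n - y ∈ C} / (#B * C.dens) := by positivity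
  calc expectLpNorm l (expectConv (normalizedIndicator C) (normalizedIndicator B))
      = (𝔼 n, (#{y ∈ B | n - y ∈ C} / (#B * C.dens) : ℝ) ^ l) ^ (1 / l : ℝ) := by
        simp only [expectLpNorm, expectConv_normalizedIndicator, abs_of_nonneg (hnonneg _)]
    _ ≤ ((2 ^ l * K + (4 * l * t) ^ (l - 1)) / β ^ l) ^ (1 / l : ℝ) := by
        gcongr
        exact expect_card_filter_sub_mem_div_pow_le hl hS hK hβ hβ' hC hB
    _ = _ := by
        rw [Real.div_rpow (by positivity) (by positivity), one_div,
          Real.pow_rpow_inv_natCast hβ.le hl]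

end AddGroup

section ZMod

variable {P : ℕ}

lemma dens_zmod [NeZero P] (C : Finset (ZMod P)) : (C.dens : ℝ) = #C / P := by
  rw [nnratCast_dens, ZMod.card]

lemma fCfun_eq_normalizedIndicator [NeZero P] (C : Finset (ZMod P)) :
    fCfun C = normalizedIndicator C := by
  ext n
  simp [fCfun, normalizedIndicator, dens_zmod]

lemma convP_eq_expectConv [Fact P.Prime] (f g : ZMod P → ℝ) : convP f g = expectConv f g := by
  ext n
  rw [convP, expectConv, Fintype.expect_eq_sum_div_card, ZMod.card, one_div_mul_eq_div]

lemma expectLpNorm_zmod [NeZero P] (l : ℕ) (f : ZMod P → ℝ) :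
    expectLpNorm l f = ((1 / (P : ℝ)) * ∑ n, |f n| ^ l) ^ ((1 : ℝ) / l) := by
  rw [expectLpNorm, Fintype.expect_eq_sum_div_card, ZMod.card, one_div_mul_eq_div]

end ZMod

theorem stmt11
    (t : ℕ) (l : ℕ) (hl : 2 ≤ l)
    (cj : ℕ → ℝ) (hcj : ∀ j, 2 ≤ j → 0 < cj j) :
    ∃ c : ℝ, 0 < c ∧
      ∀ (P : ℕ) [Fact P.Prime],
      ∀ (C S' : Finset (ZMod P)),
        (0 : ZMod P) ∈ S' → (∀ x ∈ S', -x ∈ S') → S'.card ≤ t →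
        C.Nonempty →
        ∀ β : ℝ, 0 < β → β ≤ 1 →
        (∀ j : ℕ, 2 ≤ j → ∀ h : Fin j → ZMod P,
          (∀ i u, i ≠ u → h i - h u ∉ S') →
          ((Finset.univ.filter (fun n : ZMod P => ∀ i, n - h i ∈ C)).card : ℝ) / (P : ℝ)
            ≤ cj j * ((C.card : ℝ) / (P : ℝ)) ^ j / β ^ j) →
        ∀ B : Finset (ZMod P),
          1 ≤ (B.card : ℝ) * ((C.card : ℝ) / (P : ℝ)) →
          ((1 / (P : ℝ)) * ∑ n : ZMod P, |convP (fCfun C) (fCfun B) n| ^ l) ^ ((1 : ℝ) / l)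
            ≤ c / β := by
  have hc := hcj l hl
  refine ⟨(2 ^ l * cj l + (4 * l * t) ^ (l - 1)) ^ ((1 : ℝ) / l), by positivity, ?_⟩
  intro P _ C S' _ _ hS _ β hβ hβ' hC B hB
  simp only [← dens_zmod] at hC hB
  simpa only [fCfun_eq_normalizedIndicator, convP_eq_expectConv, expectLpNorm_zmod] using
    stmt11_general (by omega) hS hc.le hβ hβ' (hC l hl) hB
end

section
/- Assume the intersection hypothesis below holds for a prime P, sets C, S' ⊆ ℤ/Pℤ, constants c(j) and a real 0 < β ≤ 1, and set c(1) = 1. Let l ≥ 2 be an integer and let y_1, …, y_l ∈ ℤ/Pℤ; form the graph on the index set {1,…,l} in which i and j are joined by an edge if and only if y_i − y_j ∈ S', and suppose this graph has exactly r connected components. Then |(C − y_1) ∩ ⋯ ∩ (C − y_l)| ≤ c(r)·P·d(C)^r/β^r. -/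
/-! Of each connected component keep one index. Indices in different components are not joined, so
the differences of their shifts avoid `S`, and the intersection hypothesis applies to these `r`
translates; discarding the remaining translates only enlarges the intersection. The hypothesis
starts at two translates, but for a single one the bound is just translation invariance of the
density. -/

section

open Finset

variable {A ι κ : Type*} [AddGroup A] {S : Set A}

/-- The graph on the index set of a family `h` in which distinct indices are joined when one of the
two differences of their values lies in `S`. -/
def differenceGraph (S : Set A) (h : ι → A) : SimpleGraph ι :=
  .fromRel fun i j ↦ h i - h j ∈ S

lemma differenceGraph_neg {B : Type*} [AddCommGroup B] (S : Set B) (h : ι → B) :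
    differenceGraph S (-h) = differenceGraph S h := by
  ext i j
  simp only [differenceGraph, SimpleGraph.fromRel_adj, Pi.neg_apply, neg_sub_neg, or_comm]

lemma differenceGraph_reachable_of_sub_mem {h : ι → A} {i j : ι} (hij : h i - h j ∈ S) :
    (differenceGraph S h).Reachable i j := by
  obtain rfl | hne := eq_or_ne i j
  · exact .rfl
  · exact SimpleGraph.Adj.reachable ⟨hne, .inl hij⟩

lemma pairwise_sub_out_notMem (S : Set A) (h : ι → A) :
    Pairwise fun a b : (differenceGraph S h).ConnectedComponent ↦
      h a.out - h b.out ∉ S := by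
  intro a b hab hmem
  have hmk := SimpleGraph.ConnectedComponent.sound (differenceGraph_reachable_of_sub_mem hmem)
  exact hab ((Quot.out_eq a).symm.trans (hmk.trans (Quot.out_eq b)))

variable [Fintype A] {C : Finset A}

open Classical in
/-- The intersection `⋂ i, (C + h i)` of the translates of `C` by a family `h`, as a finite set; it
is everything when the family is empty. -/
noncomputable def translateInter (C : Finset A) (h : ι → A) : Finset A :=
  {n | ∀ i, n - h i ∈ C}

lemma mem_translateInter {h : ι → A} {n : A} : n ∈ translateInter C h ↔ ∀ i, n - h i ∈ C := by
  simp only [translateInter, mem_filter_univ]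

lemma translateInter_eq_filter (C : Finset A) (h : ι → A)
    [DecidablePred fun n ↦ ∀ i, n - h i ∈ C] :
    translateInter C h = univ.filter fun n ↦ ∀ i, n - h i ∈ C := by
  ext n
  rw [mem_translateInter, mem_filter_univ]

lemma translateInter_subset_comp (C : Finset A) (h : ι → A) (f : κ → ι) :
    translateInter C h ⊆ translateInter C (h ∘ f) := fun _ hn ↦
  mem_translateInter.2 fun k ↦ mem_translateInter.1 hn (f k)

lemma dens_translateInter_le (C : Finset A) (h : ι → A) (i : ι) :
    (translateInter C h).dens ≤ C.dens := by
  have hsub : translateInter C h ⊆ C.map (Equiv.addRight (h i)).toEmbedding := fun n hn ↦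
    mem_map_equiv.2 (by simpa [sub_eq_add_neg] using mem_translateInter.1 hn i)
  exact (dens_le_dens hsub).trans_eq (dens_map_equiv _)

/-- The instance of the intersection hypothesis for `j` translates: any `j` translates of `C` whose
shifts have no pairwise difference in `S` meet in a set of density at most `b`. -/
def IntersectionBound (C : Finset A) (S : Set A) (j : ℕ) (b : ℝ) : Prop :=
  ∀ h : Fin j → A, (Pairwise fun i u ↦ h i - h u ∉ S) → ((translateInter C h).dens : ℝ) ≤ b

namespace IntersectionBound

variable {b : ℝ}

lemma one (S : Set A) (hb : C.dens ≤ b) : IntersectionBound C S 1 b := fun h _ ↦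
  (NNRat.cast_le.2 (dens_translateInter_le C h 0)).trans hb

lemma dens_le_of_pairwise [Finite κ] (hC : IntersectionBound C S (Nat.card κ) b) (h : κ → A)
    (hS : Pairwise fun i u ↦ h i - h u ∉ S) : ((translateInter C h).dens : ℝ) ≤ b := by
  let e := (Finite.equivFin κ).symm
  calc ((translateInter C h).dens : ℝ)
      ≤ (translateInter C (h ∘ e)).dens :=
        NNRat.cast_le.2 (dens_le_dens (translateInter_subset_comp C h e))
    _ ≤ b := hC (h ∘ e) (hS.comp_of_injective e.injective)

theorem dens_le_of_card_connectedComponent [Finite ι] (h : ι → A)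
    (hC : IntersectionBound C S (Nat.card (differenceGraph S h).ConnectedComponent) b) :
    ((translateInter C h).dens : ℝ) ≤ b :=
  calc ((translateInter C h).dens : ℝ)
      ≤ (translateInter C fun a : (differenceGraph S h).ConnectedComponent ↦ h a.out).dens :=
        NNRat.cast_le.2 (dens_le_dens (translateInter_subset_comp C h Quot.out))
    _ ≤ b := hC.dens_le_of_pairwise _ (pairwise_sub_out_notMem S h)

end IntersectionBound

theorem stmt12_general [Finite ι] [Nonempty ι] (C : Finset A) (S : Set A) {c : ℕ → ℝ} {β : ℝ}
    (hβ : 0 < β) (hc : β ≤ c 1)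
    (hC : ∀ j, 2 ≤ j → IntersectionBound C S j (c j * (C.dens : ℝ) ^ j / β ^ j))
    (h : ι → A) {r : ℕ} (hr : Nat.card (differenceGraph S h).ConnectedComponent = r) :
    (#(translateInter C h) : ℝ) ≤ c r * Fintype.card A * (C.dens : ℝ) ^ r / β ^ r := by
  have hbound : IntersectionBound C S r (c r * (C.dens : ℝ) ^ r / β ^ r) := by
    have hpos : 0 < r := hr ▸ Nat.card_pos
    obtain rfl | hr2 : r = 1 ∨ 2 ≤ r := by lia
    · refine .one S ?_
      rw [pow_one, pow_one, le_div_iff₀ hβ, mul_comm]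
      gcongr
    · exact hC r hr2
  calc (#(translateInter C h) : ℝ)
      = Fintype.card A * ((translateInter C h).dens : ℝ) :=
        (natCast_card_mul_nnratCast_dens _).symm
    _ ≤ Fintype.card A * (c r * (C.dens : ℝ) ^ r / β ^ r) := by
        gcongr
        exact IntersectionBound.dens_le_of_card_connectedComponent h (by rwa [hr])
    _ = c r * Fintype.card A * (C.dens : ℝ) ^ r / β ^ r := by ring

end

theorem stmt12
    (P : ℕ) [Fact P.Prime] (C S' : Finset (ZMod P))
    (h0 : (0 : ZMod P) ∈ S') (hneg : ∀ x ∈ S', -x ∈ S')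
    (cj : ℕ → ℝ) (hcj : ∀ j, 2 ≤ j → 0 < cj j) (hcj1 : cj 1 = 1)
    (β : ℝ) (hβ : 0 < β) (hβ1 : β ≤ 1)
    (hyp : ∀ j : ℕ, 2 ≤ j → ∀ h : Fin j → ZMod P,
      (∀ i u, i ≠ u → h i - h u ∉ S') →
      ((Finset.univ.filter (fun n : ZMod P => ∀ i, n - h i ∈ C)).card : ℝ) / (P : ℝ)
        ≤ cj j * ((C.card : ℝ) / (P : ℝ)) ^ j / β ^ j)
    (l : ℕ) (hl : 2 ≤ l) (y : Fin l → ZMod P) (r : ℕ)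
    (hr : Nat.card
      (SimpleGraph.fromRel (fun i j : Fin l => y i - y j ∈ S')).ConnectedComponent = r) :
    ((Finset.univ.filter (fun n : ZMod P => ∀ i, n + y i ∈ C)).card : ℝ)
      ≤ cj r * (P : ℝ) * ((C.card : ℝ) / (P : ℝ)) ^ r / β ^ r := by
  have : NeZero l := ⟨by lia⟩
  simpa [translateInter_eq_filter, Finset.nnratCast_dens, ZMod.card] using
    stmt12_general C S' hβ (hβ1.trans_eq hcj1.symm)
      (fun j hj h hS ↦ by
        simpa [translateInter_eq_filter, Finset.nnratCast_dens, ZMod.card] using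
          hyp j hj h fun _ _ hne ↦ hS hne)
      (-y) (by rwa [differenceGraph_neg])
end

section
/- (Varnavides-type theorem.) Let L be a translation invariant linear equation in s variables and let g_L be a function as described. Let η ∈ (0,1], let P be a prime, and let D ⊆ ℤ/Pℤ with |D| ≥ ηP. Then the number of tuples (x_1, …, x_s) ∈ D^s with c_1x_1 + ⋯ + c_sx_s = 0 in ℤ/Pℤ is at least (η/2)·P(P−1)/(g_L^{*−1}(η/2))². -/
/-!
If `d ≠ 0` and the progression `a + d, …, a + N d` meets `D` in at least `(η / 2) N` terms, then the
indices of these terms contain a non-trivial solution of the equation, and translation invariance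
carries it to a solution in `D` consisting of terms of the progression. For fixed `d`, the average
of the number of terms in `D` over all `a` is `N |D| / |G| ≥ η N`, so at least `(η / 2) |G|` of the
`a` have this property. Conversely, a non-constant tuple arises from at most `N ^ 2` progressions,
since two distinct points together with their indices determine the progression.
In `ZMod P` the indices `1, …, N` are only distinct modulo `P` when `N ≤ P`; when `P ≤ N` the
constant solutions already suffice.
-/

section Averaging

open Finset

variable {α R : Type*} [Semiring R] [LinearOrder R] [IsOrderedRing R]

theorem sum_le_card_mul_add_card_filter_mul (s : Finset α) {f : α → R} {t b : R}
    (ht : 0 ≤ t) (hf : ∀ a ∈ s, f a ≤ b) :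
    ∑ a ∈ s, f a ≤ #s * t + #{a ∈ s | t ≤ f a} * b := by
  rw [← sum_filter_add_sum_filter_not s (t ≤ f ·), add_comm]
  gcongr
  · calc ∑ a ∈ s with ¬ t ≤ f a, f a ≤ #{a ∈ s | ¬ t ≤ f a} • t :=
          sum_le_card_nsmul _ _ _ fun a ha ↦ (not_le.1 (mem_filter.1 ha).2).le
      _ ≤ #s * t := by
          rw [nsmul_eq_mul]
          gcongr
          exact filter_subset _ _
  · rw [← nsmul_eq_mul]
    exact sum_le_card_nsmul _ _ _ fun a ha ↦ hf a (mem_filter.1 ha).1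

end Averaging

section Equation

open Finset

variable {ι G : Type*} [Fintype ι] {c : ι → ℤ}

/-- The density threshold `δ` is large enough for the equation `∑ i, c i * x i = 0` on `{1, …, N}`:
every subset of density at least `δ` contains a solution that is non-trivial, i.e. not constant.
The function `g_L` of the paper satisfies `ForcesNontrivialSolution c N (g_L N)` for `N ≥ 1`. -/
def ForcesNontrivialSolution (c : ι → ℤ) (N : ℕ) (δ : ℝ) : Prop :=
  ∀ A : Finset ℕ, A ⊆ Icc 1 N → δ * N ≤ #A →
    ∃ x : ι → ℕ, (∀ i, x i ∈ A) ∧ ∑ i, c i * (x i : ℤ) = 0 ∧ ∃ i j, x i ≠ x j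

namespace ForcesNontrivialSolution

variable {N : ℕ} {δ δ' : ℝ}

theorem mono (h : ForcesNontrivialSolution c N δ) (hδ : δ ≤ δ') :
    ForcesNontrivialSolution c N δ' :=
  fun A hA hcard ↦ h A hA (le_trans (by gcongr) hcard)

theorem density_mul_pos (h : ForcesNontrivialSolution c N δ) : 0 < δ * N := by
  by_contra! hle
  obtain ⟨x, hx, -, i, -⟩ := h ∅ (empty_subset _) (by simpa using hle)
  exact notMem_empty _ (hx i)

theorem exists_ne (h : ForcesNontrivialSolution c N δ) (hδ : δ ≤ 1) :
    ∃ x : ι → ℕ, (∀ i, x i ∈ Icc 1 N) ∧ ∃ i j, x i ≠ x j := by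
  obtain ⟨x, hx, -, hne⟩ := h (Icc 1 N) Subset.rfl
    (by simpa using mul_le_of_le_one_left N.cast_nonneg hδ)
  exact ⟨x, hx, hne⟩

theorem nonempty (h : ForcesNontrivialSolution c N δ) (hδ : δ ≤ 1) : Nonempty ι :=
  let ⟨_, _, i, _⟩ := h.exists_ne hδ
  ⟨i⟩

theorem one_lt (h : ForcesNontrivialSolution c N δ) (hδ : δ ≤ 1) : 1 < N := by
  obtain ⟨x, hx, i, j, hij⟩ := h.exists_ne hδ
  have hi := mem_Icc.1 (hx i)
  have hj := mem_Icc.1 (hx j)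
  omega

end ForcesNontrivialSolution

theorem forcesNontrivialSolution_sInf {g : ℕ → ℝ} (hanti : Antitone g)
    (hlim : Filter.Tendsto g Filter.atTop (nhds 0))
    (hg : ∀ N, 1 ≤ N → ForcesNontrivialSolution c N (g N)) {δ : ℝ} (hδ : 0 < δ) (hδ1 : δ ≤ 1) :
    ForcesNontrivialSolution c (sInf {m | g m ≤ δ}) δ := by
  have hmem : g (sInf {m | g m ≤ δ}) ≤ δ := Nat.sInf_mem (hlim.eventually_le_const hδ).exists
  have hpos : 1 ≤ sInf {m | g m ≤ δ} := by
    by_contra! hlt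
    have h1 : g 1 ≤ 1 := (hanti (by omega)).trans (hmem.trans hδ1)
    exact lt_irrefl 1 ((hg 1 le_rfl).one_lt h1)
  exact (hg _ hpos).mono hmem

variable [AddCommGroup G]

theorem sum_zsmul_add_nsmul_eq_zero (hc : ∑ i, c i = 0) {x : ι → ℕ}
    (hx : ∑ i, c i * (x i : ℤ) = 0) (a d : G) : ∑ i, c i • (a + x i • d) = 0 := by
  simp_rw [smul_add, ← natCast_zsmul d, smul_smul, sum_add_distrib, ← sum_smul, hc, hx, zero_smul,
    add_zero]

variable [Fintype G] [DecidableEq ι] [DecidableEq G]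

/-- The tuples in `D` that solve the equation `∑ i, c i • x i = 0`, constant ones included. -/
def equationSolutions (c : ι → ℤ) (D : Finset G) : Finset (ι → G) :=
  {x | (∀ i, x i ∈ D) ∧ ∑ i, c i • x i = 0}

theorem mem_equationSolutions {D : Finset G} {x : ι → G} :
    x ∈ equationSolutions c D ↔ (∀ i, x i ∈ D) ∧ ∑ i, c i • x i = 0 := by
  simp only [equationSolutions, mem_filter_univ]

theorem card_le_card_equationSolutions [Nonempty ι] (hc : ∑ i, c i = 0) (D : Finset G) :
    #D ≤ #(equationSolutions c D) :=
  card_le_card_of_injOn (Function.const ι)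
    (fun a ha ↦ mem_equationSolutions.2
      ⟨fun _ ↦ ha, by simp only [Function.const_apply, ← sum_smul, hc, zero_smul]⟩)
    (Function.const_injective.injOn)

end Equation

section Progressions

open Finset

theorem eq_of_nsmul_eq_nsmul_of_le_minOrder {G : Type*} [AddGroup G] {N m n : ℕ} {d : G}
    (hN : N ≤ AddMonoid.minOrder G) (hm : m ∈ Icc 1 N) (hn : n ∈ Icc 1 N) (hd : d ≠ 0)
    (h : m • d = n • d) : m = n := by
  rw [nsmul_eq_nsmul_iff_modEq] at h
  by_cases hfin : IsOfFinAddOrder d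
  · have hord : N ≤ addOrderOf d :=
      Nat.cast_le.1 (hN.trans (AddMonoid.minOrder_le_addOrderOf hd hfin))
    rw [mem_Icc] at hm hn
    exact h.eq_of_abs_lt (by rw [abs_lt]; omega)
  · rwa [addOrderOf_eq_zero hfin, Nat.modEq_zero_iff] at h

variable {G : Type*} [AddCommGroup G] {N : ℕ}

theorem progression_eq_of_two_terms_eq (hN : N ≤ AddMonoid.minOrder G) {m n : ℕ}
    (hm : m ∈ Icc 1 N) (hn : n ∈ Icc 1 N) (hmn : m ≠ n) {p q : G × G}
    (hpqm : p.1 + m • p.2 = q.1 + m • q.2) (hpqn : p.1 + n • p.2 = q.1 + n • q.2) : p = q := by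
  have hsmul {k : ℕ} (hk : p.1 + k • p.2 = q.1 + k • q.2) : k • (p.2 - q.2) = q.1 - p.1 := by
    rw [smul_sub, sub_eq_sub_iff_add_eq_add, add_comm, hk]
  have hdiff : p.2 = q.2 := by
    by_contra hne
    exact hmn (eq_of_nsmul_eq_nsmul_of_le_minOrder hN hm hn (sub_ne_zero.2 hne)
      ((hsmul hpqm).trans (hsmul hpqn).symm))
  exact Prod.ext (by simpa only [hdiff, add_left_inj] using hpqm) hdiff

variable [DecidableEq G]

/-- The terms `a + d, …, a + N d` of the arithmetic progression encoded by the pair `p = (a, d)`. -/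
def progression (N : ℕ) (p : G × G) : Finset G :=
  (Icc 1 N).image fun m ↦ p.1 + m • p.2

/-- The indices of those terms of the progression `progression N p` that lie in `D`. -/
def progressionIndices (D : Finset G) (N : ℕ) (p : G × G) : Finset ℕ :=
  {m ∈ Icc 1 N | p.1 + m • p.2 ∈ D}

theorem card_progressionIndices_le (D : Finset G) (N : ℕ) (p : G × G) :
    #(progressionIndices D N p) ≤ N :=
  (card_filter_le _ _).trans_eq (by simp)

variable [Fintype G]

theorem card_filter_progression_le_sq (hN : N ≤ AddMonoid.minOrder G) {u v : G} (huv : u ≠ v) :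
    #{p : G × G | u ∈ progression N p ∧ v ∈ progression N p} ≤ N ^ 2 := by
  calc _ ≤ #(Icc 1 N ×ˢ Icc 1 N) := by
        refine card_le_card_of_forall_subsingleton
          (fun p k ↦ p.1 + k.1 • p.2 = u ∧ p.1 + k.2 • p.2 = v) ?_ ?_
        · intro p hp
          obtain ⟨hu, hv⟩ := (mem_filter_univ _).1 hp
          obtain ⟨m, hm, hmu⟩ := mem_image.1 hu
          obtain ⟨n, hn, hnv⟩ := mem_image.1 hv
          exact ⟨(m, n), mem_product.2 ⟨hm, hn⟩, hmu, hnv⟩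
        · rintro ⟨m, n⟩ hmn p ⟨-, hpu, hpv⟩ q ⟨-, hqu, hqv⟩
          obtain ⟨hm, hn⟩ := mem_product.1 hmn
          have hne : m ≠ n := by
            rintro rfl
            exact huv (hpu.symm.trans hpv)
          exact progression_eq_of_two_terms_eq hN hm hn hne
            (hpu.trans hqu.symm) (hpv.trans hqv.symm)
    _ = N ^ 2 := by rw [card_product, Nat.card_Icc, Nat.add_sub_cancel, sq]

theorem sum_card_progressionIndices (D : Finset G) (N : ℕ) (d : G) :
    ∑ a, #(progressionIndices D N (a, d)) = N * #D := by
  have htranslate (m : ℕ) : #{a | a + m • d ∈ D} = #D :=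
    card_equiv (Equiv.addRight (m • d)) (by simp)
  calc ∑ a, #(progressionIndices D N (a, d)) = ∑ m ∈ Icc 1 N, #{a | a + m • d ∈ D} :=
        sum_card_bipartiteAbove_eq_sum_card_bipartiteBelow fun a m ↦ a + m • d ∈ D
    _ = N * #D := by
        simp only [htranslate, sum_const, Nat.card_Icc, Nat.add_sub_cancel, smul_eq_mul]

/-- The progressions of length `N` with nonzero difference, encoded as pairs `(a, d)`, of whose
terms a proportion at least `δ` lies in `D`; terms are counted with their index. -/
noncomputable def richProgressions (D : Finset G) (N : ℕ) (δ : ℝ) : Finset (G × G) :=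
  {p ∈ univ ×ˢ univ.erase 0 | δ * N ≤ #(progressionIndices D N p)}

theorem mul_le_card_richProgressions {D : Finset G} {η : ℝ} (hη : 0 < η / 2 * N)
    (hD : η * Fintype.card G ≤ #D) :
    η / 2 * (Fintype.card G * (Fintype.card G - 1)) ≤ #(richProgressions D N (η / 2)) := by
  have hN : (0 : ℝ) < N := N.cast_nonneg.lt_of_ne' (right_ne_zero_of_mul hη.ne')
  have hq : (1 : ℝ) ≤ Fintype.card G := mod_cast Fintype.card_pos
  have hcard : (#(univ.erase (0 : G)) : ℝ) = Fintype.card G - 1 := by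
    rw [cast_card_erase_of_mem (mem_univ _), card_univ]
  have hsum : ∑ p ∈ univ ×ˢ univ.erase (0 : G), (#(progressionIndices D N p) : ℝ)
      = (Fintype.card G - 1) * (N * #D) := by
    simp_rw [← Nat.cast_sum, sum_product_right, sum_card_progressionIndices, sum_const,
      smul_eq_mul, Nat.cast_mul, hcard]
  have havg : (Fintype.card G - 1) * (N * #D) ≤
      Fintype.card G * (Fintype.card G - 1) * (η / 2 * N)
        + #(richProgressions D N (η / 2)) * (N : ℝ) := by
    have h := sum_le_card_mul_add_card_filter_mul (univ ×ˢ univ.erase (0 : G)) hη.le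
      fun p _ ↦ Nat.cast_le.2 (card_progressionIndices_le D N p)
    rwa [hsum, card_product, Nat.cast_mul, hcard, card_univ] at h
  have hdense : (Fintype.card G - 1) * (N * (η * Fintype.card G)) ≤
      (Fintype.card G - 1) * (N * (#D : ℝ)) := by
    gcongr
  refine le_of_mul_le_mul_right ?_ hN
  linarith

end Progressions

section Varnavides

open Finset

variable {ι G : Type*} [Fintype ι] [DecidableEq ι] [AddCommGroup G] [Fintype G] [DecidableEq G]
  {c : ι → ℤ} {N : ℕ} {D : Finset G}

theorem exists_equationSolution_of_mem_richProgressions {δ : ℝ} (hc : ∑ i, c i = 0)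
    (hforce : ForcesNontrivialSolution c N δ) (hN : N ≤ AddMonoid.minOrder G) {p : G × G}
    (hp : p ∈ richProgressions D N δ) :
    ∃ y ∈ equationSolutions c D, (∀ i, y i ∈ progression N p) ∧ ∃ i j, y i ≠ y j := by
  obtain ⟨hp, hrich⟩ := mem_filter.1 hp
  have hd : p.2 ≠ 0 := ne_of_mem_erase (mem_product.1 hp).2
  obtain ⟨x, hx, hsol, i, j, hij⟩ := hforce _ (filter_subset _ _) hrich
  have hxN (k : ι) : x k ∈ Icc 1 N := (mem_filter.1 (hx k)).1
  refine ⟨fun k ↦ p.1 + x k • p.2, mem_equationSolutions.2 ⟨fun k ↦ (mem_filter.1 (hx k)).2,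
    sum_zsmul_add_nsmul_eq_zero hc hsol _ _⟩, fun k ↦ mem_image_of_mem _ (hxN k), i, j, ?_⟩
  exact fun heq ↦ hij
    (eq_of_nsmul_eq_nsmul_of_le_minOrder hN (hxN i) (hxN j) hd (add_left_cancel heq))

theorem card_richProgressions_le {δ : ℝ} (hc : ∑ i, c i = 0)
    (hforce : ForcesNontrivialSolution c N δ) (hN : N ≤ AddMonoid.minOrder G) :
    #(richProgressions D N δ) ≤ #(equationSolutions c D) * N ^ 2 := by
  rw [← mul_one #(richProgressions D N δ)]
  refine card_mul_le_card_mul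
    (fun p y ↦ (∀ i, y i ∈ progression N p) ∧ ∃ i j, y i ≠ y j) ?_ ?_
  · intro p hp
    obtain ⟨y, hy, hpy⟩ := exists_equationSolution_of_mem_richProgressions hc hforce hN hp
    exact card_pos.2 ⟨y, mem_filter.2 ⟨hy, hpy⟩⟩
  · intro y _
    by_cases hy : ∃ i j, y i ≠ y j
    · obtain ⟨i, j, hij⟩ := hy
      refine (card_le_card fun p hp ↦ ?_).trans (card_filter_progression_le_sq hN hij)
      have hpy := (mem_filter.1 hp).2.1
      exact (mem_filter_univ _).2 ⟨hpy i, hpy j⟩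
    · simp [bipartiteBelow, hy]

theorem mul_le_card_equationSolutions_mul_sq_of_le_minOrder {η : ℝ} (hc : ∑ i, c i = 0)
    (hforce : ForcesNontrivialSolution c N (η / 2)) (hN : N ≤ AddMonoid.minOrder G)
    (hD : η * Fintype.card G ≤ #D) :
    η / 2 * (Fintype.card G * (Fintype.card G - 1)) ≤ #(equationSolutions c D) * (N : ℝ) ^ 2 :=
  (mul_le_card_richProgressions hforce.density_mul_pos hD).trans
    (mod_cast card_richProgressions_le hc hforce hN)

theorem mul_le_card_equationSolutions_mul_sq_of_card_le {η : ℝ} (hc : ∑ i, c i = 0)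
    (hforce : ForcesNontrivialSolution c N (η / 2)) (hN : Fintype.card G ≤ N)
    (hD : η * Fintype.card G ≤ #D) :
    η / 2 * (Fintype.card G * (Fintype.card G - 1)) ≤ #(equationSolutions c D) * (N : ℝ) ^ 2 := by
  have hq : (1 : ℝ) ≤ Fintype.card G := mod_cast Fintype.card_pos
  have hqN : (Fintype.card G : ℝ) ≤ N := mod_cast hN
  have hη : η ≤ 1 := by
    have hDG : (#D : ℝ) ≤ Fintype.card G := mod_cast card_le_univ D
    exact (mul_le_iff_le_one_left (by linarith)).1 (hD.trans hDG)
  have : Nonempty ι := hforce.nonempty (by linarith)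
  have hconst : (#D : ℝ) ≤ #(equationSolutions c D) :=
    mod_cast card_le_card_equationSolutions hc D
  calc η / 2 * (Fintype.card G * (Fintype.card G - 1))
      = η * Fintype.card G * ((Fintype.card G - 1) / 2) := by ring
    _ ≤ #(equationSolutions c D) * ((Fintype.card G - 1) / 2) := by
        gcongr
        exact hD.trans hconst
    _ ≤ #(equationSolutions c D) * (N : ℝ) ^ 2 := by
        gcongr
        nlinarith

theorem stmt15_general {η : ℝ} (hc : ∑ i, c i = 0)
    (hforce : ForcesNontrivialSolution c N (η / 2))
    (hN : Fintype.card G ≤ N ∨ N ≤ AddMonoid.minOrder G) (hD : η * Fintype.card G ≤ #D) :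
    η / 2 * (Fintype.card G * (Fintype.card G - 1)) / (N : ℝ) ^ 2
      ≤ #(equationSolutions c D) :=
  div_le_of_le_mul₀ (sq_nonneg _) (Nat.cast_nonneg _) <|
    hN.elim (mul_le_card_equationSolutions_mul_sq_of_card_le hc hforce · hD)
      (mul_le_card_equationSolutions_mul_sq_of_le_minOrder hc hforce · hD)

end Varnavides

theorem stmt15
    (s : ℕ) (cc : Fin s → ℤ) (hcc : ∀ i, cc i ≠ 0) (hti : ∑ i, cc i = 0)
    (gL : ℕ → ℝ) (hg0 : ∀ N, 0 ≤ gL N) (hganti : Antitone gL)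
    (hglim : Filter.Tendsto gL Filter.atTop (nhds 0))
    (hgprop : ∀ N : ℕ, 1 ≤ N → ∀ A : Finset ℕ, A ⊆ Finset.Icc 1 N →
      gL N * (N : ℝ) ≤ (A.card : ℝ) →
      ∃ x : Fin s → ℕ, (∀ i, x i ∈ A) ∧
        (∑ i, cc i * (x i : ℤ)) = 0 ∧ ∃ i j, x i ≠ x j)
    (η : ℝ) (hη : 0 < η) (hη1 : η ≤ 1)
    (P : ℕ) [Fact P.Prime] (D : Finset (ZMod P)) (hD : η * (P : ℝ) ≤ (D.card : ℝ)) :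
    (η / 2) * ((P : ℝ) * ((P : ℝ) - 1)) /
        ((sInf {m : ℕ | gL m ≤ η / 2} : ℕ) : ℝ) ^ 2
      ≤ ((Finset.univ.filter (fun x : Fin s → ZMod P =>
          (∀ i, x i ∈ D) ∧ ∑ i, (cc i : ZMod P) * x i = 0)).card : ℝ) := by
  have hforce := forcesNontrivialSolution_sInf hganti hglim hgprop (half_pos hη) (by linarith)
  have hN := (le_total P (sInf {m | gL m ≤ η / 2})).imp_right
    fun h ↦ (Nat.cast_le.2 h).trans_eq (ZMod.minOrder_of_prime Fact.out).symm
  simpa only [equationSolutions, zsmul_eq_mul, ZMod.card] using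
    stmt15_general hti hforce (G := ZMod P) (by rwa [ZMod.card]) (by rwa [ZMod.card])
end
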